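/- arXiv:2107.14022 — 4 statements merged into one kernel-verified Lean document; each statement's English description precedes it below -/
import Mathlib

section
/- There exist nonnegative real coefficients (C_w)_{w∈Λ} such that: C_{0} > 0 (where 0 denotes the one-letter word 0); for every v ∈ Λ, C_v ≤ 11699 and either C_v = 0 or C_v ≥ 6806; and for every v ∈ Λ, (27195/9091)·C_v ≤ min_{a ∈ (A∪{ε})\{l(v)}} Σ_{b∈A, vab ∈ S^{≤p}_free} C_{Λ(vab)}, where the minimum is over all a that are either the empty word ε or a letter of A different from the last letter l(v) of v (over all of A ∪ {ε} when v = ε), and the sum is over all letters b ∈ A such that vab contains no square of period at most p as a factor. -/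
open scoped Classical

/-- `w` contains a factor that is a square of period between `lo` and `hi`. -/
def HasSq {A : Type*} (lo hi : ℕ) (w : List A) : Prop :=
  ∃ u : List A, lo ≤ u.length ∧ u.length ≤ hi ∧ (u ++ u) <:+: w

/-- `w` is a square of period between `lo` and `hi`. -/
def IsSq {A : Type*} (lo hi : ℕ) (w : List A) : Prop :=
  ∃ u : List A, lo ≤ u.length ∧ u.length ≤ hi ∧ w = u ++ u

/-- `w` is a minimal square of period between `lo` and `hi`: it is such a square and no
proper factor of it is such a square. -/
def MinSq {A : Type*} (lo hi : ℕ) (w : List A) : Prop :=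
  IsSq lo hi w ∧ ∀ f : List A, f <:+: w → f ≠ w → ¬ IsSq lo hi f

/-- A word is normalized if it is lexicographically least among its images under
permutations of the alphabet. -/
def Normalized {A : Type*} [LinearOrder A] (w : List A) : Prop :=
  ∀ π : Equiv.Perm A, ¬ List.Lex (· < ·) (w.map π) w

/-- `Λ`: the set of normalized words that are proper prefixes of minimal squares of
period between `lo` and `hi`. -/
def Lam {A : Type*} [LinearOrder A] (lo hi : ℕ) : Set (List A) :=
  {w | Normalized w ∧ ∃ s : List A, MinSq lo hi s ∧ w <+: s ∧ w ≠ s}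

/-- `Λ(w)`: the longest element of `Λ` that is, up to a permutation of the alphabet,
a suffix of `w`. -/
noncomputable def lamOf {A : Type*} [LinearOrder A] (lo hi : ℕ) (w : List A) : List A :=
  if h : ∃ v : List A,
      (v ∈ Lam lo hi ∧ ∃ π : Equiv.Perm A, v.map π <:+ w) ∧
      ∀ v' : List A, (v' ∈ Lam lo hi ∧ ∃ π : Equiv.Perm A, v'.map π <:+ w) →
        v'.length ≤ v.length
  then h.choose else []

namespace SqW

/-- A trie of patterns. Words are read from their end. `d k v t` caps by `v` the weight when the
distinguished letter is the `k`-th entry of the list of letters seen so far (most recent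
discovery first), `u v t` does it when the distinguished letter was not seen;
`o k s t` continues with `s` when the next letter is the `k`-th entry of that list and with `t`
otherwise; `w s` continues with `s` when the next letter is new. -/
inductive Tr where
  | e : Tr
  | d : ℕ → ℕ → Tr → Tr
  | u : ℕ → Tr → Tr
  | o : ℕ → Tr → Tr → Tr
  | w : Tr → Tr

namespace Tr

/-- The patterns of the words with an exceptional weight (after two distinct letters). -/
def table : Tr :=
  (o (nat_lit 1) (w (o (nat_lit 1) (w (o (nat_lit 2) (o (nat_lit 1) (o (nat_lit 3) (o (nat_lit 2) (o (nat_lit 3) (o (nat_lit 1) (d (nat_lit 1) (nat_lit 7821) e) e) e) e) e) (w (o (nat_lit 4) (o (nat_lit 3)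
  (o (nat_lit 4) (o (nat_lit 2) (d (nat_lit 0) (nat_lit 7821) e) e) e) e) e))) (o (nat_lit 3) (o (nat_lit 1) (o (nat_lit 3) (o (nat_lit 2) (o (nat_lit 3) (o (nat_lit 1) (d (nat_lit 1) (nat_lit 7821) e) e)
  e) e) e) (o (nat_lit 2) (d (nat_lit 0) (nat_lit 7821) e) e)) e))) (o (nat_lit 2) (w (o (nat_lit 2) (o (nat_lit 1) (o (nat_lit 3) (o (nat_lit 2) (o (nat_lit 3) (o (nat_lit 1) (d (nat_lit 1) (nat_lit 7821)
  e) e) e) e) e) (w (o (nat_lit 4) (o (nat_lit 3) (o (nat_lit 4) (o (nat_lit 2) (d (nat_lit 0) (nat_lit 7821) e) e) e) e) e))) (o (nat_lit 3) (o (nat_lit 1) (o (nat_lit 3) (o (nat_lit 2)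
  (o (nat_lit 3) (o (nat_lit 1) (d (nat_lit 1) (nat_lit 7821) e) e) e) e) e) e) e))) (w (o (nat_lit 1) (o (nat_lit 2) (o (nat_lit 0) (o (nat_lit 3) (o (nat_lit 2) (o (nat_lit 3) (o (nat_lit 1) (d
  (nat_lit 0) (nat_lit 7821) e) e) e) e) e) (w (o (nat_lit 4) (o (nat_lit 3) (o (nat_lit 4) (o (nat_lit 2) (d (nat_lit 0) (nat_lit 7821) e) e) e) e) e))) (w (o (nat_lit 1) (o (nat_lit 4)
  (o (nat_lit 3) (o (nat_lit 4) (o (nat_lit 2) (o (nat_lit 1) (d (nat_lit 1) (nat_lit 10436) e) e) e) e) e) e) e))) (o (nat_lit 2) (o (nat_lit 0) (o (nat_lit 3) (o (nat_lit 2) (o (nat_lit 3) (o (nat_lit 1)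
  (d (nat_lit 0) (nat_lit 10436) e) e) e) e) e) (o (nat_lit 1) (o (nat_lit 0) (o (nat_lit 3) (o (nat_lit 2) (o (nat_lit 3) (o (nat_lit 1) (d (nat_lit 0) (nat_lit 10436) e) e) e) e) e) (o
  (nat_lit 3) (d (nat_lit 1) (nat_lit 10436) (o (nat_lit 2) (o (nat_lit 3) (d (nat_lit 1) (nat_lit 7821) e) e) e)) e)) (w (o (nat_lit 1) (o (nat_lit 4) (o (nat_lit 3) (o (nat_lit 4) (o (nat_lit 2) (o (nat_lit 1) (d
  (nat_lit 1) (nat_lit 10436) e) e) e) e) e) e) (o (nat_lit 4) (o (nat_lit 3) (o (nat_lit 4) (d (nat_lit 0) (nat_lit 7821) e) e) e) e))))) (o (nat_lit 3) (o (nat_lit 1) (o (nat_lit 3) (o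
  (nat_lit 2) (o (nat_lit 3) (d (nat_lit 1) (nat_lit 7821) e) e) e) e) (w (o (nat_lit 1) (o (nat_lit 4) (o (nat_lit 3) (o (nat_lit 4) (o (nat_lit 2) (o (nat_lit 1) (d (nat_lit 1) (nat_lit 10436) e) e) e)
  e) e) e) e))) (w (o (nat_lit 1) (o (nat_lit 4) (o (nat_lit 3) (o (nat_lit 4) (o (nat_lit 2) (d (nat_lit 1) (nat_lit 10436) e) e) e) e) e) (o (nat_lit 2) (o (nat_lit 1) (o (nat_lit 4) (o
  (nat_lit 3) (o (nat_lit 4) (o (nat_lit 2) (d (nat_lit 1) (nat_lit 10436) e) e) e) e) e) e) (o (nat_lit 3) (o (nat_lit 1) (o (nat_lit 4) (o (nat_lit 3) (d (nat_lit 1) (nat_lit 10425) (o (nat_lit 4) (o (nat_lit 2)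
  (d (nat_lit 1) (nat_lit 7821) e) e) e)) e) e) (o (nat_lit 2) (o (nat_lit 4) (o (nat_lit 3) (o (nat_lit 4) (o (nat_lit 2) (d (nat_lit 2) (nat_lit 7821) e) e) e) e) e) (w (o (nat_lit 5)
  (o (nat_lit 4) (o (nat_lit 5) (o (nat_lit 3) (d (nat_lit 0) (nat_lit 7821) e) e) e) e) e)))) (o (nat_lit 4) (o (nat_lit 2) (o (nat_lit 4) (o (nat_lit 3) (o (nat_lit 4) (o (nat_lit 2) (d (nat_lit 2) (nat_lit 7821)
  e) e) e) e) e) e) (w (o (nat_lit 2) (o (nat_lit 5) (o (nat_lit 4) (o (nat_lit 5) (o (nat_lit 3) (o (nat_lit 2) (d (nat_lit 2) (nat_lit 10436) e) e) e) e) e) e)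
  e)))))))))))))) (w (o (nat_lit 1) (o (nat_lit 2) (o (nat_lit 0) (o (nat_lit 1) (w (o (nat_lit 3) (o (nat_lit 2) (o (nat_lit 1) (o (nat_lit 2) (d (nat_lit 0) (nat_lit 7821) e) e) e) e)
  e)) (w (o (nat_lit 1) (o (nat_lit 3) (o (nat_lit 2) (o (nat_lit 1) (o (nat_lit 2) (o (nat_lit 3) (d (nat_lit 1) (nat_lit 7821) e) e) e) e) e) e) e))) (o (nat_lit 1) (w (o (nat_lit 1) (o
  (nat_lit 3) (o (nat_lit 2) (o (nat_lit 1) (o (nat_lit 2) (o (nat_lit 3) (d (nat_lit 1) (nat_lit 7821) e) e) e) e) e) e) e)) (w (o (nat_lit 1) (o (nat_lit 3) (o (nat_lit 2) (d (nat_lit 1) (nat_lit 10436)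
  (o (nat_lit 1) (o (nat_lit 2) (d (nat_lit 1) (nat_lit 7821) e) e) e)) e) e) (o (nat_lit 2) (o (nat_lit 1) (o (nat_lit 3) (o (nat_lit 2) (o (nat_lit 1) (o (nat_lit 2) (d (nat_lit 1) (nat_lit 7821) e) e)
  e) e) e) (w (o (nat_lit 4) (o (nat_lit 3) (o (nat_lit 2) (o (nat_lit 3) (d (nat_lit 0) (nat_lit 7821) e) e) e) e) e))) (w (o (nat_lit 2) (o (nat_lit 4) (o (nat_lit 3) (o (nat_lit 2) (o
  (nat_lit 3) (o (nat_lit 4) (d (nat_lit 2) (nat_lit 7821) e) e) e) e) e) e) e))))))) (w (o (nat_lit 1) (o (nat_lit 2) (w (o (nat_lit 4) (o (nat_lit 3) (o (nat_lit 2) (o (nat_lit 3) (d (nat_lit 0)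
  (nat_lit 7821) e) e) e) e) e)) (o (nat_lit 3) (o (nat_lit 2) (o (nat_lit 1) (d (nat_lit 1) (nat_lit 7821) e) e) e) (w (o (nat_lit 2) (o (nat_lit 4) (o (nat_lit 3) (o (nat_lit 2) (o (nat_lit 3)
  (o (nat_lit 1) (d (nat_lit 2) (nat_lit 7821) e) e) e) e) e) e) e)))) (o (nat_lit 2) (o (nat_lit 1) (o (nat_lit 3) (o (nat_lit 2) (o (nat_lit 1) (d (nat_lit 1) (nat_lit 7821) e) e) e) e)
  (w (o (nat_lit 2) (o (nat_lit 4) (o (nat_lit 3) (o (nat_lit 2) (o (nat_lit 3) (o (nat_lit 1) (d (nat_lit 2) (nat_lit 7821) e) e) e) e) e) e) (o (nat_lit 4) (o (nat_lit 3) (o (nat_lit 2) (d (nat_lit 0)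
  (nat_lit 7821) e) e) e) e)))) (o (nat_lit 3) (d (nat_lit 0) (nat_lit 7821) (o (nat_lit 0) (o (nat_lit 1) (o (nat_lit 3) (o (nat_lit 2) (o (nat_lit 1) (o (nat_lit 2) (o (nat_lit 0) (d (nat_lit 1) (nat_lit 7821) e)
  e) e) e) e) e) e) (w (o (nat_lit 2) (o (nat_lit 4) (o (nat_lit 3) (o (nat_lit 2) (d (nat_lit 2) (nat_lit 10425) (o (nat_lit 3) (o (nat_lit 1) (d (nat_lit 2) (nat_lit 7821) e) e) e)) e)
  e) e) e)))) (w (o (nat_lit 1) (o (nat_lit 2) (o (nat_lit 4) (o (nat_lit 3) (o (nat_lit 2) (o (nat_lit 3) (o (nat_lit 1) (d (nat_lit 2) (nat_lit 7821) e) e) e) e) e) e) e) (o (nat_lit 2)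
  (o (nat_lit 4) (o (nat_lit 3) (o (nat_lit 2) (o (nat_lit 3) (d (nat_lit 2) (nat_lit 7821) e) e) e) e) e) (o (nat_lit 3) (o (nat_lit 1) (o (nat_lit 4) (o (nat_lit 3) (o (nat_lit 2) (o (nat_lit 3) (d (nat_lit 1)
  (nat_lit 7821) e) e) e) e) e) (o (nat_lit 2) (o (nat_lit 4) (o (nat_lit 3) (o (nat_lit 2) (o (nat_lit 3) (d (nat_lit 2) (nat_lit 7821) e) e) e) e) e) (w (o (nat_lit 5) (o (nat_lit 4) (o
  (nat_lit 3) (o (nat_lit 4) (d (nat_lit 0) (nat_lit 7821) e) e) e) e) e)))) (w (o (nat_lit 3) (o (nat_lit 5) (o (nat_lit 4) (o (nat_lit 3) (o (nat_lit 4) (o (nat_lit 2) (d (nat_lit 3) (nat_lit 7821) e) e)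
  e) e) e) e) e))))))))))) (o (nat_lit 2) (o (nat_lit 0) (o (nat_lit 1) (w (o (nat_lit 3) (o (nat_lit 2) (o (nat_lit 1) (d (nat_lit 0) (nat_lit 7821) e) e) e) e)) (w (o
  (nat_lit 2) (w (o (nat_lit 4) (o (nat_lit 3) (o (nat_lit 2) (o (nat_lit 4) (d (nat_lit 0) (nat_lit 7789) e) e) e) e) e)) e))) (o (nat_lit 1) (w (o (nat_lit 2) (w (o (nat_lit 4) (o (nat_lit 3) (o
  (nat_lit 2) (o (nat_lit 4) (d (nat_lit 0) (nat_lit 7789) e) e) e) e) e)) e)) (w (o (nat_lit 1) (d (nat_lit 0) (nat_lit 11602) (o (nat_lit 2) (o (nat_lit 0) (d (nat_lit 0) (nat_lit 11310) (o (nat_lit 3)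
  (o (nat_lit 2) (d (nat_lit 0) (nat_lit 10436) (o (nat_lit 1) (o (nat_lit 3) (d (nat_lit 0) (nat_lit 7821) e) e) e)) e) e)) (w (o (nat_lit 4) (o (nat_lit 3) (o (nat_lit 2) (o (nat_lit 4) (d (nat_lit 0)
  (nat_lit 7821) e) e) e) e) e))) e)) (o (nat_lit 2) (w (o (nat_lit 4) (o (nat_lit 3) (o (nat_lit 2) (d (nat_lit 0) (nat_lit 7789) e) e) e) e)) (w (o (nat_lit 3) (o (nat_lit 1)
  (o (nat_lit 4) (o (nat_lit 3) (d (nat_lit 1) (nat_lit 10403) (o (nat_lit 2) (o (nat_lit 4) (d (nat_lit 1) (nat_lit 7789) e) e) e)) e) e) (w (o (nat_lit 5) (o (nat_lit 4) (o (nat_lit 3) (o (nat_lit 5) (d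
  (nat_lit 0) (nat_lit 7789) e) e) e) e) e))) e))))))) (w (o (nat_lit 1) (o (nat_lit 2) (o (nat_lit 0) (o (nat_lit 1) (o (nat_lit 3) (o (nat_lit 2) (o (nat_lit 1) (o (nat_lit 0) (o (nat_lit 1) (d
  (nat_lit 1) (nat_lit 7821) e) e) e) e) e) e) (o (nat_lit 3) (o (nat_lit 2) (o (nat_lit 1) (d (nat_lit 0) (nat_lit 7821) e) e) e) e)) (w (o (nat_lit 2) (o (nat_lit 4) (o (nat_lit 3) (o
  (nat_lit 2) (o (nat_lit 1) (o (nat_lit 2) (d (nat_lit 2) (nat_lit 7821) e) e) e) e) e) e) (o (nat_lit 4) (o (nat_lit 3) (o (nat_lit 2) (d (nat_lit 0) (nat_lit 7821) e) e) e) e)))) (o (nat_lit 3)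
  (o (nat_lit 1) (o (nat_lit 0) (o (nat_lit 3) (o (nat_lit 2) (o (nat_lit 1) (o (nat_lit 0) (d (nat_lit 0) (nat_lit 7821) e) e) e) e) e) e) (o (nat_lit 2) (d (nat_lit 1) (nat_lit 7821) e) (w (o (nat_lit 2)
  (o (nat_lit 4) (o (nat_lit 3) (o (nat_lit 2) (o (nat_lit 1) (o (nat_lit 2) (d (nat_lit 2) (nat_lit 7821) e) e) e) e) e) e) e)))) (w (o (nat_lit 1) (o (nat_lit 2) (o (nat_lit 4) (o (nat_lit 3) (o
  (nat_lit 2) (o (nat_lit 1) (o (nat_lit 2) (d (nat_lit 2) (nat_lit 7821) e) e) e) e) e) e) e) (o (nat_lit 2) (o (nat_lit 1) (o (nat_lit 4) (o (nat_lit 3) (o (nat_lit 2) (o (nat_lit 1) (d (nat_lit 1) (nat_lit 7821)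
  e) e) e) e) e) (o (nat_lit 4) (o (nat_lit 3) (o (nat_lit 2) (o (nat_lit 1) (d (nat_lit 2) (nat_lit 7821) e) e) e) e) e)) (o (nat_lit 3) (o (nat_lit 1) (o (nat_lit 4) (o (nat_lit 3) (o
  (nat_lit 2) (o (nat_lit 1) (d (nat_lit 1) (nat_lit 7821) e) e) e) e) e) (o (nat_lit 2) (o (nat_lit 4) (o (nat_lit 3) (d (nat_lit 2) (nat_lit 10425) (o (nat_lit 2) (o (nat_lit 1) (d (nat_lit 2) (nat_lit 7821) e)
  e) e)) e) e) (w (o (nat_lit 5) (o (nat_lit 4) (o (nat_lit 3) (o (nat_lit 2) (d (nat_lit 0) (nat_lit 7821) e) e) e) e) e)))) (w (o (nat_lit 3) (o (nat_lit 5) (o (nat_lit 4) (o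
  (nat_lit 3) (o (nat_lit 2) (o (nat_lit 3) (d (nat_lit 3) (nat_lit 7821) e) e) e) e) e) e) e)))))))) (o (nat_lit 2) (o (nat_lit 0) (o (nat_lit 1) (o (nat_lit 3) (o (nat_lit 2) (o (nat_lit 1) (o
  (nat_lit 0) (d (nat_lit 1) (nat_lit 7821) e) e) e) e) e) (w (o (nat_lit 2) (o (nat_lit 4) (o (nat_lit 3) (o (nat_lit 2) (o (nat_lit 1) (o (nat_lit 3) (d (nat_lit 2) (nat_lit 7789) e) e) e) e) e)
  e) e))) (o (nat_lit 1) (o (nat_lit 2) (o (nat_lit 0) (o (nat_lit 3) (o (nat_lit 2) (o (nat_lit 1) (o (nat_lit 0) (d (nat_lit 0) (nat_lit 7821) e) e) e) e) e) (w (o (nat_lit 4) (o (nat_lit 3) (o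
  (nat_lit 2) (o (nat_lit 1) (d (nat_lit 0) (nat_lit 7821) e) e) e) e) e))) (o (nat_lit 3) (o (nat_lit 2) (d (nat_lit 1) (nat_lit 7821) e) e) (w (o (nat_lit 2) (o (nat_lit 4) (o (nat_lit 3) (o (nat_lit 2)
  (o (nat_lit 1) (o (nat_lit 3) (d (nat_lit 2) (nat_lit 7789) e) e) e) e) e) e) e)))) (o (nat_lit 3) (o (nat_lit 0) (d (nat_lit 1) (nat_lit 11602) (o (nat_lit 1) (o (nat_lit 3) (d (nat_lit 1)
  (nat_lit 11310) (o (nat_lit 2) (o (nat_lit 1) (d (nat_lit 1) (nat_lit 10436) (o (nat_lit 0) (o (nat_lit 2) (d (nat_lit 1) (nat_lit 7821) e) e) e)) e) e)) e) e)) (o (nat_lit 1) (o (nat_lit 0) (o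
  (nat_lit 3) (o (nat_lit 2) (o (nat_lit 1) (d (nat_lit 0) (nat_lit 10436) (o (nat_lit 0) (d (nat_lit 0) (nat_lit 7821) e) e)) e) e) e) e) (w (o (nat_lit 2) (o (nat_lit 4) (o (nat_lit 3) (o (nat_lit 2) (d
  (nat_lit 2) (nat_lit 10403) (o (nat_lit 1) (o (nat_lit 3) (d (nat_lit 2) (nat_lit 7789) e) e) e)) e) e) e) e)))) (w (o (nat_lit 1) (o (nat_lit 2) (o (nat_lit 4) (o (nat_lit 3) (o (nat_lit 2) (o
  (nat_lit 1) (o (nat_lit 3) (d (nat_lit 2) (nat_lit 7821) e) e) e) e) e) e) e) (o (nat_lit 2) (o (nat_lit 1) (o (nat_lit 4) (o (nat_lit 3) (o (nat_lit 2) (o (nat_lit 1) (d (nat_lit 1) (nat_lit 7821) e) e)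
  e) e) e) (o (nat_lit 4) (o (nat_lit 3) (o (nat_lit 2) (o (nat_lit 1) (d (nat_lit 2) (nat_lit 7789) e) e) e) e) e)) (o (nat_lit 3) (o (nat_lit 1) (o (nat_lit 4) (o (nat_lit 3) (o (nat_lit 2) (o
  (nat_lit 1) (d (nat_lit 1) (nat_lit 7821) e) e) e) e) e) (o (nat_lit 2) (o (nat_lit 4) (o (nat_lit 3) (o (nat_lit 2) (o (nat_lit 1) (d (nat_lit 2) (nat_lit 7821) e) e) e) e) e) (w (o (nat_lit 5)
  (o (nat_lit 4) (o (nat_lit 3) (o (nat_lit 2) (d (nat_lit 0) (nat_lit 7821) e) e) e) e) e)))) (o (nat_lit 4) (o (nat_lit 3) (d (nat_lit 0) (nat_lit 7821) e) e) (w (o (nat_lit 3) (o (nat_lit 5) (o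
  (nat_lit 4) (o (nat_lit 3) (o (nat_lit 2) (o (nat_lit 4) (d (nat_lit 3) (nat_lit 7789) e) e) e) e) e) e) e)))))))))) (o (nat_lit 3) (o (nat_lit 0) (o (nat_lit 1) (o (nat_lit 3) (o (nat_lit 2) (o
  (nat_lit 1) (o (nat_lit 0) (d (nat_lit 1) (nat_lit 7821) e) e) e) e) e) (o (nat_lit 2) (o (nat_lit 0) (o (nat_lit 3) (o (nat_lit 2) (o (nat_lit 1) (o (nat_lit 0) (o (nat_lit 3) (d (nat_lit 0) (nat_lit 7821) e) e)
  e) e) e) e) (o (nat_lit 1) (o (nat_lit 3) (o (nat_lit 2) (o (nat_lit 1) (o (nat_lit 0) (d (nat_lit 1) (nat_lit 7821) e) e) e) e) e) (w (o (nat_lit 4) (o (nat_lit 3) (o (nat_lit 2) (o (nat_lit 1)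
  (d (nat_lit 0) (nat_lit 7821) e) e) e) e) e)))) (w (o (nat_lit 1) (o (nat_lit 4) (o (nat_lit 3) (o (nat_lit 2) (o (nat_lit 1) (o (nat_lit 4) (d (nat_lit 1) (nat_lit 7821) e) e) e) e) e)
  e) (o (nat_lit 2) (o (nat_lit 4) (o (nat_lit 3) (o (nat_lit 2) (o (nat_lit 1) (o (nat_lit 4) (d (nat_lit 2) (nat_lit 7821) e) e) e) e) e) e) e))))) (o (nat_lit 1) (o (nat_lit 0) (o (nat_lit 1)
  (o (nat_lit 3) (o (nat_lit 2) (o (nat_lit 1) (o (nat_lit 0) (o (nat_lit 3) (d (nat_lit 1) (nat_lit 7821) e) e) e) e) e) e) e) (o (nat_lit 2) (o (nat_lit 0) (o (nat_lit 3) (o (nat_lit 2) (o (nat_lit 1) (o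
  (nat_lit 0) (d (nat_lit 0) (nat_lit 7821) e) e) e) e) e) (w (o (nat_lit 4) (o (nat_lit 3) (o (nat_lit 2) (o (nat_lit 1) (d (nat_lit 0) (nat_lit 7821) e) e) e) e) e))) (w (o (nat_lit 1)
  (o (nat_lit 4) (o (nat_lit 3) (o (nat_lit 2) (o (nat_lit 1) (o (nat_lit 4) (d (nat_lit 1) (nat_lit 7821) e) e) e) e) e) e) (o (nat_lit 2) (o (nat_lit 4) (o (nat_lit 3) (o (nat_lit 2) (o (nat_lit 1) (o (nat_lit 4)
  (d (nat_lit 2) (nat_lit 7821) e) e) e) e) e) e) e))))) (o (nat_lit 2) (o (nat_lit 0) (o (nat_lit 1) (o (nat_lit 3) (o (nat_lit 2) (o (nat_lit 1) (o (nat_lit 0) (o (nat_lit 3) (d (nat_lit 1)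
  (nat_lit 7821) e) e) e) e) e) e) e) (w (o (nat_lit 2) (o (nat_lit 4) (o (nat_lit 3) (o (nat_lit 2) (o (nat_lit 1) (o (nat_lit 4) (d (nat_lit 2) (nat_lit 7821) e) e) e) e) e) e)
  e))) (w (o (nat_lit 1) (o (nat_lit 2) (o (nat_lit 4) (o (nat_lit 3) (o (nat_lit 2) (o (nat_lit 1) (o (nat_lit 4) (d (nat_lit 2) (nat_lit 7821) e) e) e) e) e) e) (o (nat_lit 4) (o (nat_lit 3) (o
  (nat_lit 2) (o (nat_lit 1) (d (nat_lit 1) (nat_lit 7821) e) e) e) e) e)) (o (nat_lit 2) (o (nat_lit 1) (o (nat_lit 4) (o (nat_lit 3) (o (nat_lit 2) (o (nat_lit 1) (d (nat_lit 1) (nat_lit 7821) e) e) e)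
  e) e) (o (nat_lit 4) (o (nat_lit 3) (d (nat_lit 2) (nat_lit 10425) (o (nat_lit 2) (o (nat_lit 1) (d (nat_lit 2) (nat_lit 7821) e) e) e)) e) e)) (o (nat_lit 3) (o (nat_lit 1) (o (nat_lit 4) (o (nat_lit 3)
  (o (nat_lit 2) (o (nat_lit 1) (d (nat_lit 1) (nat_lit 7821) e) e) e) e) e) (o (nat_lit 2) (o (nat_lit 4) (o (nat_lit 3) (o (nat_lit 2) (o (nat_lit 1) (d (nat_lit 2) (nat_lit 7821) e) e) e) e) e)
  (w (o (nat_lit 5) (o (nat_lit 4) (o (nat_lit 3) (o (nat_lit 2) (d (nat_lit 0) (nat_lit 7821) e) e) e) e) e)))) (w (o (nat_lit 2) (o (nat_lit 5) (o (nat_lit 4) (o (nat_lit 3) (o (nat_lit 2) (o (nat_lit 5)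
  (d (nat_lit 2) (nat_lit 7821) e) e) e) e) e) e) (o (nat_lit 3) (o (nat_lit 5) (o (nat_lit 4) (o (nat_lit 3) (o (nat_lit 2) (o (nat_lit 5) (d (nat_lit 3) (nat_lit 7821) e) e) e) e) e) e)
  e)))))))))) (w (o (nat_lit 1) (o (nat_lit 2) (o (nat_lit 4) (o (nat_lit 3) (o (nat_lit 2) (o (nat_lit 1) (d (nat_lit 2) (nat_lit 7821) e) e) e) e) e) (o (nat_lit 3) (o (nat_lit 0) (o (nat_lit 4)
  (o (nat_lit 3) (o (nat_lit 2) (o (nat_lit 1) (d (nat_lit 0) (nat_lit 7821) e) e) e) e) e) (o (nat_lit 2) (o (nat_lit 4) (o (nat_lit 3) (o (nat_lit 2) (o (nat_lit 1) (d (nat_lit 2) (nat_lit 7821) e) e) e)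
  e) e) (w (o (nat_lit 5) (o (nat_lit 4) (o (nat_lit 3) (o (nat_lit 2) (d (nat_lit 0) (nat_lit 7821) e) e) e) e) e)))) (w (o (nat_lit 3) (o (nat_lit 5) (o (nat_lit 4) (o (nat_lit 3) (o (nat_lit 2)
  (o (nat_lit 1) (d (nat_lit 3) (nat_lit 7821) e) e) e) e) e) e) e)))) (o (nat_lit 2) (o (nat_lit 1) (o (nat_lit 2) (o (nat_lit 4) (o (nat_lit 3) (o (nat_lit 2) (o (nat_lit 1) (o (nat_lit 0) (d (nat_lit 2)
  (nat_lit 7821) e) e) e) e) e) e) (o (nat_lit 4) (o (nat_lit 3) (o (nat_lit 2) (d (nat_lit 1) (nat_lit 7821) e) e) e) e)) (o (nat_lit 3) (o (nat_lit 0) (d (nat_lit 0) (nat_lit 11299) (o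
  (nat_lit 4) (o (nat_lit 3) (d (nat_lit 0) (nat_lit 10425) (o (nat_lit 2) (o (nat_lit 1) (d (nat_lit 0) (nat_lit 7821) e) e) e)) e) e)) (o (nat_lit 1) (o (nat_lit 4) (o (nat_lit 3) (o (nat_lit 2) (o (nat_lit 1) (d
  (nat_lit 1) (nat_lit 7821) e) e) e) e) e) (w (o (nat_lit 5) (o (nat_lit 4) (o (nat_lit 3) (o (nat_lit 2) (d (nat_lit 0) (nat_lit 7821) e) e) e) e) e)))) (o (nat_lit 4) (o (nat_lit 3) (o
  (nat_lit 2) (d (nat_lit 2) (nat_lit 7821) e) e) e) (w (o (nat_lit 3) (o (nat_lit 5) (o (nat_lit 4) (o (nat_lit 3) (o (nat_lit 2) (o (nat_lit 1) (d (nat_lit 3) (nat_lit 7821) e) e) e) e) e) e)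
  e))))) (o (nat_lit 3) (o (nat_lit 0) (o (nat_lit 2) (o (nat_lit 4) (o (nat_lit 3) (o (nat_lit 2) (o (nat_lit 1) (o (nat_lit 0) (d (nat_lit 2) (nat_lit 7821) e) e) e) e) e) e) e) (o (nat_lit 1)
  (o (nat_lit 2) (o (nat_lit 4) (o (nat_lit 3) (o (nat_lit 2) (o (nat_lit 1) (o (nat_lit 0) (d (nat_lit 2) (nat_lit 7821) e) e) e) e) e) e) (o (nat_lit 4) (d (nat_lit 1) (nat_lit 10425) (o (nat_lit 3) (o
  (nat_lit 2) (d (nat_lit 1) (nat_lit 7821) e) e) e)) e)) (o (nat_lit 2) (o (nat_lit 4) (o (nat_lit 3) (o (nat_lit 2) (d (nat_lit 2) (nat_lit 7821) e) e) e) e) (w (o (nat_lit 3) (o (nat_lit 5) (o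
  (nat_lit 4) (o (nat_lit 3) (o (nat_lit 2) (o (nat_lit 1) (d (nat_lit 3) (nat_lit 7821) e) e) e) e) e) e) (o (nat_lit 5) (o (nat_lit 4) (o (nat_lit 3) (d (nat_lit 0) (nat_lit 7821) e) e) e)
  e)))))) (o (nat_lit 4) (o (nat_lit 0) (o (nat_lit 2) (o (nat_lit 4) (o (nat_lit 3) (o (nat_lit 2) (o (nat_lit 1) (o (nat_lit 0) (d (nat_lit 2) (nat_lit 7821) e) e) e) e) e) e) e) (o (nat_lit 1)
  (o (nat_lit 2) (o (nat_lit 4) (d (nat_lit 2) (nat_lit 11299) (o (nat_lit 3) (o (nat_lit 2) (d (nat_lit 2) (nat_lit 10425) (o (nat_lit 1) (o (nat_lit 0) (d (nat_lit 2) (nat_lit 7821) e) e) e)) e) e)) e)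
  e) (o (nat_lit 2) (o (nat_lit 1) (o (nat_lit 4) (o (nat_lit 3) (o (nat_lit 2) (d (nat_lit 1) (nat_lit 10436) (o (nat_lit 1) (d (nat_lit 1) (nat_lit 7821) e) e)) e) e) e) e) (w (o (nat_lit 3) (o
  (nat_lit 5) (o (nat_lit 4) (o (nat_lit 3) (d (nat_lit 3) (nat_lit 10425) (o (nat_lit 2) (o (nat_lit 1) (d (nat_lit 3) (nat_lit 7821) e) e) e)) e) e) e) e))))) (w (o (nat_lit 1) (o (nat_lit 3) (o
  (nat_lit 5) (o (nat_lit 4) (o (nat_lit 3) (o (nat_lit 2) (o (nat_lit 1) (d (nat_lit 3) (nat_lit 7821) e) e) e) e) e) e) e) (o (nat_lit 2) (o (nat_lit 3) (o (nat_lit 5) (o (nat_lit 4) (o (nat_lit 3) (o (nat_lit 2)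
  (o (nat_lit 1) (d (nat_lit 3) (nat_lit 7821) e) e) e) e) e) e) e) (o (nat_lit 3) (o (nat_lit 2) (o (nat_lit 5) (o (nat_lit 4) (o (nat_lit 3) (o (nat_lit 2) (d (nat_lit 2) (nat_lit 7821) e) e) e)
  e) e) (o (nat_lit 5) (o (nat_lit 4) (o (nat_lit 3) (o (nat_lit 2) (d (nat_lit 3) (nat_lit 7821) e) e) e) e) e)) (o (nat_lit 4) (o (nat_lit 1) (o (nat_lit 5) (o (nat_lit 4) (d (nat_lit 1) (nat_lit 10425)
  (o (nat_lit 3) (o (nat_lit 2) (d (nat_lit 1) (nat_lit 7821) e) e) e)) e) e) (o (nat_lit 2) (o (nat_lit 5) (o (nat_lit 4) (o (nat_lit 3) (o (nat_lit 2) (d (nat_lit 2) (nat_lit 7821) e) e) e) e)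
  e) (o (nat_lit 3) (o (nat_lit 5) (o (nat_lit 4) (o (nat_lit 3) (o (nat_lit 2) (d (nat_lit 3) (nat_lit 7821) e) e) e) e) e) e))) e))))))))))))))))))

end Tr

local notation "iteB(" c ";" x ";" y ")" => @Bool.rec (fun _ => _) y x c
local notation "andB(" c ";" x ")" => @Bool.rec (fun _ => Bool) false x c

/-- `x` is the `k`-th entry of `env`. -/
noncomputable def isAt (x k : ℕ) (env : List ℕ) : Bool :=
  Nat.rec (motive := fun _ => List ℕ → Bool)
    (fun l => List.rec (motive := fun _ => Bool) false (fun y _ _ => Nat.beq x y) l)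
    (fun _ ih l => List.rec (motive := fun _ => Bool) false (fun _ ys _ => ih ys) l) k env

/-- `x` is not in `env`. -/
noncomputable def isNew (x : ℕ) (env : List ℕ) : Bool :=
  List.rec (motive := fun _ => Bool) true
    (fun y _ ih => iteB(Nat.beq x y; false; ih)) env

/-- Minimum. -/
noncomputable def mn (a b : ℕ) : ℕ := iteB(Nat.ble a b; a; b)

/-- Least weight of a pattern of the trie matched by a beginning of the list, with
distinguished letter `b`. -/
noncomputable def walk (b : ℕ) (t : Tr) : List ℕ → List ℕ → ℕ :=
  Tr.rec (motive := fun _ => List ℕ → List ℕ → ℕ) (fun _ _ => (nat_lit 11699))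
    (fun k v _ ih env r => iteB(isAt b k env; mn v (ih env r); ih env r))
    (fun v _ ih env r => iteB(isNew b env; mn v (ih env r); ih env r))
    (fun k _ _ ihs iht env r =>
      List.rec (motive := fun _ => ℕ) (nat_lit 11699)
        (fun x xs _ => iteB(isAt x k env; ihs env xs; iht env r)) r)
    (fun _ ih env r =>
      List.rec (motive := fun _ => ℕ) (nat_lit 11699)
        (fun x xs _ => iteB(isNew x env; ih (x :: env) xs; (nat_lit 11699))) r) t

/-- No cap is met. -/
noncomputable def clean (t : Tr) : List ℕ → List ℕ → Bool :=
  Tr.rec (motive := fun _ => List ℕ → List ℕ → Bool) (fun _ _ => true)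
    (fun _ _ _ _ _ _ => false)
    (fun _ _ _ _ _ => false)
    (fun k _ _ ihs iht env r =>
      List.rec (motive := fun _ => Bool) true
        (fun x xs _ => iteB(isAt x k env; ihs env xs; iht env r)) r)
    (fun _ ih env r =>
      List.rec (motive := fun _ => Bool) true
        (fun x xs _ => iteB(isNew x env; ih (x :: env) xs; true)) r) t

/-- The first `n` letters of the lists agree. -/
noncomputable def mtc (n : ℕ) : List ℕ → List ℕ → Bool :=
  Nat.rec (motive := fun _ => List ℕ → List ℕ → Bool) (fun _ _ => true)
    (fun _ ih r s =>
      List.rec (motive := fun _ => Bool) false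
        (fun x xs _ =>
          List.rec (motive := fun _ => Bool) false
            (fun y ys _ => iteB(Nat.beq x y; ih xs ys; false)) s) r) n

/-- Set (as a bit mask) of the letters `s[i]` such that the first `ns[i]` letters of `r` and
of `s.drop (i+1)` agree. -/
noncomputable def bgo (ns : List ℕ) (r : List ℕ) : List ℕ → ℕ :=
  List.rec (motive := fun _ => List ℕ → ℕ) (fun _ => (nat_lit 0))
    (fun n _ ih s => List.rec (motive := fun _ => ℕ) (nat_lit 0)
      (fun y ys _ => iteB(mtc n r ys; Nat.lor (Nat.shiftLeft (nat_lit 1) y) (ih ys); ih ys)) s) ns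

/-- The letters whose addition yields, up to at most one more letter, a square. -/
noncomputable def bm (r : List ℕ) : ℕ := bgo [(nat_lit 0), (nat_lit 0), (nat_lit 1), (nat_lit 2), (nat_lit 3), (nat_lit 4), (nat_lit 5), (nat_lit 6)] r r

/-- The letters whose addition yields a square. -/
noncomputable def em (r : List ℕ) : ℕ := bgo [(nat_lit 0), (nat_lit 1), (nat_lit 2), (nat_lit 3), (nat_lit 4), (nat_lit 5), (nat_lit 6), (nat_lit 7)] r r

/-- Membership in a bit mask. -/
noncomputable def mem (b m : ℕ) : Bool := Nat.beq (Nat.land (nat_lit 1) (Nat.shiftRight m b)) (nat_lit 1)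

/-- The weight of the pattern. -/
noncomputable def pw (b : ℕ) (r : List ℕ) : ℕ :=
  List.rec (motive := fun _ => ℕ) (nat_lit 11699) (fun x r1 _ =>
  List.rec (motive := fun _ => ℕ) (nat_lit 11699) (fun y r2 _ => walk b Tr.table [y, x] r2) r1) r

/-- No cap is met, whatever the last letter. -/
noncomputable def cl (r : List ℕ) : Bool :=
  List.rec (motive := fun _ => Bool) true (fun x r1 _ =>
  List.rec (motive := fun _ => Bool) true (fun y r2 _ => clean Tr.table [y, x] r2) r1) r

/-- The weight of the (reversed) word `b :: r`, supposed without squares. -/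
noncomputable def wt (b : ℕ) (r : List ℕ) : ℕ := iteB(mem b (bm r); (nat_lit 0); pw b r)

/-- The same in the absence of caps. -/
noncomputable def wt0 (b : ℕ) (r : List ℕ) : ℕ := iteB(mem b (bm r); (nat_lit 0); (nat_lit 11699))

/-- The sum of the values of a function at the letters. -/
noncomputable def sm (f : ℕ → List ℕ → ℕ) (r : List ℕ) : ℕ :=
  Nat.add (f (nat_lit 0) r) (Nat.add (f (nat_lit 1) r) (Nat.add (f (nat_lit 2) r) (Nat.add (f (nat_lit 3) r)
    (Nat.add (f (nat_lit 4) r) (f (nat_lit 5) r)))))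

/-- The inequality for a given (reversed) `va`. -/
noncomputable def chkA (g : ℕ) (r : List ℕ) : Bool :=
  Nat.ble (Nat.mul (nat_lit 27195) g) (Nat.mul (nat_lit 9091) (iteB(cl r; sm wt0 r; sm wt r)))

/-- The inequality for the letter `a`. -/
noncomputable def chkB (g : ℕ) (r : List ℕ) (a : ℕ) : Bool :=
  iteB(mtc (nat_lit 1) (a :: r) r; true; chkA g (a :: r))

/-- The inequalities for the (reversed) word `r` of weight `g`. -/
noncomputable def chkC (g : ℕ) (r : List ℕ) : Bool :=
  iteB(Nat.beq g (nat_lit 0); true; andB(chkA g r; andB(chkB g r (nat_lit 0); andB(chkB g r (nat_lit 1);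
    andB(chkB g r (nat_lit 2); andB(chkB g r (nat_lit 3); andB(chkB g r (nat_lit 4); chkB g r (nat_lit 5))))))))

/-- The inequalities for the (reversed) word `b :: r`. -/
noncomputable def chk (b : ℕ) (r : List ℕ) : Bool := chkC (wt b r) (b :: r)

/-- The inequalities for the words obtained by adding successively the letters of `cs`. -/
noncomputable def ext (cs : List ℕ) : List ℕ → Bool :=
  List.rec (motive := fun _ => List ℕ → Bool) (fun _ => true)
    (fun c _ ih r => iteB(mem c (em r); true; andB(chk c r; ih (c :: r)))) cs

/-- Reverse with an accumulator. -/
noncomputable def rv (r : List ℕ) : List ℕ → List ℕ :=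
  List.rec (motive := fun _ => List ℕ → List ℕ) (fun s => s) (fun x _ ih s => ih (x :: s)) r

/-- One branch of the search. -/
noncomputable def step (f : ℕ → List ℕ → ℕ → Bool) (r : List ℕ) (m c m' : ℕ) : Bool :=
  iteB(Nat.ble c m; iteB(mem c (em r); true; f c r m'); true)

/-- Maximum. -/
noncomputable def mx (a b : ℕ) : ℕ := iteB(Nat.ble a b; b; a)

/-- The inequalities for the word `b :: r` and for the prefixes of its square. -/
noncomputable def chkE (b : ℕ) (r : List ℕ) : Bool :=
  andB(chk b r; ext (rv (b :: r) []) (b :: r))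

/-- All the inequalities for the words with at most `n` letters more than `b :: r`. -/
noncomputable def dfs (n : ℕ) : ℕ → List ℕ → ℕ → Bool :=
  Nat.rec (motive := fun _ => ℕ → List ℕ → ℕ → Bool)
    (fun b r _ => chkE b r)
    (fun _ ih b r m => andB(chkE b r;
      andB(step ih (b :: r) m (nat_lit 0) (mx m (nat_lit 1)); andB(step ih (b :: r) m (nat_lit 1) (mx m (nat_lit 2));
      andB(step ih (b :: r) m (nat_lit 2) (mx m (nat_lit 3)); andB(step ih (b :: r) m (nat_lit 3) (mx m (nat_lit 4));
      andB(step ih (b :: r) m (nat_lit 4) (mx m (nat_lit 5)); step ih (b :: r) m (nat_lit 5) (mx m (nat_lit 6))))))))) n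

theorem dfs_01020 : dfs (nat_lit 3) (nat_lit 0) [(nat_lit 2), (nat_lit 0), (nat_lit 1), (nat_lit 0)] (nat_lit 3) = true := by decide +kernel
theorem dfs_01021 : dfs (nat_lit 3) (nat_lit 1) [(nat_lit 2), (nat_lit 0), (nat_lit 1), (nat_lit 0)] (nat_lit 3) = true := by decide +kernel
theorem dfs_01023 : dfs (nat_lit 3) (nat_lit 3) [(nat_lit 2), (nat_lit 0), (nat_lit 1), (nat_lit 0)] (nat_lit 4) = true := by decide +kernel
theorem dfs_01201 : dfs (nat_lit 3) (nat_lit 1) [(nat_lit 0), (nat_lit 2), (nat_lit 1), (nat_lit 0)] (nat_lit 3) = true := by decide +kernel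
theorem dfs_01202 : dfs (nat_lit 3) (nat_lit 2) [(nat_lit 0), (nat_lit 2), (nat_lit 1), (nat_lit 0)] (nat_lit 3) = true := by decide +kernel
theorem dfs_01203 : dfs (nat_lit 3) (nat_lit 3) [(nat_lit 0), (nat_lit 2), (nat_lit 1), (nat_lit 0)] (nat_lit 4) = true := by decide +kernel
theorem dfs_01210 : dfs (nat_lit 3) (nat_lit 0) [(nat_lit 1), (nat_lit 2), (nat_lit 1), (nat_lit 0)] (nat_lit 3) = true := by decide +kernel
theorem dfs_01213 : dfs (nat_lit 3) (nat_lit 3) [(nat_lit 1), (nat_lit 2), (nat_lit 1), (nat_lit 0)] (nat_lit 4) = true := by decide +kernel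
theorem dfs_01230 : dfs (nat_lit 3) (nat_lit 0) [(nat_lit 3), (nat_lit 2), (nat_lit 1), (nat_lit 0)] (nat_lit 4) = true := by decide +kernel
theorem dfs_01231 : dfs (nat_lit 3) (nat_lit 1) [(nat_lit 3), (nat_lit 2), (nat_lit 1), (nat_lit 0)] (nat_lit 4) = true := by decide +kernel
theorem dfs_01232 : dfs (nat_lit 3) (nat_lit 2) [(nat_lit 3), (nat_lit 2), (nat_lit 1), (nat_lit 0)] (nat_lit 4) = true := by decide +kernel
theorem dfs_01234 : dfs (nat_lit 3) (nat_lit 4) [(nat_lit 3), (nat_lit 2), (nat_lit 1), (nat_lit 0)] (nat_lit 5) = true := by decide +kernel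

theorem and_intro {c x : Bool} (h : c = true) (h' : x = true) :
    (@Bool.rec (fun _ => Bool) false x c) = true := by subst h; exact h'

theorem dfs_node {n b : ℕ} {r : List ℕ} {m : ℕ} (h : chkE b r = true)
    (h0 : step (dfs n) (b :: r) m (nat_lit 0) (mx m (nat_lit 1)) = true)
    (h1 : step (dfs n) (b :: r) m (nat_lit 1) (mx m (nat_lit 2)) = true)
    (h2 : step (dfs n) (b :: r) m (nat_lit 2) (mx m (nat_lit 3)) = true)
    (h3 : step (dfs n) (b :: r) m (nat_lit 3) (mx m (nat_lit 4)) = true)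
    (h4 : step (dfs n) (b :: r) m (nat_lit 4) (mx m (nat_lit 5)) = true)
    (h5 : step (dfs n) (b :: r) m (nat_lit 5) (mx m (nat_lit 6)) = true) :
    dfs (n + 1) b r m = true :=
  and_intro h (and_intro h0 (and_intro h1 (and_intro h2 (and_intro h3 (and_intro h4 h5)))))

theorem step_gt {f : ℕ → List ℕ → ℕ → Bool} {r : List ℕ} {m c m' : ℕ}
    (h : Nat.ble c m = false) : step f r m c m' = true := by
  unfold step; rw [h]

theorem step_sq {f : ℕ → List ℕ → ℕ → Bool} {r : List ℕ} {m c m' : ℕ}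
    (h : mem c (em r) = true) : step f r m c m' = true := by
  unfold step; rw [h]; cases Nat.ble c m <;> rfl

theorem step_of {f : ℕ → List ℕ → ℕ → Bool} {r : List ℕ} {m c m' k : ℕ} (hk : m' = k)
    (h : f c r k = true) : step f r m c m' = true := by
  subst hk
  unfold step; rw [h]; cases Nat.ble c m <;> cases mem c (em r) <;> rfl

theorem dfs_0102 : dfs (nat_lit 4) (nat_lit 2) [(nat_lit 0), (nat_lit 1), (nat_lit 0)] (nat_lit 3) = true :=
  dfs_node (n := (nat_lit 3)) (by decide +kernel) (step_of rfl dfs_01020) (step_of rfl dfs_01021)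
    (step_sq (by decide +kernel)) (step_of rfl dfs_01023) (step_gt rfl) (step_gt rfl)

theorem dfs_0120 : dfs (nat_lit 4) (nat_lit 0) [(nat_lit 2), (nat_lit 1), (nat_lit 0)] (nat_lit 3) = true :=
  dfs_node (n := (nat_lit 3)) (by decide +kernel) (step_sq (by decide +kernel)) (step_of rfl dfs_01201)
    (step_of rfl dfs_01202) (step_of rfl dfs_01203) (step_gt rfl) (step_gt rfl)

theorem dfs_0121 : dfs (nat_lit 4) (nat_lit 1) [(nat_lit 2), (nat_lit 1), (nat_lit 0)] (nat_lit 3) = true :=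
  dfs_node (n := (nat_lit 3)) (by decide +kernel) (step_of rfl dfs_01210) (step_sq (by decide +kernel))
    (step_sq (by decide +kernel)) (step_of rfl dfs_01213) (step_gt rfl) (step_gt rfl)

theorem dfs_0123 : dfs (nat_lit 4) (nat_lit 3) [(nat_lit 2), (nat_lit 1), (nat_lit 0)] (nat_lit 4) = true :=
  dfs_node (n := (nat_lit 3)) (by decide +kernel) (step_of rfl dfs_01230) (step_of rfl dfs_01231)
    (step_of rfl dfs_01232) (step_sq (by decide +kernel)) (step_of rfl dfs_01234) (step_gt rfl)

theorem dfs_010 : dfs (nat_lit 5) (nat_lit 0) [(nat_lit 1), (nat_lit 0)] (nat_lit 2) = true :=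
  dfs_node (n := (nat_lit 4)) (by decide +kernel) (step_sq (by decide +kernel))
    (step_sq (by decide +kernel)) (step_of rfl dfs_0102) (step_gt rfl) (step_gt rfl) (step_gt rfl)

theorem dfs_012 : dfs (nat_lit 5) (nat_lit 2) [(nat_lit 1), (nat_lit 0)] (nat_lit 3) = true :=
  dfs_node (n := (nat_lit 4)) (by decide +kernel) (step_of rfl dfs_0120) (step_of rfl dfs_0121)
    (step_sq (by decide +kernel)) (step_of rfl dfs_0123) (step_gt rfl) (step_gt rfl)

theorem dfs_01 : dfs (nat_lit 6) (nat_lit 1) [(nat_lit 0)] (nat_lit 2) = true :=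
  dfs_node (n := (nat_lit 5)) (by decide +kernel) (step_of rfl dfs_010) (step_sq (by decide +kernel))
    (step_of rfl dfs_012) (step_gt rfl) (step_gt rfl) (step_gt rfl)

theorem dfs_0 : dfs (nat_lit 7) (nat_lit 0) [] (nat_lit 1) = true :=
  dfs_node (n := (nat_lit 6)) (by decide +kernel) (step_sq (by decide +kernel)) (step_of rfl dfs_01)
    (step_gt rfl) (step_gt rfl) (step_gt rfl) (step_gt rfl)

theorem chk_nil : chkC (nat_lit 11699) [] = true := by decide +kernel


/-! ### Meaning of the elementary functions -/

theorem iteB_eq {α : Type} (c : Bool) (x y : α) :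
    (@Bool.rec (fun _ => α) y x c) = if c = true then x else y := by cases c <;> rfl

theorem isAt_eq (x k : ℕ) (env : List ℕ) : isAt x k env = decide (env[k]? = some x) := by
  induction k generalizing env with
  | zero =>
    cases env with
    | nil => simp [isAt]
    | cons y ys =>
      show Nat.beq x y = _
      rw [Bool.eq_iff_iff, Nat.beq_eq, decide_eq_true_eq, List.getElem?_cons_zero,
        Option.some.injEq]
      exact eq_comm
  | succ k ih =>
    cases env with
    | nil => simp [isAt]
    | cons y ys =>
      show isAt x k ys = _
      rw [ih]; simp

theorem isNew_eq (x : ℕ) (env : List ℕ) : isNew x env = decide (x ∉ env) := by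
  induction env with
  | nil => simp [isNew]
  | cons y ys ih =>
    show (@Bool.rec (fun _ => Bool) (isNew x ys) false (Nat.beq x y)) = _
    rw [iteB_eq, ih]
    by_cases h : x = y <;> simp [Nat.beq_eq, h]

theorem mn_eq (a b : ℕ) : mn a b = min a b := by
  unfold mn
  rw [iteB_eq]
  by_cases h : a ≤ b
  · simp [Nat.ble_eq, h]
  · simp [Nat.ble_eq, h]; omega

theorem mx_eq (a b : ℕ) : mx a b = max a b := by
  unfold mx
  rw [iteB_eq]
  by_cases h : a ≤ b
  · simp [Nat.ble_eq, h]
  · simp [Nat.ble_eq, h]; omega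

section walk
variable (b : ℕ)

theorem walk_e (env r : List ℕ) : walk b .e env r = 11699 := rfl
theorem walk_d (k v : ℕ) (t : Tr) (env r : List ℕ) : walk b (.d k v t) env r =
    if env[k]? = some b then min v (walk b t env r) else walk b t env r := by
  show (@Bool.rec (fun _ => ℕ) (walk b t env r) (mn v (walk b t env r)) (isAt b k env)) = _
  rw [iteB_eq, isAt_eq, mn_eq]; simp
theorem walk_u (v : ℕ) (t : Tr) (env r : List ℕ) : walk b (.u v t) env r =
    if b ∉ env then min v (walk b t env r) else walk b t env r := by
  show (@Bool.rec (fun _ => ℕ) (walk b t env r) (mn v (walk b t env r)) (isNew b env)) = _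
  rw [iteB_eq, isNew_eq, mn_eq]; simp only [decide_eq_true_eq]
theorem walk_o_nil (k : ℕ) (s t : Tr) (env : List ℕ) : walk b (.o k s t) env [] = 11699 := rfl
theorem walk_o_cons (k : ℕ) (s t : Tr) (env : List ℕ) (x : ℕ) (r : List ℕ) :
    walk b (.o k s t) env (x :: r) =
    if env[k]? = some x then walk b s env r else walk b t env (x :: r) := by
  show (@Bool.rec (fun _ => ℕ) (walk b t env (x :: r)) (walk b s env r) (isAt x k env)) = _
  rw [iteB_eq, isAt_eq]; simp
theorem walk_w_nil (s : Tr) (env : List ℕ) : walk b (.w s) env [] = 11699 := rfl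
theorem walk_w_cons (s : Tr) (env : List ℕ) (x : ℕ) (r : List ℕ) :
    walk b (.w s) env (x :: r) =
    if x ∉ env then walk b s (x :: env) r else 11699 := by
  show (@Bool.rec (fun _ => ℕ) 11699 (walk b s (x :: env) r) (isNew x env)) = _
  rw [iteB_eq, isNew_eq]; simp only [decide_eq_true_eq]

theorem walk_le (t : Tr) (env r : List ℕ) : walk b t env r ≤ 11699 := by
  induction t generalizing env r with
  | e => simp [walk_e]
  | d k v t ih => rw [walk_d]; have := ih env r; split <;> omega
  | u v t ih => rw [walk_u]; have := ih env r; split <;> omega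
  | o k s t ihs iht =>
    cases r with
    | nil => simp [walk_o_nil]
    | cons x r => rw [walk_o_cons]; split; exacts [ihs _ _, iht _ _]
  | w s ih =>
    cases r with
    | nil => simp [walk_w_nil]
    | cons x r => rw [walk_w_cons]; split; exacts [ih _ _, le_rfl]

/-- All the caps are at least `6806`. -/
def okT : Tr → Bool
  | .e => true
  | .d _ v t => Nat.ble 6806 v && okT t
  | .u v t => Nat.ble 6806 v && okT t
  | .o _ s t => okT s && okT t
  | .w s => okT s

theorem okT_table : okT Tr.table = true := by decide +kernel

theorem walk_ge (t : Tr) (h : okT t = true) (env r : List ℕ) : 6806 ≤ walk b t env r := by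
  induction t generalizing env r with
  | e => simp [walk_e]
  | d k v t ih =>
    simp only [okT, Bool.and_eq_true, Nat.ble_eq] at h
    rw [walk_d]; have := ih h.2 env r; split <;> omega
  | u v t ih =>
    simp only [okT, Bool.and_eq_true, Nat.ble_eq] at h
    rw [walk_u]; have := ih h.2 env r; split <;> omega
  | o k s t ihs iht =>
    simp only [okT, Bool.and_eq_true] at h
    cases r with
    | nil => simp [walk_o_nil]
    | cons x r => rw [walk_o_cons]; split; exacts [ihs h.1 _ _, iht h.2 _ _]
  | w s ih =>
    simp only [okT] at h
    cases r with
    | nil => simp [walk_w_nil]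
    | cons x r => rw [walk_w_cons]; split; exacts [ih h _ _, by norm_num]

theorem walk_append (t : Tr) (env r s : List ℕ) :
    walk b t env (r ++ s) ≤ walk b t env r := by
  induction t generalizing env r with
  | e => simp [walk_e]
  | d k v t ih => rw [walk_d, walk_d]; have := ih env r; split <;> omega
  | u v t ih => rw [walk_u, walk_u]; have := ih env r; split <;> omega
  | o k s t ihs iht =>
    cases r with
    | nil => rw [walk_o_nil]; exact walk_le _ _ _ _
    | cons x r =>
      rw [List.cons_append, walk_o_cons, walk_o_cons]; split; exacts [ihs _ _, iht _ (x :: r)]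
  | w s ih =>
    cases r with
    | nil => rw [walk_w_nil]; exact walk_le _ _ _ _
    | cons x r => rw [List.cons_append, walk_w_cons, walk_w_cons]; split; exacts [ih _ _, le_rfl]

theorem walk_of_clean (t : Tr) (env r : List ℕ) (h : clean t env r = true) :
    walk b t env r = 11699 := by
  induction t generalizing env r with
  | e => rfl
  | d k v t ih => exact absurd h (by simp [clean])
  | u v t ih => exact absurd h (by simp [clean])
  | o k s t ihs iht =>
    cases r with
    | nil => rfl
    | cons x r =>
      have h' : (@Bool.rec (fun _ => Bool) (clean t env (x :: r)) (clean s env r)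
        (isAt x k env)) = true := h
      rw [iteB_eq, isAt_eq] at h'
      rw [walk_o_cons]
      split_ifs at h' ⊢ with h1 h2 h2
      · exact ihs _ _ h'
      · simp_all
      · simp_all
      · exact iht _ _ h'
  | w s ih =>
    cases r with
    | nil => rfl
    | cons x r =>
      have h' : (@Bool.rec (fun _ => Bool) true (clean s (x :: env) r)
        (isNew x env)) = true := h
      rw [iteB_eq, isNew_eq] at h'
      rw [walk_w_cons]
      by_cases hx : x ∈ env
      · rw [if_neg (by simpa using hx)]
      · rw [if_pos hx]
        rw [if_pos (by simpa using hx)] at h'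
        exact ih _ _ h'

end walk

theorem walk_map {α : Type} {φ ψ : α → ℕ} (hφ : φ.Injective) (hψ : ψ.Injective) (b : α)
    (t : Tr) (env r : List α) :
    walk (φ b) t (env.map φ) (r.map φ) = walk (ψ b) t (env.map ψ) (r.map ψ) := by
  have key : ∀ {θ : α → ℕ} (_ : θ.Injective) (env : List α) (k : ℕ) (x : α),
      ((env.map θ)[k]? = some (θ x)) ↔ env[k]? = some x := by
    intro θ hθ env k x
    rw [List.getElem?_map]
    cases env[k]? <;> simp [hθ.eq_iff]
  have key2 : ∀ {θ : α → ℕ} (_ : θ.Injective) (env : List α) (x : α),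
      (θ x ∉ env.map θ) ↔ x ∉ env := by
    intro θ hθ env x
    rw [List.mem_map_of_injective hθ]
  induction t generalizing env r with
  | e => rfl
  | d k v t ih => simp only [walk_d, key hφ, key hψ, ih]
  | u v t ih => simp only [walk_u, key2 hφ, key2 hψ, ih]
  | o k s t ihs iht =>
    cases r with
    | nil => rfl
    | cons x r =>
      have := iht env (x :: r)
      simp only [List.map_cons] at this ⊢
      simp only [walk_o_cons, key hφ, key hψ, ihs, this]
  | w s ih =>
    cases r with
    | nil => rfl
    | cons x r =>
      have := ih (x :: env) r
      simp only [List.map_cons] at this ⊢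
      simp only [walk_w_cons, key2 hφ, key2 hψ, this]

theorem mtc_map {α : Type} {φ : α → ℕ} (hφ : φ.Injective) (n : ℕ) (r s : List α) :
    mtc n (r.map φ) (s.map φ) = true ↔ ∃ p : List α, p.length = n ∧ p <+: r ∧ p <+: s := by
  induction n generalizing r s with
  | zero => exact ⟨fun _ => ⟨[], by simp⟩, fun _ => rfl⟩
  | succ n ih =>
    cases r with
    | nil =>
      constructor
      · intro h; exact absurd h (by simp [mtc])
      · rintro ⟨p, h1, h2, -⟩; simp_all
    | cons x r =>
      cases s with
      | nil =>
        constructor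
        · intro h; exact absurd h (by simp [mtc])
        · rintro ⟨p, h1, -, h2⟩; simp_all
      | cons y s =>
        show (@Bool.rec (fun _ => Bool) false (mtc n (r.map φ) (s.map φ))
          (Nat.beq (φ x) (φ y))) = true ↔ _
        rw [iteB_eq]
        constructor
        · intro h
          split_ifs at h with h1
          rw [Nat.beq_eq] at h1
          obtain rfl := hφ h1
          obtain ⟨p, hp, h2, h3⟩ := (ih r s).1 h
          exact ⟨x :: p, by simp [hp], by simpa using h2, by simpa using h3⟩
        · rintro ⟨p, hp, h2, h3⟩
          cases p with
          | nil => simp at hp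
          | cons z p =>
            rw [List.cons_prefix_cons] at h2 h3
            obtain ⟨rfl, h2⟩ := h2
            obtain ⟨rfl, h3⟩ := h3
            rw [if_pos (by simp [Nat.beq_eq])]
            exact (ih r s).2 ⟨p, by simpa using hp, h2, h3⟩

theorem mem_eq (b m : ℕ) : mem b m = m.testBit b := by
  unfold mem Nat.testBit
  show Nat.beq (1 &&& (m >>> b)) 1 = _
  rw [Bool.eq_iff_iff, Nat.beq_eq, Nat.and_comm, Nat.and_one_is_mod]
  simp [Nat.and_comm, Nat.and_one_is_mod]

theorem mem_bgo {α : Type} {φ : α → ℕ} (hφ : φ.Injective) (b : α) (ns : List ℕ)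
    (r s : List α) :
    mem (φ b) (bgo ns (r.map φ) (s.map φ)) = true ↔
      ∃ (i n : ℕ) (p : List α), ns[i]? = some n ∧ s[i]? = some b ∧ p.length = n ∧ p <+: r ∧
        p <+: s.drop (i + 1) := by
  induction ns generalizing s with
  | nil =>
    show mem (φ b) 0 = true ↔ _
    simp [mem_eq]
  | cons n ns ih =>
    cases s with
    | nil =>
      show mem (φ b) 0 = true ↔ _
      simp [mem_eq]
    | cons y s =>
      have hstep : (∃ (i n' : ℕ) (p : List α), (n :: ns)[i]? = some n' ∧
          (y :: s)[i]? = some b ∧ p.length = n' ∧ p <+: r ∧ p <+: (y :: s).drop (i + 1)) ↔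
          (y = b ∧ ∃ p : List α, p.length = n ∧ p <+: r ∧ p <+: s) ∨
          ∃ (i n : ℕ) (p : List α), ns[i]? = some n ∧ s[i]? = some b ∧ p.length = n ∧
            p <+: r ∧ p <+: s.drop (i + 1) := by
        constructor
        · rintro ⟨i, n', p, h1, h2, h3, h4, h5⟩
          cases i with
          | zero =>
            simp only [List.getElem?_cons_zero, Option.some.injEq] at h1 h2
            subst h1
            exact Or.inl ⟨h2, p, h3, h4, by simpa using h5⟩
          | succ i => exact Or.inr ⟨i, n', p, by simpa using h1, by simpa using h2, h3, h4,
              by simpa using h5⟩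
        · rintro (⟨rfl, p, h3, h4, h5⟩ | ⟨i, n', p, h1, h2, h3, h4, h5⟩)
          · exact ⟨0, n, p, by simp, by simp, h3, h4, by simpa using h5⟩
          · exact ⟨i + 1, n', p, by simpa using h1, by simpa using h2, h3, h4,
              by simpa using h5⟩
      rw [hstep, ← mtc_map hφ, ← ih s]
      show mem (φ b) (@Bool.rec (fun _ => ℕ) (bgo ns (r.map φ) (s.map φ))
        (1 <<< φ y ||| bgo ns (r.map φ) (s.map φ)) (mtc n (r.map φ) (s.map φ))) = true ↔ _
      rw [iteB_eq]
      split_ifs with h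
      · rw [mem_eq, Nat.testBit_or, mem_eq, Nat.one_shiftLeft, Nat.testBit_two_pow, Bool.or_eq_true]
        simp [h, hφ.eq_iff]
      · simp [h]

theorem mem_bm {α : Type} {φ : α → ℕ} (hφ : φ.Injective) (b : α) (r : List α) :
    mem (φ b) (bm (r.map φ)) = true ↔
      ∃ (i : ℕ) (p : List α), i < 8 ∧ r[i]? = some b ∧ p.length = i - 1 ∧ p <+: r ∧
        p <+: r.drop (i + 1) := by
  unfold bm
  rw [mem_bgo hφ]
  constructor
  · rintro ⟨i, n, p, h1, h2, h3, h4⟩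
    have hi : i < 8 := by
      have := (List.getElem?_eq_some_iff.1 h1).1
      simpa using this
    refine ⟨i, p, hi, h2, ?_, h4⟩
    interval_cases i <;> simp at h1 <;> omega
  · rintro ⟨i, p, hi, h2, h3, h4⟩
    refine ⟨i, i - 1, p, ?_, h2, h3, h4⟩
    interval_cases i <;> rfl

theorem mem_em {α : Type} {φ : α → ℕ} (hφ : φ.Injective) (b : α) (r : List α)
    (h : mem (φ b) (em (r.map φ)) = true) :
      ∃ (i : ℕ) (p : List α), i < 8 ∧ r[i]? = some b ∧ p.length = i ∧ p <+: r ∧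
        p <+: r.drop (i + 1) := by
  unfold em at h
  rw [mem_bgo hφ] at h
  obtain ⟨i, n, p, h1, h2, h3, h4⟩ := h
  have hi : i < 8 := by
    have := (List.getElem?_eq_some_iff.1 h1).1
    simpa using this
  refine ⟨i, p, hi, h2, ?_, h4⟩
  interval_cases i <;> simp at h1 <;> omega

/-! ### The weight -/

theorem wt_eq (b : ℕ) (r : List ℕ) :
    wt b r = if mem b (bm r) = true then 0 else pw b r := iteB_eq _ _ _

theorem pw_of_cl (b : ℕ) (r : List ℕ) (h : cl r = true) : pw b r = 11699 := by
  match r, h with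
  | [], _ => rfl
  | [_], _ => rfl
  | x :: y :: r, h => exact walk_of_clean b Tr.table [y, x] r h

theorem wt0_eq (b : ℕ) (r : List ℕ) (h : cl r = true) : wt0 b r = wt b r := by
  rw [wt_eq, pw_of_cl b r h]; exact iteB_eq _ _ _

theorem pw_le (b : ℕ) (r : List ℕ) : pw b r ≤ 11699 := by
  match r with
  | [] => exact le_rfl
  | [_] => exact le_rfl
  | x :: y :: r => exact walk_le b Tr.table [y, x] r

theorem pw_ge (b : ℕ) (r : List ℕ) : 6806 ≤ pw b r := by
  match r with
  | [] => show 6806 ≤ 11699; norm_num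
  | [_] => show 6806 ≤ 11699; norm_num
  | x :: y :: r => exact walk_ge b Tr.table okT_table [y, x] r

theorem pw_append (b : ℕ) (r s : List ℕ) : pw b (r ++ s) ≤ pw b r := by
  match r with
  | [] => exact pw_le _ _
  | [_] => exact pw_le _ _
  | x :: y :: r => exact walk_append b Tr.table [y, x] r s

theorem pw_map {α : Type} {φ ψ : α → ℕ} (hφ : φ.Injective) (hψ : ψ.Injective) (b : α)
    (r : List α) : pw (φ b) (r.map φ) = pw (ψ b) (r.map ψ) := by
  match r with
  | [] => rfl
  | [_] => rfl
  | x :: y :: r => exact walk_map hφ hψ b Tr.table [y, x] r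

/-- The weight of a reversed word without squares. -/
noncomputable def val : List ℕ → ℕ
  | [] => 11699
  | b :: r => wt b r

theorem val_range (r : List ℕ) : val r ≤ 11699 ∧ (val r = 0 ∨ 6806 ≤ val r) := by
  cases r with
  | nil => simp [val]
  | cons b r =>
    simp only [val, wt_eq]
    have := pw_le b r
    have := pw_ge b r
    split <;> omega

theorem val_append {α : Type} {φ : α → ℕ} (hφ : φ.Injective) (r s : List α) :
    val ((r ++ s).map φ) ≤ val (r.map φ) := by
  cases r with
  | nil => exact (val_range _).1
  | cons b r =>
    simp only [List.cons_append, List.map_cons, val, wt_eq]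
    split_ifs with h1 h2 h2
    · simp
    · simp
    · exfalso
      apply h1
      rw [mem_bm hφ] at h2 ⊢
      obtain ⟨i, p, hi, h3, h4, h5, h6⟩ := h2
      have hl := (List.getElem?_eq_some_iff.1 h3).1
      refine ⟨i, p, hi, ?_, h4, h5.trans (List.prefix_append _ _), ?_⟩
      · rw [List.getElem?_append_left hl]; exact h3
      · rw [List.drop_append_of_le_length (by omega)]
        exact h6.trans (List.prefix_append _ _)
    · rw [List.map_append]; exact pw_append _ _ _

theorem val_map {α : Type} {φ ψ : α → ℕ} (hφ : φ.Injective) (hψ : ψ.Injective)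
    (r : List α) : val (r.map φ) = val (r.map ψ) := by
  cases r with
  | nil => rfl
  | cons b r =>
    simp only [List.map_cons, val, wt_eq, mem_bm hφ, mem_bm hψ, pw_map hφ hψ]

theorem chkA_iff {g : ℕ} {r : List ℕ} (h : chkA g r = true) :
    27195 * g ≤ 9091 * (wt 0 r + (wt 1 r + (wt 2 r + (wt 3 r + (wt 4 r + wt 5 r))))) := by
  have h' : 27195 * g ≤ 9091 * (@Bool.rec (fun _ => ℕ) (sm wt r) (sm wt0 r) (cl r)) :=
    Nat.le_of_ble_eq_true h
  have e : (@Bool.rec (fun _ => ℕ) (sm wt r) (sm wt0 r) (cl r)) = sm wt r := by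
    rw [iteB_eq]
    split_ifs with hc
    · simp only [sm, wt0_eq _ _ hc]
    · rfl
  rw [e] at h'
  exact h'

theorem chkC_iff {g : ℕ} {r : List ℕ} (h : chkC g r = true) (hg : g ≠ 0) :
    chkA g r = true ∧ ∀ a : Fin 6, r.head? ≠ some a.val → chkA g (a.val :: r) = true := by
  unfold chkC at h
  have hand : ∀ c x : Bool, (@Bool.rec (fun _ => Bool) false x c) = (c && x) := by
    intro c x; cases c <;> rfl
  simp only [hand] at h
  rw [iteB_eq, if_neg (by rw [Nat.beq_eq]; exact hg)] at h
  simp only [Bool.and_eq_true] at h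
  obtain ⟨h, h0, h1, h2, h3, h4, h5⟩ := h
  have hB : ∀ a : ℕ, chkB g r a = true → r.head? ≠ some a → chkA g (a :: r) = true := by
    intro a ha hne
    unfold chkB at ha
    rw [iteB_eq, if_neg] at ha
    · exact ha
    · intro hm
      have := (mtc_map (φ := fun n : ℕ => n) (fun _ _ h => h) 1 (a :: r) r).1 (by simpa using hm)
      obtain ⟨p, hp, hp1, hp2⟩ := this
      match p, hp with
      | [x], _ =>
        rw [List.cons_prefix_cons] at hp1
        obtain ⟨t, rfl⟩ := hp2
        apply hne
        simp [hp1.1]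
  refine ⟨h, fun a => ?_⟩
  fin_cases a
  exacts [hB 0 h0, hB 1 h1, hB 2 h2, hB 3 h3, hB 4 h4, hB 5 h5]

/-! ### Soundness of the search -/

/-- A square was met. -/
def SqN : List ℕ → Prop
  | [] => False
  | b :: r => mem b (em r) = true ∨ SqN r

theorem SqN_append (l r : List ℕ) (h : SqN r) : SqN (l ++ r) := by
  induction l with
  | nil => exact h
  | cons x l ih => exact Or.inr ih

/-- The inequalities for a reversed word. -/
def Good (r : List ℕ) : Prop := chkC (val r) r = true

theorem ext_sound (cs r : List ℕ) (h : ext cs r = true) (p : List ℕ) (hp : p <+: cs)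
    (hne : p ≠ []) : SqN (p.reverse ++ r) ∨ Good (p.reverse ++ r) := by
  induction cs generalizing r p with
  | nil => simp_all
  | cons c cs ih =>
    cases p with
    | nil => exact absurd rfl hne
    | cons x p =>
      rw [List.cons_prefix_cons] at hp
      obtain ⟨rfl, hp⟩ := hp
      have h' : (@Bool.rec (fun _ => Bool) (@Bool.rec (fun _ => Bool) false
        (ext cs (x :: r)) (chk x r)) true (mem x (em r))) = true := h
      rw [iteB_eq, iteB_eq] at h'
      rw [List.reverse_cons, List.append_assoc, List.singleton_append]
      split_ifs at h' with h1 h2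
      · exact Or.inl (SqN_append _ _ (Or.inl h1))
      · cases p with
        | nil => exact Or.inr h2
        | cons y p => exact ih _ h' _ hp (by simp)

theorem rv_eq (r s : List ℕ) : rv r s = r.reverse ++ s := by
  induction r generalizing s with
  | nil => rfl
  | cons x r ih =>
    show rv r (x :: s) = _
    rw [ih]; simp

/-- Restricted growth words. -/
def RG (m : ℕ) : List ℕ → Prop
  | [] => True
  | c :: l => c ≤ m ∧ c ≤ 5 ∧ RG (max m (c + 1)) l

theorem RG_prefix {m : ℕ} {l l' : List ℕ} (h : RG m l') (hp : l <+: l') : RG m l := by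
  induction l' generalizing m l with
  | nil => simp_all
  | cons c l' ih =>
    cases l with
    | nil => trivial
    | cons x l =>
      rw [List.cons_prefix_cons] at hp
      obtain ⟨rfl, hp⟩ := hp
      exact ⟨h.1, h.2.1, ih h.2.2 hp⟩

theorem chkE_sound {b : ℕ} {r : List ℕ} (h : chkE b r = true) :
    Good (b :: r) ∧ ∀ p, p <+: (b :: r).reverse →
      SqN (p.reverse ++ (b :: r)) ∨ Good (p.reverse ++ (b :: r)) := by
  unfold chkE at h
  rw [iteB_eq] at h
  split_ifs at h with h1
  rw [rv_eq, List.append_nil] at h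
  refine ⟨h1, fun p hp => ?_⟩
  by_cases hn : p = []
  · subst hn; exact Or.inr h1
  · exact ext_sound _ _ h p hp hn

theorem step_sound {f : ℕ → List ℕ → ℕ → Bool} {r : List ℕ} {m c m' : ℕ}
    (h : step f r m c m' = true) (hc : c ≤ m) : mem c (em r) = true ∨ f c r m' = true := by
  unfold step at h
  rw [iteB_eq, if_pos (by simpa [Nat.ble_eq] using hc), iteB_eq] at h
  split_ifs at h with h1
  · exact Or.inl h1
  · exact Or.inr h

theorem dfs_sound (n b : ℕ) (r : List ℕ) (m : ℕ) (h : dfs n b r m = true) (l : List ℕ)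
    (hl : l.length ≤ n) (hg : RG m l) : SqN (l.reverse ++ b :: r) ∨
      ∃ b' r', l.reverse ++ b :: r = b' :: r' ∧ chkE b' r' = true := by
  induction n generalizing b r m l with
  | zero =>
    obtain rfl : l = [] := List.length_eq_zero_iff.1 (by omega)
    exact Or.inr ⟨b, r, rfl, h⟩
  | succ n ih =>
    have hand : ∀ c x : Bool, (@Bool.rec (fun _ => Bool) false x c) = (c && x) := by
      intro c x; cases c <;> rfl
    have h' : (@Bool.rec (fun _ => Bool) false (@Bool.rec (fun _ => Bool) false
      (@Bool.rec (fun _ => Bool) false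
      (@Bool.rec (fun _ => Bool) false
      (@Bool.rec (fun _ => Bool) false
      (@Bool.rec (fun _ => Bool) false (step (dfs n) (b :: r) m 5 (mx m 6))
      (step (dfs n) (b :: r) m 4 (mx m 5)))
      (step (dfs n) (b :: r) m 3 (mx m 4)))
      (step (dfs n) (b :: r) m 2 (mx m 3)))
      (step (dfs n) (b :: r) m 1 (mx m 2)))
      (step (dfs n) (b :: r) m 0 (mx m 1))) (chkE b r)) = true := h
    simp only [hand, Bool.and_eq_true] at h'
    obtain ⟨h, h0, h1, h2, h3, h4, h5⟩ := h'
    cases l with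
    | nil => exact Or.inr ⟨b, r, rfl, h⟩
    | cons c l =>
      obtain ⟨hc, hc5, hg⟩ := hg
      have hs : step (dfs n) (b :: r) m c (mx m (c + 1)) = true := by
        interval_cases c
        exacts [h0, h1, h2, h3, h4, h5]
      rw [List.reverse_cons, List.append_assoc, List.singleton_append]
      rcases step_sound hs hc with h6 | h6
      · exact Or.inl (SqN_append _ _ (Or.inl h6))
      · rw [mx_eq] at h6
        exact ih _ _ _ h6 l (by simpa using hl) hg

theorem search (l : List ℕ) (hl : l.length ≤ 8) (hg : RG 0 l) (p : List ℕ) (hp : p <+: l) :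
    SqN (p.reverse ++ l.reverse) ∨ Good (p.reverse ++ l.reverse) := by
  cases l with
  | nil =>
    rw [List.prefix_nil] at hp
    subst hp
    exact Or.inr chk_nil
  | cons c l =>
    obtain ⟨hc, -, hg⟩ := hg
    obtain rfl : c = 0 := by omega
    rcases dfs_sound 7 0 [] 1 dfs_0 l (by simp only [List.length_cons] at hl; omega) hg with h | ⟨b', r', h, h'⟩
    · rw [List.reverse_cons]
      exact Or.inl (SqN_append _ _ h)
    · rw [List.reverse_cons, h]
      apply (chkE_sound h').2
      rw [← h]
      simpa using hp

/-! ### Words over `Fin 6` -/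

theorem val_inj : Function.Injective (Fin.val : Fin 6 → ℕ) := Fin.val_injective

/-- The reversed word as a list of numbers. -/
def R (w : List (Fin 6)) : List ℕ := w.reverse.map Fin.val

theorem R_concat (w : List (Fin 6)) (b : Fin 6) : R (w ++ [b]) = b.val :: R w := by simp [R]

theorem hasSq_infix {v w : List (Fin 6)} (h : HasSq 1 8 v) (hv : v <:+: w) : HasSq 1 8 w := by
  obtain ⟨u, h1, h2, h3⟩ := h
  exact ⟨u, h1, h2, h3.trans hv⟩

theorem hasSq_map {v : List (Fin 6)} (π : Equiv.Perm (Fin 6)) (h : HasSq 1 8 v) :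
    HasSq 1 8 (v.map π) := by
  obtain ⟨u, h1, h2, h3⟩ := h
  exact ⟨u.map π, by simpa using h1, by simpa using h2, by
    rw [← List.map_append]; exact h3.map π⟩

theorem hasSq_of_SqN (v : List (Fin 6)) (h : SqN (R v)) : HasSq 1 8 v := by
  induction v using List.reverseRecOn with
  | nil => exact absurd h (by simp [R, SqN])
  | append_singleton w b ih =>
    rw [R_concat] at h
    rcases h with h | h
    · obtain ⟨i, p, hi, h1, h2, ⟨t, ht⟩, ⟨t', ht'⟩⟩ := mem_em val_inj b w.reverse h
      have hl := (List.getElem?_eq_some_iff.1 h1)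
      have e : w.reverse = p ++ (b :: (p ++ t')) := by
        conv_lhs => rw [← List.take_append_drop i w.reverse, List.drop_eq_getElem_cons hl.1,
          hl.2, ← ht']
        congr 1
        rw [← ht, ← h2]; simp
      have e' : w ++ [b] = (t'.reverse ++ ((b :: p).reverse ++ (b :: p).reverse)) := by
        have := congrArg List.reverse e
        rw [List.reverse_reverse] at this
        rw [this]; simp
      refine ⟨(b :: p).reverse, by simp, by simp; omega, ?_⟩
      rw [e']
      exact (List.suffix_append _ _).isInfix
    · exact hasSq_infix (ih h) (List.prefix_append _ _).isInfix

/-- A word ending with a square. -/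
theorem sq_suffix {w u : List (Fin 6)} {b : Fin 6} (hu : 1 ≤ u.length)
    (h : u ++ u <:+ w ++ [b]) : ∃ p t : List (Fin 6), p.length + 1 = u.length ∧
      w.reverse = p ++ b :: (p ++ t) := by
  have h' := List.reverse_prefix.2 h
  rw [List.reverse_append, List.reverse_append] at h'
  cases hr : u.reverse with
  | nil => simp_all
  | cons c p =>
    rw [hr] at h'
    simp only [List.reverse_cons, List.reverse_nil, List.nil_append, List.cons_append,
      List.cons_prefix_cons] at h'
    obtain ⟨rfl, t, ht⟩ := h'
    refine ⟨p, t, ?_, ?_⟩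
    · have := congrArg List.length hr
      simpa using this.symm
    · rw [← ht]; simp

theorem mem_of_sq {w u : List (Fin 6)} {b : Fin 6} (hu : 1 ≤ u.length) (hu8 : u.length ≤ 8)
    (h : u ++ u <:+ w ++ [b]) : mem b.val (bm (R w)) = true := by
  obtain ⟨p, t, h1, h2⟩ := sq_suffix hu h
  rw [R, mem_bm val_inj, h2]
  refine ⟨p.length, p.take (p.length - 1), by omega, by simp, by simp,
    (List.take_prefix _ _).trans (List.prefix_append _ _), ?_⟩
  have : List.drop (p.length + 1) (p ++ b :: (p ++ t)) = p ++ t := by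
    rw [← List.drop_drop]; simp
  rw [this]
  exact (List.take_prefix _ _).trans (List.prefix_append _ _)

theorem hasSq_concat {w : List (Fin 6)} {b : Fin 6} (h : HasSq 1 8 (w ++ [b])) :
    HasSq 1 8 w ∨ ∃ u : List (Fin 6), 1 ≤ u.length ∧ u.length ≤ 8 ∧ u ++ u <:+ w ++ [b] := by
  obtain ⟨u, h1, h2, h3⟩ := h
  rw [List.infix_concat_iff] at h3
  rcases h3 with h3 | h3
  · exact Or.inr ⟨u, h1, h2, h3⟩
  · exact Or.inl ⟨u, h1, h2, h3⟩

/-- Adding an arbitrary letter distinct from the last one to a word of nonzero weight. -/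
theorem no_sq_step {v : List (Fin 6)} {a : Fin 6} (hv : ¬ HasSq 1 8 v) (hw : val (R v) ≠ 0)
    (ha : v = [] ∨ some a ≠ v.getLast?) : ¬ HasSq 1 8 (v ++ [a]) := by
  intro h
  rcases hasSq_concat h with h | ⟨u, h1, h2, h3⟩
  · exact hv h
  · obtain ⟨p, t, h4, h5⟩ := sq_suffix h1 h3
    rw [← List.head?_reverse] at ha
    cases p with
    | nil =>
      rw [h5] at ha
      rcases ha with rfl | ha
      · simp at h5
      · simp at ha
    | cons c p =>
      apply hw
      unfold R
      rw [h5]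
      show wt c.val (List.map Fin.val (p ++ a :: (c :: p ++ t))) = 0
      rw [wt_eq, if_pos]
      rw [mem_bm val_inj]
      simp only [List.length_cons] at h4
      refine ⟨p.length + 1, p, by omega, by simp, by simp, List.prefix_append _ _, ?_⟩
      have : List.drop (p.length + 1 + 1) (p ++ a :: (c :: p ++ t)) = p ++ t := by
        rw [Nat.add_assoc, ← List.drop_drop]; simp
      rw [this]
      exact List.prefix_append _ _

/-- The coefficients. -/
noncomputable def C (w : List (Fin 6)) : ℝ := if HasSq 1 8 w then 0 else (val (R w) : ℝ)

theorem C_nonneg (w : List (Fin 6)) : 0 ≤ C w := by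
  unfold C; split_ifs
  · exact le_rfl
  · positivity

theorem C_anti {s w : List (Fin 6)} (π : Equiv.Perm (Fin 6)) (h : s.map π <:+ w) :
    C w ≤ C s := by
  by_cases hw : HasSq 1 8 w
  · have : C w = 0 := by simp [C, hw]
    rw [this]; exact C_nonneg s
  · have hs : ¬ HasSq 1 8 s := fun hs => hw (hasSq_infix (hasSq_map π hs) h.isInfix)
    simp only [C, hw, hs, if_false, Nat.cast_le]
    obtain ⟨t, rfl⟩ := h
    have e : R s = (s.map π).reverse.map (fun x => (π.symm x).val) := by
      simp [R, List.map_reverse, Function.comp_def]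
    rw [e, val_map (φ := fun x : Fin 6 => (π.symm x).val) (ψ := Fin.val)
      (val_inj.comp π.symm.injective) val_inj]
    unfold R
    rw [List.reverse_append]
    exact val_append val_inj _ _

theorem lamOf_spec (w : List (Fin 6)) :
    ∃ π : Equiv.Perm (Fin 6), (lamOf 1 8 w).map π <:+ w := by
  unfold lamOf
  split_ifs with h
  · exact h.choose_spec.1.2
  · exact ⟨1, by simp⟩

theorem wt_le_term (w : List (Fin 6)) (b : Fin 6) (hw : ¬ HasSq 1 8 w) :
    (wt b.val (R w) : ℝ) ≤
      if ¬ HasSq 1 8 (w ++ [b]) then C (lamOf 1 8 (w ++ [b])) else 0 := by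
  split_ifs with h
  · rcases hasSq_concat h with h | ⟨u, h1, h2, h3⟩
    · exact absurd h hw
    · rw [wt_eq, if_pos (mem_of_sq h1 h2 h3)]; simp
  · obtain ⟨π, hπ⟩ := lamOf_spec (w ++ [b])
    refine le_trans ?_ (C_anti π hπ)
    rw [C, if_neg h, R_concat]
    exact le_rfl

theorem sum_bound (w : List (Fin 6)) (hw : ¬ HasSq 1 8 w) (g : ℕ)
    (h : chkA g (R w) = true) : (27195 / 9091 : ℝ) * g ≤
      ∑ b : Fin 6, if ¬ HasSq 1 8 (w ++ [b]) then C (lamOf 1 8 (w ++ [b])) else 0 := by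
  refine le_trans ?_ (Finset.sum_le_sum fun b _ => wt_le_term w b hw)
  have h' := chkA_iff h
  have h'' : (27195 : ℝ) * g ≤ 9091 * (wt 0 (R w) + (wt 1 (R w) + (wt 2 (R w) + (wt 3 (R w) +
      (wt 4 (R w) + wt 5 (R w)))))) := by exact_mod_cast h'
  rw [Fin.sum_univ_six]
  have e3 : ((3 : Fin 6) : ℕ) = 3 := rfl
  have e4 : ((4 : Fin 6) : ℕ) = 4 := rfl
  have e5 : ((5 : Fin 6) : ℕ) = 5 := rfl
  have e2 : ((2 : Fin 6) : ℕ) = 2 := rfl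
  have e1 : ((1 : Fin 6) : ℕ) = 1 := rfl
  have e0 : ((0 : Fin 6) : ℕ) = 0 := rfl
  rw [e0, e1, e2, e3, e4, e5]
  linarith

theorem RG_of_normalized (y x : List (Fin 6)) (m : ℕ) (h : Normalized (x ++ y))
    (hx : ∀ d : Fin 6, d ∈ x ↔ d.val < m) : RG m (y.map Fin.val) := by
  induction y generalizing x m with
  | nil => trivial
  | cons c y ih =>
    have hc : c.val ≤ m := by
      by_contra hlt
      push Not at hlt
      have hm : m < 6 := by omega
      have hcx : c ∉ x := by rw [hx]; omega
      have hdx : (⟨m, hm⟩ : Fin 6) ∉ x := by rw [hx]; simp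
      apply h (Equiv.swap c ⟨m, hm⟩)
      have e : x.map (Equiv.swap c ⟨m, hm⟩) = x := by
        conv_rhs => rw [← List.map_id x]
        apply List.map_congr_left
        intro z hz
        exact Equiv.swap_apply_of_ne_of_ne (fun h => hcx (h ▸ hz)) (fun h => hdx (h ▸ hz))
      rw [List.map_append, e, List.map_cons, Equiv.swap_apply_left]
      have hlt' : (⟨m, hm⟩ : Fin 6) < c := hlt
      exact List.Lex.append_left _ (List.Lex.rel hlt') x
    refine ⟨hc, by omega, ?_⟩
    apply ih (x ++ [c]) _ (by simpa using h)
    intro d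
    rw [List.mem_append, hx, List.mem_singleton]
    constructor
    · rintro (h | rfl) <;> omega
    · intro h
      by_cases hd : d.val < m
      · exact Or.inl hd
      · right; apply Fin.ext; omega

theorem good_of_lam (v : List (Fin 6)) (hv : v ∈ Lam 1 8) : HasSq 1 8 v ∨ Good (R v) := by
  obtain ⟨hn, s, ⟨⟨u, hu1, hu8, rfl⟩, -⟩, hvs, hne⟩ := hv
  have hg : RG 0 (v.map Fin.val) := RG_of_normalized v [] 0 hn (by simp)
  suffices h : SqN (R v) ∨ Good (R v) by
    rcases h with h | h
    · exact Or.inl (hasSq_of_SqN v h)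
    · exact Or.inr h
  by_cases hl : v.length ≤ 8
  · have := search (v.map Fin.val) (by simpa using hl) hg [] (by simp)
    simpa [R, List.map_reverse] using this
  · have hu : u <+: v :=
      List.prefix_of_prefix_length_le (List.prefix_append u u) hvs (by omega)
    obtain ⟨p, rfl⟩ := hu
    have hp : p <+: u := by simpa using hvs
    have := search (u.map Fin.val) (by simpa using hu8)
      (RG_prefix hg (by simp)) (p.map Fin.val) (hp.map _)
    simpa [R, List.map_reverse] using this

theorem C_cases (v : List (Fin 6)) : C v = 0 ∨ (¬ HasSq 1 8 v ∧ val (R v) ≠ 0) := by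
  by_cases h : HasSq 1 8 v
  · left; simp [C, h]
  · by_cases h' : val (R v) = 0
    · left; simp [C, h, h']
    · exact Or.inr ⟨h, h'⟩

theorem main_ineq (v : List (Fin 6)) (hv : v ∈ Lam 1 8) (a : Option (Fin 6))
    (ha : v = [] ∨ a ≠ v.getLast?) : (27195 / 9091 : ℝ) * C v ≤
      ∑ b : Fin 6, if ¬ HasSq 1 8 (v ++ a.toList ++ [b]) then
        C (lamOf 1 8 (v ++ a.toList ++ [b])) else 0 := by
  rcases C_cases v with h0 | ⟨hsq, hval⟩
  · rw [h0, mul_zero]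
    apply Finset.sum_nonneg
    intro b _
    split_ifs
    · exact le_rfl
    · exact C_nonneg _
  · have hgood : Good (R v) := (good_of_lam v hv).resolve_left hsq
    obtain ⟨hA, hB⟩ := chkC_iff hgood hval
    have hC : C v = (val (R v) : ℝ) := by rw [C, if_neg hsq]
    rw [hC]
    cases a with
    | none =>
      simp only [Option.toList_none, List.append_nil]
      exact sum_bound v hsq _ hA
    | some a =>
      simp only [Option.toList_some]
      apply sum_bound _ (no_sq_step hsq hval ha)
      rw [R_concat]
      apply hB
      rcases ha with rfl | ha
      · simp [R]
      · rw [← List.head?_reverse] at ha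
        intro hh
        apply ha
        unfold R at hh
        rw [List.head?_map] at hh
        cases hr : v.reverse.head? with
        | none => rw [hr] at hh; simp at hh
        | some c =>
          rw [hr] at hh
          simp only [Option.map_some, Option.some.injEq] at hh
          rw [Fin.ext hh]

theorem not_hasSq_zero : ¬ HasSq 1 8 ([0] : List (Fin 6)) := by
  rintro ⟨u, h1, -, h3⟩
  have := h3.length_le
  simp at this
  omega

theorem val_zero : val (R [0]) = 11699 := by
  show wt 0 [] = 11699
  decide +kernel

end SqW

/-- Over the alphabet `Fin 6` with `p = 8`, there exist nonnegative coefficients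
`(C_w)_{w ∈ Λ}` with `C_[0] > 0`, every coefficient at most `11699` and either `0` or at
least `6806`, such that for every `v ∈ Λ` and every `a` that is either the empty word or
a letter different from the last letter of `v` (any `a` when `v = ε`),
`(27195/9091)·C_v ≤ Σ_{b, vab square-free of period ≤ 8} C_{Λ(vab)}`. -/
theorem stmt_8 :
    ∃ C : List (Fin 6) → ℝ,
      (∀ v ∈ Lam 1 8, 0 ≤ C v) ∧
      0 < C [0] ∧
      (∀ v ∈ Lam 1 8, C v ≤ 11699 ∧ (C v = 0 ∨ 6806 ≤ C v)) ∧
      (∀ v ∈ Lam 1 8, ∀ a : Option (Fin 6), (v = [] ∨ a ≠ v.getLast?) →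
        (27195 / 9091 : ℝ) * C v ≤
          ∑ b : Fin 6,
            if ¬ HasSq 1 8 (v ++ a.toList ++ [b]) then
              C (lamOf 1 8 (v ++ a.toList ++ [b]))
            else 0) := by
  refine ⟨SqW.C, fun v _ => SqW.C_nonneg v, ?_, fun v _ => ?_, SqW.main_ineq⟩
  · rw [SqW.C, if_neg SqW.not_hasSq_zero, SqW.val_zero]
    norm_num
  · have h := SqW.val_range (SqW.R v)
    unfold SqW.C
    split_ifs
    · norm_num
    · exact_mod_cast h
end

section
/- Let α = 27195/9091 and γ = 11699/6806. Assume (C_w)_{w∈Λ} are nonnegative real numbers such that for every v ∈ Λ, C_v ≤ 11699, either C_v = 0 or C_v ≥ 6806, and α·C_v ≤ min_{a ∈ (A∪{ε})\{l(v)}} Σ_{b∈A, vab ∈ S^{≤p}_free} C_{Λ(vab)}. Fix any Ben strategy φ for the hard game over A, and let S_n and the weights Ŝ_n be defined from φ and (C_w) as in the context. Let β > 1 be a real number such that α − γ·β^{1−p}(β^{3+p/2} + 2β^{2+p/2} + β^{1+p/2} − β² − 1)/((1+β)(β−1)²) ≥ β. Then for all n ≥ 1, Ŝ_{n+1} ≥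 β·Ŝ_n. -/
open scoped Classical

/-- A `2⁻`-power: a word of length at least 3 that becomes a square after appending
a suitable letter. -/
def TwoMinusPower {A : Type*} (v : List A) : Prop :=
  3 ≤ v.length ∧ ∃ a : A, ∃ u : List A, u ≠ [] ∧ v ++ [a] = u ++ u

/-- `w` ends with a `2⁻`-power. -/
def EndsWithTMP {A : Type*} (w : List A) : Prop :=
  ∃ v : List A, v <:+ w ∧ TwoMinusPower v

/-- The conditions required of every word obtained just after one of Ann's moves in
the hard game over `Fin 6`: it is square-free, its weight `C_{Λ(u)}` (with `p = 8`)
is positive, and it does not end with a `2⁻`-power. -/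
def GoodH (C : List (Fin 6) → ℝ) (u : List (Fin 6)) : Prop :=
  (∀ x : List (Fin 6), x ≠ [] → ¬ (x ++ x) <:+: u) ∧
  0 < C (lamOf 1 8 u) ∧ ¬ EndsWithTMP u

/-- `PlayableH φ C n v` : `v` is playable after Ann's `n`-th move in the hard game over
`Fin 6` against Ben's strategy `φ` (where `φ w = none` means Ben skips his turn): there
is a sequence of `n` Ann moves, against Ben playing `φ`, producing `v` just after Ann's
`n`-th move, all of whose intermediate words after Ann's moves satisfy `GoodH`. -/
inductive PlayableH (φ : List (Fin 6) → Option (Fin 6)) (C : List (Fin 6) → ℝ) :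
    ℕ → List (Fin 6) → Prop
  | base (a : Fin 6) : GoodH C [a] → PlayableH φ C 1 [a]
  | step {n : ℕ} {v : List (Fin 6)} (a : Fin 6) :
      PlayableH φ C n v → GoodH C (v ++ (φ v).toList ++ [a]) →
      PlayableH φ C (n + 1) (v ++ (φ v).toList ++ [a])

/-- `Ŝ_n = Σ_{w ∈ Λ} C_w · |{u ∈ S_n : Λ(u) = w}| = Σ_{v ∈ S_n} C_{Λ(v)}`, where `S_n`
is the set of words playable after Ann's `n`-th move. -/
noncomputable def ShatH (φ : List (Fin 6) → Option (Fin 6)) (C : List (Fin 6) → ℝ)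
    (n : ℕ) : ℝ :=
  ∑ᶠ v ∈ {v : List (Fin 6) | PlayableH φ C n v}, C (lamOf 1 8 v)


abbrev Wd := List (Fin 6)

lemma isSq_map (π : Equiv.Perm (Fin 6)) {w : Wd} (h : IsSq 1 8 w) : IsSq 1 8 (w.map π) := by
  obtain ⟨u, h1, h2, rfl⟩ := h
  exact ⟨u.map π, by simpa using h1, by simpa using h2, by simp⟩

lemma map_inv_map (π : Equiv.Perm (Fin 6)) (w : Wd) : (w.map π).map (π⁻¹ : Equiv.Perm (Fin 6)) = w := by
  simp [List.map_map, Function.comp_def]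

lemma map_map_inv (π : Equiv.Perm (Fin 6)) (w : Wd) : (w.map (π⁻¹ : Equiv.Perm (Fin 6))).map π = w := by
  simp [List.map_map, Function.comp_def]

lemma hasSq_map (π : Equiv.Perm (Fin 6)) {w : Wd} (h : HasSq 1 8 w) : HasSq 1 8 (w.map π) := by
  obtain ⟨u, h1, h2, h3⟩ := h
  exact ⟨u.map π, by simpa using h1, by simpa using h2, by simpa using h3.map π⟩

lemma hasSq_map_iff (π : Equiv.Perm (Fin 6)) (w : Wd) : HasSq 1 8 (w.map π) ↔ HasSq 1 8 w :=
  ⟨fun h => by simpa [List.map_map, Function.comp_def] using hasSq_map π⁻¹ h, hasSq_map π⟩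

lemma minSq_map (π : Equiv.Perm (Fin 6)) {w : Wd} (h : MinSq 1 8 w) : MinSq 1 8 (w.map π) := by
  refine ⟨isSq_map π h.1, fun f hf hne hs => ?_⟩
  refine h.2 (f.map (π⁻¹ : Equiv.Perm (Fin 6))) ?_ ?_ (isSq_map _ hs)
  · have := hf.map (π⁻¹ : Equiv.Perm (Fin 6))
    rwa [map_inv_map] at this
  · intro h'
    apply hne
    rw [← h', map_map_inv π]

/-- every word has a normalized image -/
lemma exists_norm (w : Wd) : ∃ π : Equiv.Perm (Fin 6), Normalized (w.map π) := by
  obtain ⟨π, hπ⟩ := Finite.exists_min (fun π : Equiv.Perm (Fin 6) => w.map π)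
  refine ⟨π, fun σ hlt => ?_⟩
  have h := hπ (σ * π)
  have h2 : List.map (⇑(σ * π)) w = (w.map π).map σ := by simp [List.map_map]
  simp only [h2] at h
  exact absurd hlt (not_lt.mpr h)

lemma nil_mem_Lam : ([] : Wd) ∈ Lam 1 8 := by
  refine ⟨fun π h => by simp at h, [0, 0], ⟨⟨[0], by simp, by simp, by simp⟩, ?_⟩, by simp, by simp⟩
  rintro f hf hne ⟨u, h1, h2, rfl⟩
  apply hne
  apply hf.sublist.eq_of_length_le
  simp
  omega

lemma Lam_length {w : Wd} (h : w ∈ Lam 1 8) : w.length ≤ 16 := by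
  obtain ⟨_, s, ⟨⟨u, h1, h2, rfl⟩, _⟩, hp, _⟩ := h
  have := hp.length_le
  simp at this
  omega

/-- the predicate in the definition of lamOf -/
def LP (w v : Wd) : Prop := v ∈ Lam 1 8 ∧ ∃ π : Equiv.Perm (Fin 6), v.map π <:+ w

lemma lamOf_spec (w : Wd) : LP w (lamOf 1 8 w) ∧ ∀ v, LP w v → v.length ≤ (lamOf 1 8 w).length := by
  have h : ∃ v : Wd, LP w v ∧ ∀ v', LP w v' → v'.length ≤ v.length := by
    have h0 : LP w [] := ⟨nil_mem_Lam, 1, by simp⟩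
    by_contra hcon
    push Not at hcon
    have : ∀ k : ℕ, ∃ v, LP w v ∧ k ≤ v.length := by
      intro k
      induction k with
      | zero => exact ⟨[], h0, by simp⟩
      | succ k ih =>
        obtain ⟨v, hv, hk⟩ := ih
        obtain ⟨v', hv', hk'⟩ := hcon v hv
        exact ⟨v', hv', by omega⟩
    obtain ⟨v, hv, hk⟩ := this 17
    have := Lam_length hv.1
    omega
  have e : lamOf 1 8 w = h.choose := by
    unfold lamOf
    exact dif_pos h
  rw [e]
  exact h.choose_spec

lemma lamOf_congr {w w' : Wd} (h : ∀ v, LP w v ↔ LP w' v) : lamOf 1 8 w = lamOf 1 8 w' := by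
  have h' : LP w = LP w' := funext fun v => propext (h v)
  have e : ∀ w : Wd, lamOf 1 8 w = if h : ∃ v : Wd, LP w v ∧ ∀ v', LP w v' → v'.length ≤ v.length then h.choose else [] := fun w => rfl
  rw [e, e, h']

lemma LP_map (π : Equiv.Perm (Fin 6)) {w v : Wd} (h : LP w v) : LP (w.map π) v := by
  obtain ⟨h1, σ, hσ⟩ := h
  refine ⟨h1, π * σ, ?_⟩
  have := hσ.map π
  simpa [List.map_map] using this

lemma lamOf_map (π : Equiv.Perm (Fin 6)) (w : Wd) : lamOf 1 8 (w.map π) = lamOf 1 8 w := by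
  apply lamOf_congr
  intro v
  refine ⟨fun h => ?_, LP_map π⟩
  have := LP_map π⁻¹ h
  rwa [map_inv_map] at this

/-- proper prefixes of minimal squares that are suffixes of `v` are suffixes of the image of `Λ(v)` -/
lemma suffix_lam {v x s : Wd} (hs : MinSq 1 8 s) (hx : x <+: s) (hne : x ≠ s) (hv : x <:+ v)
    {π : Equiv.Perm (Fin 6)} (hπ : (lamOf 1 8 v).map π <:+ v) : x <:+ (lamOf 1 8 v).map π := by
  obtain ⟨σ, hσ⟩ := exists_norm x
  have hl : LP v (x.map σ) := by
    refine ⟨⟨hσ, s.map σ, minSq_map σ hs, hx.map σ, ?_⟩, σ⁻¹, by rwa [map_inv_map]⟩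
    intro h
    exact hne (List.map_injective_iff.mpr σ.injective h)
  have := (lamOf_spec v).2 _ hl
  simp only [List.length_map] at this
  exact List.suffix_of_suffix_length_le hv hπ (by simpa using this)

/-- A new short square ends in a minimal square -/
lemma exists_minSq {w : Wd} {c : Fin 6} (h : HasSq 1 8 (w ++ [c])) (hw : ¬ HasSq 1 8 w) :
    ∃ z : Wd, 1 ≤ z.length ∧ z.length ≤ 8 ∧ z ++ z <:+ w ++ [c] ∧ MinSq 1 8 (z ++ z) := by
  have key : ∀ u : Wd, 1 ≤ u.length → u.length ≤ 8 → u ++ u <:+: w ++ [c] → u ++ u <:+ w ++ [c] := by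
    intro u h1 h2 h3
    rcases List.infix_concat_iff.mp (by simpa using h3) with h | h
    · simpa using h
    · exact absurd ⟨u, h1, h2, h⟩ hw
  have hex : ∃ k, ∃ u : Wd, u.length = k ∧ 1 ≤ u.length ∧ u.length ≤ 8 ∧ u ++ u <:+: w ++ [c] := by
    obtain ⟨u, h1, h2, h3⟩ := h
    exact ⟨_, u, rfl, h1, h2, h3⟩
  obtain ⟨u, h0, h1, h2, h3⟩ := Nat.find_spec hex
  refine ⟨u, h1, h2, key u h1 h2 h3, ⟨u, h1, h2, rfl⟩, ?_⟩
  rintro f hf hne ⟨t, t1, t2, rfl⟩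
  have hm := Nat.find_min' hex ⟨t, rfl, t1, t2, hf.trans h3⟩
  apply hne
  apply hf.sublist.eq_of_length_le
  simp
  omega

/-- The hypothesis of the theorem on the coefficients. -/
def HMin (C : Wd → ℝ) : Prop := ∀ v ∈ Lam 1 8, ∀ a : Option (Fin 6), (v = [] ∨ a ≠ v.getLast?) →
      (27195 / 9091 : ℝ) * C v ≤
        ∑ b : Fin 6,
          if ¬ HasSq 1 8 (v ++ a.toList ++ [b]) then
            C (lamOf 1 8 (v ++ a.toList ++ [b]))
          else 0

lemma split_suffix {z v t : Wd} (h : z <:+ v ++ t) : z <:+ t ∨ ∃ s, z = s ++ t ∧ s <:+ v := by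
  rcases List.suffix_or_suffix_of_suffix h (List.suffix_append v t) with h' | ⟨s, hs⟩
  · exact Or.inl h'
  · refine Or.inr ⟨s, hs.symm, ?_⟩
    rw [← hs] at h
    obtain ⟨r, hr⟩ := h
    rw [← List.append_assoc] at hr
    exact ⟨r, List.append_cancel_right hr⟩

/-- `Λ(v t) = Λ(Λ(v) t)` up to a permutation. -/
lemma lamOf_append {v : Wd} {π : Equiv.Perm (Fin 6)} (hπ : (lamOf 1 8 v).map π <:+ v) (t : Wd) :
    lamOf 1 8 (v ++ t) = lamOf 1 8 ((lamOf 1 8 v).map π ++ t) := by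
  apply lamOf_congr
  intro u
  constructor
  · rintro ⟨hu, σ, hσ⟩
    refine ⟨hu, σ, ?_⟩
    rcases split_suffix hσ with h | ⟨s, hs, hsv⟩
    · exact h.trans (List.suffix_append _ _)
    · obtain ⟨_, q, hq, hpre, hne⟩ := hu
      have hq' := minSq_map σ hq
      have hpre' : s ++ t <+: q.map σ := hs ▸ hpre.map σ
      have hl : s.length < (q.map σ).length := by
        have h1 := hpre.length_le
        have h2 : u.length ≠ q.length := fun h => hne (hpre.eq_of_length h)
        have h3 := congrArg List.length hs
        simp at h3 ⊢
        omega
      have := suffix_lam hq' ((List.prefix_append s t).trans hpre') (by rintro rfl; omega) hsv hπ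
      rw [hs]
      obtain ⟨r, hr⟩ := this
      exact ⟨r, by rw [← hr, List.append_assoc]⟩
  · rintro ⟨hu, σ, hσ⟩
    refine ⟨hu, σ, hσ.trans ?_⟩
    obtain ⟨r, hr⟩ := hπ
    exact ⟨r, by rw [← List.append_assoc, hr]⟩

lemma hasSq_append {v t : Wd} {b : Fin 6} {π : Equiv.Perm (Fin 6)} (hπ : (lamOf 1 8 v).map π <:+ v)
    (h0 : ¬ HasSq 1 8 (v ++ t)) (h : HasSq 1 8 (v ++ t ++ [b])) :
    HasSq 1 8 ((lamOf 1 8 v).map π ++ t ++ [b]) := by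
  obtain ⟨z, h1, h2, h3, h4⟩ := exists_minSq h h0
  refine ⟨z, h1, h2, List.IsSuffix.isInfix ?_⟩
  rw [List.append_assoc] at h3 ⊢
  rcases split_suffix h3 with h | ⟨s, hs, hsv⟩
  · exact h.trans (List.suffix_append _ _)
  · have hsp : s <+: z ++ z := hs ▸ List.prefix_append _ _
    have := suffix_lam h4 hsp (by rw [hs]; simp) hsv hπ
    rw [hs]
    obtain ⟨r, hr⟩ := this
    exact ⟨r, by rw [← hr, List.append_assoc]⟩

lemma getLast?_of_suffix {u v : Wd} (h : u <:+ v) (hu : u ≠ []) : u.getLast? = v.getLast? := by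
  obtain ⟨r, rfl⟩ := h
  rw [List.getLast?_append_of_ne_nil _ hu]

lemma sum_bound {C : Wd → ℝ} (hnn : ∀ v ∈ Lam 1 8, 0 ≤ C v) (hmin : HMin C) {v : Wd} {a : Option (Fin 6)}
    (ha : a ≠ v.getLast?) (h0 : ¬ HasSq 1 8 (v ++ a.toList)) :
    (27195 / 9091 : ℝ) * C (lamOf 1 8 v) ≤ ∑ b : Fin 6,
      if ¬ HasSq 1 8 (v ++ a.toList ++ [b]) then C (lamOf 1 8 (v ++ a.toList ++ [b])) else 0 := by
  obtain ⟨⟨hL, π, hπ⟩, -⟩ := lamOf_spec v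
  have key := hmin _ hL (a.map (π⁻¹ : Equiv.Perm (Fin 6))) (by
    by_cases hnil : lamOf 1 8 v = []
    · exact Or.inl hnil
    · right
      intro h
      apply ha
      rw [← getLast?_of_suffix hπ (by simpa using hnil), List.getLast?_map, ← h]
      simp [Option.map_map, Function.comp_def])
  refine key.trans ?_
  rw [← Equiv.sum_comp π (fun b => if ¬ HasSq 1 8 (v ++ a.toList ++ [b]) then
    C (lamOf 1 8 (v ++ a.toList ++ [b])) else 0)]
  apply Finset.sum_le_sum
  intro b _
  have e : (lamOf 1 8 v).map π ++ a.toList ++ [π b] =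
      ((lamOf 1 8 v) ++ (a.map (π⁻¹ : Equiv.Perm (Fin 6))).toList ++ [b]).map π := by
    cases a <;> simp
  have e2 : lamOf 1 8 (v ++ a.toList ++ [π b]) =
      lamOf 1 8 ((lamOf 1 8 v) ++ (a.map (π⁻¹ : Equiv.Perm (Fin 6))).toList ++ [b]) := by
    rw [List.append_assoc, lamOf_append hπ, ← List.append_assoc, e, lamOf_map]
  have e3 : HasSq 1 8 (v ++ a.toList ++ [π b]) →
      HasSq 1 8 ((lamOf 1 8 v) ++ (a.map (π⁻¹ : Equiv.Perm (Fin 6))).toList ++ [b]) := by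
    intro h
    have := hasSq_append hπ h0 h
    rwa [e, hasSq_map_iff] at this
  by_cases h : HasSq 1 8 ((lamOf 1 8 v) ++ (a.map (π⁻¹ : Equiv.Perm (Fin 6))).toList ++ [b])
  · rw [if_neg (not_not.mpr h)]
    split_ifs
    · exact le_rfl
    · exact hnn _ (lamOf_spec _).1.1
  · rw [if_pos h, if_pos (fun hh => h (e3 hh)), e2]

/-- words ending with a short `2⁻`-power have weight zero -/
lemma weight_zero {C : Wd → ℝ} (hnn : ∀ v ∈ Lam 1 8, 0 ≤ C v) (hmin : HMin C) {w y x : Wd} {c : Fin 6}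
    (hw : ¬ HasSq 1 8 w) (hy : y <:+ w) (hx : y ++ [c] = x ++ x) (h2 : 2 ≤ x.length) (h8 : x.length ≤ 8) :
    C (lamOf 1 8 w) = 0 := by
  obtain ⟨⟨hL, π, hπ⟩, -⟩ := lamOf_spec w
  have hsq : HasSq 1 8 (w ++ [c]) := by
    obtain ⟨r, rfl⟩ := hy
    refine ⟨x, by omega, h8, ?_⟩
    rw [List.append_assoc, hx]
    exact (List.suffix_append _ _).isInfix
  have hc : some c ≠ w.getLast? := by
    intro hc
    have hyne : y ≠ [] := by
      rintro rfl
      have := congrArg List.length hx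
      simp at this
      omega
    rw [← getLast?_of_suffix hy hyne] at hc
    have hyl : y = y.dropLast ++ [c] := by
      rw [List.dropLast_append_getLast? _ hc.symm]
    have hcc : [c, c] <:+ x := by
      have h1 : [c, c] <:+ x ++ x := by
        rw [← hx, hyl]
        exact ⟨y.dropLast, by simp⟩
      exact List.suffix_of_suffix_length_le h1 (List.suffix_append _ _) (by simpa using h2)
    have hxy : x <+: y := by
      apply List.prefix_of_prefix_length_le (l₃ := y ++ [c])
      · rw [hx]; exact List.prefix_append _ _
      · exact List.prefix_append _ _
      · have := congrArg List.length hx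
        simp at this
        omega
    exact hw ⟨[c], by simp, by simp, (hcc.isInfix.trans hxy.isInfix).trans hy.isInfix⟩
  have hsq2 := hasSq_append (t := []) hπ (by simpa using hw) (by simpa using hsq)
  have e : (lamOf 1 8 w).map π ++ [] ++ [c] = ((lamOf 1 8 w) ++ (some (π⁻¹ c)).toList).map π := by simp
  rw [e, hasSq_map_iff] at hsq2
  have key := hmin _ hL (some (π⁻¹ c)) (by
    by_cases hnil : lamOf 1 8 w = []
    · exact Or.inl hnil
    · right
      intro h
      apply hc
      rw [← getLast?_of_suffix hπ (by simpa using hnil), List.getLast?_map, ← h]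
      simp)
  rw [Finset.sum_eq_zero] at key
  · have := hnn _ hL
    linarith
  · intro b _
    rw [if_neg]
    rw [not_not]
    obtain ⟨u, u1, u2, u3⟩ := hsq2
    exact ⟨u, u1, u2, u3.trans (List.prefix_append _ _).isInfix⟩

/-- Square-freeness. -/
def SqF (u : Wd) : Prop := ∀ x : Wd, x ≠ [] → ¬ (x ++ x) <:+: u

lemma SqF.not_hasSq {u : Wd} (h : SqF u) : ¬ HasSq 1 8 u := by
  rintro ⟨x, h1, _, h3⟩
  exact h x (by rintro rfl; simp at h1) h3

lemma sqF_ben {v : Wd} {a : Option (Fin 6)} (hv : SqF v) (ht : ¬ EndsWithTMP v)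
    (ha : a ≠ v.getLast?) : SqF (v ++ a.toList) := by
  cases a with
  | none => simpa using hv
  | some c =>
    intro x hx h
    simp only [Option.toList_some] at h
    rcases List.infix_concat_iff.mp h with h | h
    · rcases split_suffix h with h | ⟨s, hs, hsv⟩
      · have := h.length_le
        have h2 := List.length_pos_of_ne_nil hx
        simp at this
        omega
      · by_cases h1 : x.length = 1
        · obtain ⟨d, rfl⟩ := List.length_eq_one_iff.mp h1
          have h3 : s = [d] ∧ d = c := by
            have : [d] ++ [d] = s ++ [c] := hs
            have := List.append_inj' this rfl
            exact ⟨this.1.symm, by simpa using this.2⟩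
          obtain ⟨rfl, rfl⟩ := h3
          apply ha
          rw [← getLast?_of_suffix hsv (by simp)]
          simp
        · apply ht
          have h2 := List.length_pos_of_ne_nil hx
          have h3 := congrArg List.length hs
          simp at h3
          exact ⟨s, hsv, by omega, c, x, hx, hs.symm⟩
    · exact hv x hx h

/-- the last `2q-1` letters have period `q` -/
def Per (q : ℕ) (w : Wd) : Prop :=
  2 * q ≤ w.length + 1 ∧ ∀ i, w.length + 1 ≤ i + q → i < w.length → w[i]? = w[i - q]?

lemma per_of_suffix {w y x : Wd} {c : Fin 6} (hy : y <:+ w) (hx : y ++ [c] = x ++ x) :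
    Per x.length w := by
  obtain ⟨r, rfl⟩ := hy
  have hl := congrArg List.length hx
  simp at hl
  refine ⟨by simp; omega, fun i h1 h2 => ?_⟩
  simp at h1 h2
  have hget : ∀ j, j < y.length → y[j]? = (x ++ x)[j]? := by
    intro j hj
    rw [← hx, List.getElem?_append_left hj]
  rw [List.getElem?_append_right (by omega), List.getElem?_append_right (by omega),
    hget _ (by omega), hget _ (by omega), List.getElem?_append_right (by omega),
    List.getElem?_append_left (by omega)]
  congr 1
  omega

lemma per_of_square {w x : Wd} (hx : x ≠ []) (h : x ++ x <:+ w) : Per x.length w := by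
  obtain ⟨c, t, rfl⟩ := List.exists_cons_of_ne_nil hx
  have : t ++ c :: t <:+ w := by
    refine List.IsSuffix.trans ?_ h
    exact ⟨[c], by simp⟩
  have h2 := per_of_suffix (x := t ++ [c]) (c := c) this (by simp)
  simpa using h2

lemma bad_per {C : Wd → ℝ} (hnn : ∀ v ∈ Lam 1 8, 0 ≤ C v) (hmin : HMin C) {u : Wd} {b : Fin 6}
    (hu : SqF u) (hs : ¬ HasSq 1 8 (u ++ [b])) (hC : C (lamOf 1 8 (u ++ [b])) ≠ 0)
    (hbad : ¬ GoodH C (u ++ [b])) : ∃ q, 9 ≤ q ∧ Per q (u ++ [b]) := by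
  have hpos : 0 < C (lamOf 1 8 (u ++ [b])) := lt_of_le_of_ne (hnn _ (lamOf_spec _).1.1) hC.symm
  by_cases h1 : SqF (u ++ [b])
  · have h2 : EndsWithTMP (u ++ [b]) := by
      by_contra h2
      exact hbad ⟨h1, hpos, h2⟩
    obtain ⟨y, hy, hy3, c, x, hx, hxx⟩ := h2
    refine ⟨x.length, ?_, per_of_suffix hy hxx⟩
    by_contra hlt
    have hl := congrArg List.length hxx
    simp at hl
    exact hC (weight_zero hnn hmin hs hy hxx (by omega) (by omega))
  · unfold SqF at h1
    push Not at h1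
    obtain ⟨x, hx, hxx⟩ := h1
    have h9 : 9 ≤ x.length := by
      by_contra hlt
      exact hs ⟨x, List.length_pos_of_ne_nil hx, by omega, hxx⟩
    rcases List.infix_concat_iff.mp hxx with h | h
    · exact ⟨x.length, h9, per_of_square hx h⟩
    · exact absurd h (hu x hx)

/-- one round: the answer of Ben to `v`, then the letter `b` of Ann -/
def ext (φ : Wd → Option (Fin 6)) (v : Wd) (b : Fin 6) : Wd := v ++ (φ v).toList ++ [b]

/-- `w` is obtained from `v` after `j` more rounds -/
def Reach (φ : Wd → Option (Fin 6)) : ℕ → Wd → Wd → Prop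
  | 0, v, w => w = v
  | j + 1, v, w => ∃ u b, Reach φ j v u ∧ w = ext φ u b

lemma ext_prefix (φ : Wd → Option (Fin 6)) (v : Wd) (b : Fin 6) : v <+: ext φ v b := by
  unfold ext
  rw [List.append_assoc]
  exact List.prefix_append _ _

lemma ext_length (φ : Wd → Option (Fin 6)) (v : Wd) (b : Fin 6) :
    (ext φ v b).length ≤ v.length + 2 ∧ v.length < (ext φ v b).length := by
  unfold ext
  cases φ v <;> simp

lemma reach_spec {φ : Wd → Option (Fin 6)} {j : ℕ} {v w : Wd} (h : Reach φ j v w) :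
    v <+: w ∧ w.length ≤ v.length + 2 * j := by
  induction j generalizing w with
  | zero => cases h; simp
  | succ j ih =>
    obtain ⟨u, b, hu, rfl⟩ := h
    obtain ⟨h1, h2⟩ := ih hu
    have := ext_length φ u b
    exact ⟨h1.trans (ext_prefix _ _ _), by omega⟩

lemma reach_det {φ : Wd → Option (Fin 6)} {q : ℕ} (hq : 1 ≤ q) {j : ℕ} {v w w' : Wd} (hqv : q ≤ v.length)
    (h : Reach φ j v w) (h' : Reach φ j v w')
    (hp : ∀ i, v.length ≤ i → i < w.length → w[i]? = w[i - q]?)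
    (hp' : ∀ i, v.length ≤ i → i < w'.length → w'[i]? = w'[i - q]?) : w = w' := by
  induction j generalizing w w' with
  | zero => rw [h, h']
  | succ j ih =>
    obtain ⟨u, b, hu, rfl⟩ := h
    obtain ⟨u', b', hu', rfl⟩ := h'
    have pre : ∀ (u : Wd) (b : Fin 6),
        (∀ i, v.length ≤ i → i < (ext φ u b).length → (ext φ u b)[i]? = (ext φ u b)[i - q]?) →
        ∀ i, v.length ≤ i → i < u.length → u[i]? = u[i - q]? := by
      intro u b hp i h1 h2
      have := hp i h1 (by have := ext_length φ u b; omega)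
      unfold ext at this
      rw [List.append_assoc, List.getElem?_append_left h2, List.getElem?_append_left (by omega)] at this
      exact this
    have e := ih hu hu' (pre u b hp) (pre u' b' hp')
    subst e
    have hvl := (reach_spec hu).1.length_le
    have fin : ∀ (b : Fin 6),
        (∀ i, v.length ≤ i → i < (ext φ u b).length → (ext φ u b)[i]? = (ext φ u b)[i - q]?) →
        some b = (u ++ (φ u).toList)[(u ++ (φ u).toList).length - q]? := by
      intro b hp
      have hl : u.length ≤ (u ++ (φ u).toList).length := by simp
      have := hp (u ++ (φ u).toList).length (by omega) (by simp [ext])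
      unfold ext at this
      rw [List.getElem?_append_left (i := _ - q) (by omega)] at this
      rw [← this]
      simp
    have := (fin b hp).trans (fin b' hp').symm
    simp at this
    rw [this]

lemma playable_good {φ : Wd → Option (Fin 6)} {C : Wd → ℝ} {n : ℕ} {v : Wd} (h : PlayableH φ C n v) :
    GoodH C v := by
  cases h <;> assumption

lemma playable_zero {φ : Wd → Option (Fin 6)} {C : Wd → ℝ} {v : Wd} : ¬ PlayableH φ C 0 v := by
  intro h
  cases h

lemma playable_length {φ : Wd → Option (Fin 6)} {C : Wd → ℝ} {n : ℕ} {v : Wd} (h : PlayableH φ C n v) :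
    1 ≤ v.length ∧ v.length + 1 ≤ 2 * n := by
  induction h with
  | base => simp
  | @step n v a _ _ ih =>
    have := ext_length φ v a
    unfold ext at this
    omega

lemma playable_succ {φ : Wd → Option (Fin 6)} {C : Wd → ℝ} {n : ℕ} {w : Wd}
    (h : PlayableH φ C (n + 1) w) (hn : 1 ≤ n) : ∃ v b, PlayableH φ C n v ∧ w = ext φ v b := by
  cases h with
  | base => omega
  | step a hv hg => exact ⟨_, a, hv, rfl⟩

lemma playable_reach {φ : Wd → Option (Fin 6)} {C : Wd → ℝ} {k j : ℕ} {w : Wd} (hk : 1 ≤ k)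
    (h : PlayableH φ C (k + j) w) : ∃ v, PlayableH φ C k v ∧ Reach φ j v w := by
  induction j generalizing w with
  | zero => exact ⟨w, h, rfl⟩
  | succ j ih =>
    obtain ⟨u, b, hu, rfl⟩ := playable_succ (n := k + j) h (by omega)
    obtain ⟨v, hv, hr⟩ := ih hu
    exact ⟨v, hv, u, b, hr, rfl⟩

lemma playable_unique {φ : Wd → Option (Fin 6)} {C : Wd → ℝ} {n : ℕ} {v v' w : Wd}
    (h : PlayableH φ C n v) (h' : PlayableH φ C n v') (hv : v <+: w) (hv' : v' <+: w) : v = v' := by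
  induction n generalizing v v' with
  | zero => exact absurd h playable_zero
  | succ n ih =>
    have hlen : v.length = v'.length → v = v' := fun hl =>
      (List.prefix_of_prefix_length_le hv hv' hl.le).eq_of_length hl
    by_cases hn : 1 ≤ n
    · obtain ⟨u, b, hu, rfl⟩ := playable_succ h hn
      obtain ⟨u', b', hu', rfl⟩ := playable_succ h' hn
      have e := ih hu hu' ((ext_prefix _ _ _).trans hv) ((ext_prefix _ _ _).trans hv')
      subst e
      exact hlen (by simp [ext])
    · have h1 := playable_length h
      have h2 := playable_length h'
      exact hlen (by omega)

lemma playable_finite (φ : Wd → Option (Fin 6)) (C : Wd → ℝ) (n : ℕ) :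
    {v : Wd | PlayableH φ C n v}.Finite := by
  apply (List.finite_length_le (Fin 6) (2 * n)).subset
  intro v hv
  have := playable_length hv
  simp only [Set.mem_ofPred_eq]
  omega

/-- the set of words playable after `n` moves -/
noncomputable def SF (φ : Wd → Option (Fin 6)) (C : Wd → ℝ) (n : ℕ) : Finset Wd :=
  (playable_finite φ C n).toFinset

lemma mem_SF {φ : Wd → Option (Fin 6)} {C : Wd → ℝ} {n : ℕ} {v : Wd} :
    v ∈ SF φ C n ↔ PlayableH φ C n v := by
  simp [SF]

lemma shat_eq (φ : Wd → Option (Fin 6)) (C : Wd → ℝ) (n : ℕ) :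
    ShatH φ C n = ∑ v ∈ SF φ C n, C (lamOf 1 8 v) := by
  unfold ShatH SF
  exact finsum_mem_eq_finite_toFinset_sum _ _

/-- all one-round extensions of playable words -/
noncomputable def TF (φ : Wd → Option (Fin 6)) (C : Wd → ℝ) (n : ℕ) : Finset Wd :=
  (SF φ C n ×ˢ Finset.univ).image (fun p : Wd × Fin 6 => ext φ p.1 p.2)

lemma mem_TF {φ : Wd → Option (Fin 6)} {C : Wd → ℝ} {n : ℕ} {w : Wd} :
    w ∈ TF φ C n ↔ ∃ v b, PlayableH φ C n v ∧ w = ext φ v b := by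
  simp only [TF, Finset.mem_image, Finset.mem_product, mem_SF, Finset.mem_univ, and_true, Prod.exists]
  constructor
  · rintro ⟨v, b, h, rfl⟩; exact ⟨v, b, h, rfl⟩
  · rintro ⟨v, b, h, rfl⟩; exact ⟨v, b, h, rfl⟩

lemma sum_TF (φ : Wd → Option (Fin 6)) (C : Wd → ℝ) (n : ℕ) (f : Wd → ℝ) :
    ∑ v ∈ SF φ C n, ∑ b : Fin 6, f (ext φ v b) = ∑ w ∈ TF φ C n, f w := by
  rw [TF, Finset.sum_image, Finset.sum_product]
  rintro ⟨v, b⟩ hv ⟨v', b'⟩ hv' h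
  simp only [Finset.coe_product, Set.mem_prod, Finset.mem_coe, mem_SF] at hv hv'
  simp only at h
  have e : v = v' := playable_unique hv.1 hv'.1 (ext_prefix φ v b) (h ▸ ext_prefix φ v' b')
  subst e
  simp [ext] at h
  rw [h]

/-- the periodic extensions are few -/
lemma card_per (φ : Wd → Option (Fin 6)) (C : Wd → ℝ) {n q m : ℕ} (hq : 1 ≤ q) (hm1 : 1 ≤ m)
    (hm : 2 * m + 1 ≤ q) (hmn : m ≤ n) :
    ((TF φ C n).filter (Per q)).card ≤ (SF φ C (n + 1 - m)).card := by
  have H : ∀ w ∈ (TF φ C n).filter (Per q), ∃ v', PlayableH φ C (n + 1 - m) v' ∧ Reach φ m v' w := by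
    intro w hw
    rw [Finset.mem_filter, mem_TF] at hw
    obtain ⟨⟨v, b, hv, rfl⟩, -⟩ := hw
    obtain ⟨v', hv', hr⟩ := playable_reach (k := n + 1 - m) (j := m - 1) (by omega)
      (by rwa [show n + 1 - m + (m - 1) = n by omega])
    refine ⟨v', hv', ?_⟩
    rw [show m = (m - 1) + 1 by omega]
    exact ⟨v, b, hr, rfl⟩
  choose! f hf1 hf2 using H
  apply Finset.card_le_card_of_injOn f
  · intro w hw
    exact mem_SF.mpr (hf1 w hw)
  · intro w hw w' hw' h
    have p1 := (Finset.mem_filter.mp hw).2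
    have p2 := (Finset.mem_filter.mp hw').2
    have r1 := hf2 w hw
    have r2 := hf2 w' hw'
    rw [← h] at r2
    have l1 := (reach_spec r1).2
    have l2 := (reach_spec r2).2
    refine reach_det hq ?_ r1 r2 ?_ ?_
    · have := p1.1; omega
    · intro i h1 h2
      exact p1.2 i (by omega) h2
    · intro i h1 h2
      exact p2.2 i (by omega) h2

lemma card_SF {φ : Wd → Option (Fin 6)} {C : Wd → ℝ} (hlb : ∀ v ∈ Lam 1 8, C v = 0 ∨ 6806 ≤ C v) (k : ℕ) :
    6806 * ((SF φ C k).card : ℝ) ≤ ShatH φ C k := by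
  rw [shat_eq, mul_comm, ← nsmul_eq_mul]
  apply Finset.card_nsmul_le_sum
  intro v hv
  have := (playable_good (mem_SF.mp hv)).2.1
  rcases hlb _ (lamOf_spec v).1.1 with h | h
  · rw [h] at this; exact absurd this (lt_irrefl _)
  · exact h

/-- One-step inequality. -/
lemma step_ineq {C : Wd → ℝ}
    (hnn : ∀ v ∈ Lam 1 8, 0 ≤ C v)
    (hub : ∀ v ∈ Lam 1 8, C v ≤ 11699)
    (hlb : ∀ v ∈ Lam 1 8, C v = 0 ∨ 6806 ≤ C v)
    (hmin : HMin C)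
    {φ : Wd → Option (Fin 6)}
    (hφ : ∀ v : Wd, v ≠ [] → φ v ≠ v.getLast?) (n : ℕ) :
    (27195 / 9091 : ℝ) * ShatH φ C n ≤ ShatH φ C (n + 1) +
      ∑ q ∈ Finset.Ico 9 (n + 2), (11699 / 6806 : ℝ) * ShatH φ C (n + 1 - (q - 1) / 2) := by
  have hW : ∀ w, 0 ≤ C (lamOf 1 8 w) := fun w => hnn _ (lamOf_spec w).1.1
  have hsf : ∀ v, PlayableH φ C n v → SqF (v ++ (φ v).toList) ∧ φ v ≠ v.getLast? := by
    intro v hv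
    have hne : v ≠ [] := by
      rintro rfl
      have := playable_length hv
      simp at this
    have hg := playable_good hv
    exact ⟨sqF_ben hg.1 hg.2.2 (hφ v hne), hφ v hne⟩
  have s1 : (27195 / 9091 : ℝ) * ShatH φ C n ≤
      ∑ w ∈ TF φ C n, if ¬ HasSq 1 8 w then C (lamOf 1 8 w) else 0 := by
    rw [← sum_TF, shat_eq, Finset.mul_sum]
    apply Finset.sum_le_sum
    intro v hv
    obtain ⟨h1, h2⟩ := hsf v (mem_SF.mp hv)
    exact sum_bound hnn hmin h2 h1.not_hasSq
  have s2 : ∀ w ∈ TF φ C n, (if ¬ HasSq 1 8 w then C (lamOf 1 8 w) else 0) ≤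
      (if GoodH C w then C (lamOf 1 8 w) else 0) +
        ∑ q ∈ Finset.Ico 9 (n + 2), if Per q w then (11699 : ℝ) else 0 := by
    intro w hw
    have hs0 : 0 ≤ ∑ q ∈ Finset.Ico 9 (n + 2), if Per q w then (11699 : ℝ) else 0 := by
      apply Finset.sum_nonneg
      intros
      split_ifs <;> norm_num
    by_cases hg : GoodH C w
    · rw [if_pos hg]
      have := hW w
      split_ifs <;> linarith
    · rw [if_neg hg]
      by_cases hs : HasSq 1 8 w
      · rw [if_neg (not_not.mpr hs)]; linarith
      · rw [if_pos hs]
        by_cases hC : C (lamOf 1 8 w) = 0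
        · rw [hC]; linarith
        · obtain ⟨v, b, hv, rfl⟩ := mem_TF.mp hw
          obtain ⟨q, hq9, hq⟩ := bad_per hnn hmin (hsf v hv).1 hs hC hg
          have hqn : q < n + 2 := by
            have h1 := hq.1
            have h2 := (ext_length φ v b).1
            have h3 := (playable_length hv).2
            unfold ext at h2
            omega
          have : (if Per q (ext φ v b) then (11699 : ℝ) else 0) ≤
              ∑ q ∈ Finset.Ico 9 (n + 2), if Per q (ext φ v b) then (11699 : ℝ) else 0 := by
            apply Finset.single_le_sum (f := fun q => if Per q (ext φ v b) then (11699 : ℝ) else 0)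
            · intros
              split_ifs <;> norm_num
            · simp; omega
          rw [if_pos (show Per q (ext φ v b) from hq)] at this
          have := hub _ (lamOf_spec (ext φ v b)).1.1
          linarith
  have s3 := s1.trans (Finset.sum_le_sum s2)
  rw [Finset.sum_add_distrib, Finset.sum_comm] at s3
  refine s3.trans (add_le_add ?_ ?_)
  · rw [← Finset.sum_filter, shat_eq]
    apply Finset.sum_le_sum_of_subset_of_nonneg
    · intro w hw
      rw [Finset.mem_filter, mem_TF] at hw
      obtain ⟨⟨v, b, hv, rfl⟩, hg⟩ := hw
      exact mem_SF.mpr (PlayableH.step b hv hg)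
    · intros
      exact hW _
  · apply Finset.sum_le_sum
    intro q hq
    rw [Finset.mem_Ico] at hq
    rw [← Finset.sum_filter, Finset.sum_const, nsmul_eq_mul]
    have h1 : (((TF φ C n).filter (Per q)).card : ℝ) ≤ (SF φ C (n + 1 - (q - 1) / 2)).card := by
      exact_mod_cast card_per φ C (m := (q - 1) / 2) (by omega) (by omega) (by omega) (by omega)
    have h2 := card_SF (φ := φ) hlb (n + 1 - (q - 1) / 2)
    linarith

lemma sum_half (x : ℝ) (N : ℕ) : ∑ i ∈ Finset.range (2 * N), x ^ (i / 2) = 2 * ∑ k ∈ Finset.range N, x ^ k := by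
  induction N with
  | zero => simp
  | succ N ih =>
    rw [show 2 * (N + 1) = 2 * N + 1 + 1 by ring, Finset.sum_range_succ, Finset.sum_range_succ, ih,
      Finset.sum_range_succ, show (2 * N + 1) / 2 = N by omega, show (2 * N) / 2 = N by omega]
    ring

lemma sum_half_le (x : ℝ) (h0 : 0 ≤ x) (h1 : x < 1) (N : ℕ) :
    ∑ i ∈ Finset.range N, x ^ (i / 2) ≤ 2 / (1 - x) := by
  have h2 : ∑ i ∈ Finset.range N, x ^ (i / 2) ≤ ∑ i ∈ Finset.range (2 * N), x ^ (i / 2) := by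
    apply Finset.sum_le_sum_of_subset_of_nonneg
    · exact Finset.range_subset_range.mpr (by omega)
    · intros; positivity
  rw [sum_half] at h2
  have h3 : ∑ k ∈ Finset.range N, x ^ k ≤ 1 / (1 - x) := by
    rw [le_div_iff₀ (by linarith), geom_sum_mul_neg]
    linarith [pow_nonneg h0 N]
  calc _ ≤ _ := h2
    _ ≤ 2 * (1 / (1 - x)) := by linarith
    _ = _ := by ring

lemma beta_cond (β : ℝ) (hβ : 1 < β)
    (hcond : (27195 / 9091 : ℝ) -
        (11699 / 6806 : ℝ) *
          (β ^ ((1 : ℤ) - 8) * (β ^ (3 + 8 / 2 : ℕ) + 2 * β ^ (2 + 8 / 2 : ℕ) +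
              β ^ (1 + 8 / 2 : ℕ) - β ^ 2 - 1) /
            ((1 + β) * (β - 1) ^ 2)) ≥ β) :
    β + (11699 / 6806 : ℝ) * ((β⁻¹) ^ 3 * (2 / (1 - β⁻¹))) ≤ 27195 / 9091 := by
  have hb0 : 0 < β := by linarith
  have hb1 : 0 < β - 1 := by linarith
  have e1 : (β⁻¹) ^ 3 * (2 / (1 - β⁻¹)) = 2 / (β ^ 2 * (β - 1)) := by
    have : (1 - β⁻¹) = (β - 1) / β := by field_simp
    rw [this]
    field_simp
  have e2 : β ^ ((1 : ℤ) - 8) * (β ^ (3 + 8 / 2 : ℕ) + 2 * β ^ (2 + 8 / 2 : ℕ) +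
              β ^ (1 + 8 / 2 : ℕ) - β ^ 2 - 1) /
            ((1 + β) * (β - 1) ^ 2) = (β ^ 7 + 2 * β ^ 6 + β ^ 5 - β ^ 2 - 1) /
            (β ^ 7 * ((1 + β) * (β - 1) ^ 2)) := by
    have : β ^ ((1 : ℤ) - 8) = (β ^ 7)⁻¹ := by
      rw [show ((1 : ℤ) - 8) = -((7 : ℕ) : ℤ) by norm_num, zpow_neg, zpow_natCast]
    rw [this]
    norm_num
    field_simp
  rw [e2] at hcond
  rw [e1]
  set F := (β ^ 7 + 2 * β ^ 6 + β ^ 5 - β ^ 2 - 1) / (β ^ 7 * ((1 + β) * (β - 1) ^ 2)) with hF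
  have h52 : β ^ 2 ≤ β ^ 5 := pow_le_pow_right₀ hβ.le (by norm_num)
  have h51 : 1 ≤ β ^ 5 := one_le_pow₀ hβ.le
  have hnum : β ^ 7 + 2 * β ^ 6 + β ^ 5 - β ^ 2 - 1 = β ^ 5 * (β + 1) ^ 2 - β ^ 2 - 1 := by ring
  have hFpos : 0 ≤ F := by
    apply div_nonneg _ (by positivity)
    rw [hnum]
    nlinarith
  have h3 : β < 3 := by linarith
  by_cases hcase : β ≤ 29 / 10
  · have hle : 2 / (β ^ 2 * (β - 1)) ≤ F := by
      rw [hF, div_le_div_iff₀ (by positivity) (by positivity)]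
      have g : 0 ≤ β ^ 5 * ((3 - β) * (1 + β)) - β ^ 2 - 1 := by
        by_cases h2 : β ≤ 2
        · have : 3 ≤ (3 - β) * (1 + β) := by nlinarith
          nlinarith
        · have : (1:ℝ) / 4 ≤ (3 - β) * (1 + β) := by nlinarith
          have h8 : 8 * β ^ 2 ≤ β ^ 5 := by
            have : (2:ℝ) ^ 3 ≤ β ^ 3 := pow_le_pow_left₀ (by norm_num) (by linarith) 3
            nlinarith [sq_nonneg β]
          nlinarith
      have : 0 ≤ (β ^ 2 * (β - 1)) * (β ^ 5 * ((3 - β) * (1 + β)) - β ^ 2 - 1) := by positivity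
      nlinarith
    linarith
  · exfalso
    have hF6 : 6 / 100 ≤ F := by
      rw [hF, le_div_iff₀ (by positivity), hnum]
      have h1 : β ^ 2 * ((1 + β) * (β - 1) ^ 2) ≤ 9 * (4 * 4) := by
        gcongr <;> nlinarith
      have h2 : (15 : ℝ) ≤ (β + 1) ^ 2 := by nlinarith
      have h4 : β ^ 7 * ((1 + β) * (β - 1) ^ 2) ≤ β ^ 5 * 144 := by
        calc _ = β ^ 5 * (β ^ 2 * ((1 + β) * (β - 1) ^ 2)) := by ring
          _ ≤ _ := by gcongr; linarith
      nlinarith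
    linarith

lemma sum_tail (S x : ℝ) (hS : 0 ≤ S) (h0 : 0 ≤ x) (h1 : x < 1) (N : ℕ) :
    ∑ q ∈ Finset.Ico 9 N, (11699 / 6806 : ℝ) * (x ^ 3 * x ^ ((q - 9) / 2) * S) ≤
      (11699 / 6806 : ℝ) * (x ^ 3 * (2 / (1 - x))) * S := by
  rw [Finset.sum_Ico_eq_sum_range, ← Finset.mul_sum, ← Finset.sum_mul, ← Finset.mul_sum]
  have h2 := sum_half_le x h0 h1 (N - 9)
  have h3 : ∀ i, (9 + i - 9) / 2 = i / 2 := fun i => by omega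
  simp_rw [h3]
  have h4 := mul_le_mul_of_nonneg_left h2 (pow_nonneg h0 3)
  have h5 := mul_le_mul_of_nonneg_right h4 hS
  have h6 : (0 : ℝ) ≤ 11699 / 6806 := by norm_num
  exact (mul_le_mul_of_nonneg_left h5 h6).trans (le_of_eq (by ring))
/-- With coefficients as in the key lemma for the hard game over `Fin 6` (`p = 8`,
`α = 27195/9091`, `γ = 11699/6806`), for any Ben strategy `φ` (never repeating the last
letter) and any real `β > 1` with
`α - γ·β^(1-p)(β^(3+p/2)+2β^(2+p/2)+β^(1+p/2)-β²-1)/((1+β)(β-1)²) ≥ β`,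
the weights satisfy `Ŝ_{n+1} ≥ β·Ŝ_n` for all `n ≥ 1`. -/
theorem stmt_9 (C : List (Fin 6) → ℝ)
    (hnn : ∀ v ∈ Lam 1 8, 0 ≤ C v)
    (hub : ∀ v ∈ Lam 1 8, C v ≤ 11699)
    (hlb : ∀ v ∈ Lam 1 8, C v = 0 ∨ 6806 ≤ C v)
    (hmin : ∀ v ∈ Lam 1 8, ∀ a : Option (Fin 6), (v = [] ∨ a ≠ v.getLast?) →
      (27195 / 9091 : ℝ) * C v ≤
        ∑ b : Fin 6,
          if ¬ HasSq 1 8 (v ++ a.toList ++ [b]) then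
            C (lamOf 1 8 (v ++ a.toList ++ [b]))
          else 0)
    (φ : List (Fin 6) → Option (Fin 6))
    (hφ : ∀ v : List (Fin 6), v ≠ [] → φ v ≠ v.getLast?)
    (β : ℝ) (hβ : 1 < β)
    (hcond : (27195 / 9091 : ℝ) -
        (11699 / 6806 : ℝ) *
          (β ^ ((1 : ℤ) - 8) * (β ^ (3 + 8 / 2 : ℕ) + 2 * β ^ (2 + 8 / 2 : ℕ) +
              β ^ (1 + 8 / 2 : ℕ) - β ^ 2 - 1) /
            ((1 + β) * (β - 1) ^ 2)) ≥ β) :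
    ∀ n : ℕ, 1 ≤ n → ShatH φ C (n + 1) ≥ β * ShatH φ C n := by
  have hb0 : 0 < β := by linarith
  have hcond' := beta_cond β hβ hcond
  have hS0 : ∀ n, 0 ≤ ShatH φ C n := by
    intro n
    rw [shat_eq]
    exact Finset.sum_nonneg fun v _ => hnn _ (lamOf_spec v).1.1
  intro n
  induction n using Nat.strong_induction_on with
  | _ n ih =>
    intro hn
    have hx0 : 0 ≤ β⁻¹ := by positivity
    have hx1 : β⁻¹ < 1 := inv_lt_one_of_one_lt₀ hβ
    have hpow : ∀ j, j < n → ShatH φ C (n - j) ≤ β⁻¹ ^ j * ShatH φ C n := by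
      intro j
      induction j with
      | zero => intro _; simp
      | succ j ihj =>
        intro hj
        have h1 := ihj (by omega)
        have h2 := ih (n - (j + 1)) (by omega) (by omega)
        rw [show n - (j + 1) + 1 = n - j by omega] at h2
        have h3 : ShatH φ C (n - (j + 1)) ≤ β⁻¹ * ShatH φ C (n - j) := by
          rw [inv_mul_eq_div, le_div_iff₀ hb0]
          linarith
        calc _ ≤ _ := h3
          _ ≤ β⁻¹ * (β⁻¹ ^ j * ShatH φ C n) := by gcongr
          _ = _ := by ring
    have hstep := step_ineq hnn hub hlb hmin hφ n
    have hsum : ∑ q ∈ Finset.Ico 9 (n + 2), (11699 / 6806 : ℝ) * ShatH φ C (n + 1 - (q - 1) / 2) ≤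
        (11699 / 6806 : ℝ) * ((β⁻¹) ^ 3 * (2 / (1 - β⁻¹))) * ShatH φ C n := by
      have h1 : ∑ q ∈ Finset.Ico 9 (n + 2), (11699 / 6806 : ℝ) * ShatH φ C (n + 1 - (q - 1) / 2) ≤
          ∑ q ∈ Finset.Ico 9 (n + 2),
            (11699 / 6806 : ℝ) * (β⁻¹ ^ 3 * β⁻¹ ^ ((q - 9) / 2) * ShatH φ C n) := by
        apply Finset.sum_le_sum
        intro q hq
        rw [Finset.mem_Ico] at hq
        have := hpow (3 + (q - 9) / 2) (by omega)
        rw [show n + 1 - (q - 1) / 2 = n - (3 + (q - 9) / 2) by omega, ← pow_add]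
        linarith
      exact h1.trans (sum_tail _ _ (hS0 n) hx0 hx1 _)
    have := mul_le_mul_of_nonneg_right hcond' (hS0 n)
    rw [add_mul] at this
    linarith
end

section
/- Let α = 27195/9091 and γ = 11699/6806. Assume (C_w)_{w∈Λ} are nonnegative real numbers such that for every v ∈ Λ, C_v ≤ 11699, either C_v = 0 or C_v ≥ 6806, and α·C_v ≤ min_{a ∈ (A∪{ε})\{l(v)}} Σ_{b∈A, vab ∈ S^{≤p}_free} C_{Λ(vab)}. Fix any Ben strategy φ for the hard game over A, and let S_n and the weights Ŝ_n be defined from φ and (C_w) as in the context. Then for all n ≥ 1, Ŝ_{n+1} ≥ (5/2)·Ŝ_n. -/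
open scoped Classical

namespace HG

abbrev W := List (Fin 6)

lemma concat_suffix {A : Type*} {a b : List A} {c d : A} (h : a ++ [c] <:+ b ++ [d]) :
    a <:+ b ∧ c = d := by
  obtain ⟨t, ht⟩ := h
  rw [← List.append_assoc] at ht
  have := List.append_inj' ht rfl
  exact ⟨⟨t, this.1⟩, by simpa using this.2⟩

lemma infix_concat' {A : Type*} {s u : List A} {b : A} (h : s <:+: u ++ [b]) :
    s <:+ u ++ [b] ∨ s <:+: u := by
  obtain ⟨p, q, h⟩ := h
  rcases List.eq_nil_or_concat q with rfl | ⟨q', c, rfl⟩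
  · left; exact ⟨p, by simpa using h⟩
  · right
    have h' : (p ++ s ++ q') ++ [c] = u ++ [b] := by simpa using h
    have := List.append_inj' h' rfl
    exact ⟨p, q', this.1⟩

lemma map_symm (π : Equiv.Perm (Fin 6)) (l : W) : (l.map π.symm).map π = l := by
  simp [List.map_map]

lemma map_symm' (π : Equiv.Perm (Fin 6)) (l : W) : (l.map π).map π.symm = l := by
  simp [List.map_map]

lemma infix_map_iff (π : Equiv.Perm (Fin 6)) {a b : W} (h : a <:+: b.map π) :
    a.map π.symm <:+: b := by
  have := List.IsInfix.map π.symm h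
  rwa [map_symm'] at this

lemma isSq_map {s : W} (π : Equiv.Perm (Fin 6)) (h : IsSq 1 8 s) : IsSq 1 8 (s.map π) := by
  obtain ⟨u, h1, h2, rfl⟩ := h
  exact ⟨u.map π, by simpa using h1, by simpa using h2, by simp⟩

lemma minSq_map {s : W} (π : Equiv.Perm (Fin 6)) (h : MinSq 1 8 s) : MinSq 1 8 (s.map π) := by
  refine ⟨isSq_map π h.1, fun f hf hne hsq => ?_⟩
  refine h.2 (f.map π.symm) (infix_map_iff π hf) ?_ (isSq_map _ hsq)
  rintro rfl
  exact hne (map_symm π f).symm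

lemma hasSq_map {s : W} (π : Equiv.Perm (Fin 6)) (h : HasSq 1 8 s) : HasSq 1 8 (s.map π) := by
  obtain ⟨u, h1, h2, h3⟩ := h
  refine ⟨u.map π, by simpa using h1, by simpa using h2, ?_⟩
  have := List.IsInfix.map π h3
  simpa using this

lemma hasSq_mono {s t : W} (h : HasSq 1 8 s) (hst : s <:+: t) : HasSq 1 8 t := by
  obtain ⟨u, h1, h2, h3⟩ := h
  exact ⟨u, h1, h2, h3.trans hst⟩

lemma exists_minSq {w : W} (h : HasSq 1 8 w) : ∃ s, MinSq 1 8 s ∧ s <:+: w := by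
  have hex : ∃ n, ∃ s : W, IsSq 1 8 s ∧ s <:+: w ∧ s.length = n := by
    obtain ⟨u, h1, h2, h3⟩ := h
    exact ⟨_, u ++ u, ⟨u, h1, h2, rfl⟩, h3, rfl⟩
  obtain ⟨s, hs, hsw, hl⟩ := Nat.find_spec hex
  refine ⟨s, ⟨hs, fun f hf hne hsq => ?_⟩, hsw⟩
  have h1 := Nat.find_min' hex ⟨f, hsq, hf.trans hsw, rfl⟩
  exact hne (hf.eq_of_length (le_antisymm hf.length_le (by omega)))

/-- prefixes of minimal squares -/
def PP (y : W) : Prop := ∃ s, MinSq 1 8 s ∧ y <+: s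

lemma PP_map {y : W} (π : Equiv.Perm (Fin 6)) (h : PP y) : PP (y.map π) := by
  obtain ⟨s, hs, hy⟩ := h
  exact ⟨s.map π, minSq_map π hs, List.IsPrefix.map π hy⟩

lemma exists_lam {z s : W} (hs : MinSq 1 8 s) (hz : z <+: s) (hne : z ≠ s) :
    ∃ σ : Equiv.Perm (Fin 6), z.map σ ∈ Lam (A := Fin 6) 1 8 := by
  obtain ⟨σ, hσ⟩ := Finite.exists_min (fun σ : Equiv.Perm (Fin 6) => z.map σ)
  refine ⟨σ, ?_, s.map σ, minSq_map σ hs, List.IsPrefix.map σ hz, ?_⟩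
  · intro π hlt
    have h1 := hσ (σ.trans π)
    have h2 : z.map (σ.trans π) = (z.map σ).map π := by simp [List.map_map]
    simp only [h2] at h1
    exact absurd hlt (not_lt.mpr h1)
  · intro h
    apply hne
    have := congrArg (List.map σ.symm) h
    rwa [map_symm', map_symm'] at this

lemma lam_length {v : W} (h : v ∈ Lam (A := Fin 6) 1 8) : v.length ≤ 16 := by
  obtain ⟨_, s, ⟨⟨u, _, h2, rfl⟩, _⟩, h3, _⟩ := h
  have := h3.length_le
  simp at this
  omega

lemma nil_lam : ([] : W) ∈ Lam (A := Fin 6) 1 8 := by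
  refine ⟨fun π h => by simp at h, ?_⟩
  obtain ⟨s, hs, _⟩ := exists_minSq (w := [0, 0]) ⟨[0], by simp, by simp, by simp⟩
  refine ⟨s, hs, by simp, ?_⟩
  rintro rfl
  obtain ⟨⟨u, h1, _, h3⟩, _⟩ := hs
  simp at h3
  simp [h3] at h1

/-- being in Λ and equal up to permutation to a suffix -/
def Cd (w v : W) : Prop := v ∈ Lam (A := Fin 6) 1 8 ∧ ∃ π : Equiv.Perm (Fin 6), v.map π <:+ w

lemma lamOf_spec (w : W) : Cd w (lamOf 1 8 w) ∧ ∀ v', Cd w v' → v'.length ≤ (lamOf 1 8 w).length := by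
  have h : ∃ v : W,
      (v ∈ Lam (A := Fin 6) 1 8 ∧ ∃ π : Equiv.Perm (Fin 6), v.map π <:+ w) ∧
      ∀ v' : W, (v' ∈ Lam (A := Fin 6) 1 8 ∧ ∃ π : Equiv.Perm (Fin 6), v'.map π <:+ w) →
        v'.length ≤ v.length := by
    have hex : ∃ n, n ≤ 16 ∧ ∃ v, Cd w v ∧ v.length = n :=
      ⟨0, by omega, [], ⟨nil_lam, 1, by simp⟩, rfl⟩
    obtain ⟨n, hn, v, hv, hvn⟩ := hex
    by_contra hcon
    push Not at hcon
    have : ∀ N, ∃ v, Cd w v ∧ N ≤ v.length := by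
      intro N
      induction N with
      | zero => exact ⟨v, hv, by simp⟩
      | succ N ih =>
        obtain ⟨v1, h1, h2⟩ := ih
        obtain ⟨v2, h3, h4⟩ := hcon v1 h1
        exact ⟨v2, h3, by omega⟩
    obtain ⟨v1, h1, h2⟩ := this 17
    have := lam_length h1.1
    omega
  unfold lamOf
  rw [dif_pos h]
  exact h.choose_spec

lemma cd_unique {w v v' : W} (h : Cd w v) (h' : Cd w v') (hl : v.length = v'.length) : v = v' := by
  obtain ⟨hv, π, hπ⟩ := h
  obtain ⟨hv', σ, hσ⟩ := h'
  have he : v.map π = v'.map σ :=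
    (List.suffix_of_suffix_length_le hπ hσ (by simp [hl])).eq_of_length (by simp [hl])
  have e1 : v'.map (σ.trans π.symm) = v := by
    have := congrArg (List.map π.symm) he
    rw [map_symm'] at this
    rw [this]; simp [List.map_map]
  have e2 : v.map (π.trans σ.symm) = v' := by
    have := congrArg (List.map σ.symm) he
    rw [map_symm'] at this
    rw [← this]; simp [List.map_map]
  have h1 := hv.1 (π.trans σ.symm)
  have h2 := hv'.1 (σ.trans π.symm)
  rw [e2] at h1
  rw [e1] at h2
  exact le_antisymm (not_lt.mp (show ¬ v' < v from h1)) (not_lt.mp (show ¬ v < v' from h2))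

lemma suf {u w c y : W} {π : Equiv.Perm (Fin 6)} (hw : w = lamOf 1 8 u) (hπ : w.map π <:+ u)
    (hy : PP y) (hc : c ≠ []) (hyu : y <:+ u ++ c) : y <:+ w.map π ++ c := by
  by_cases hl : y.length ≤ c.length
  · exact (List.suffix_of_suffix_length_le hyu (List.suffix_append u c) hl).trans
      (List.suffix_append _ _)
  · obtain ⟨z, rfl⟩ := List.suffix_of_suffix_length_le (List.suffix_append u c) hyu (by omega)
    have hzu : z <:+ u := by
      obtain ⟨t, ht⟩ := hyu
      rw [← List.append_assoc] at ht
      exact ⟨t, (List.append_inj' ht rfl).1⟩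
    obtain ⟨s, hs, hys⟩ := hy
    have hzs : z <+: s := (List.prefix_append z c).trans hys
    have hzne : z ≠ s := by
      rintro rfl
      have := hys.length_le
      simp at this
      exact hc this
    obtain ⟨σ, hσ⟩ := exists_lam hs hzs hzne
    have := (lamOf_spec u).2 (z.map σ) ⟨hσ, σ.symm, by rwa [map_symm']⟩
    rw [← hw] at this
    simp only [List.length_map] at this
    obtain ⟨t, ht⟩ := List.suffix_of_suffix_length_le hzu hπ (by simpa using this)
    exact ⟨t, by rw [← List.append_assoc, ht]⟩

lemma lamOf_ext {u w c : W} {π : Equiv.Perm (Fin 6)} (hw : w = lamOf 1 8 u) (hπ : w.map π <:+ u)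
    (hc : c ≠ []) : lamOf 1 8 (u ++ c) = lamOf 1 8 (w ++ c.map π.symm) := by
  have e : (w ++ c.map π.symm).map π = w.map π ++ c := by simp [List.map_map]
  have hs : w.map π ++ c <:+ u ++ c := by
    obtain ⟨t, ht⟩ := hπ
    exact ⟨t, by rw [← List.append_assoc, ht]⟩
  have key : ∀ v, Cd (u ++ c) v ↔ Cd (w ++ c.map π.symm) v := by
    intro v
    constructor
    · rintro ⟨hv, τ, hτ⟩
      refine ⟨hv, τ.trans π.symm, ?_⟩
      obtain ⟨_, s, hs1, hs2, _⟩ := hv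
      have h1 := suf hw hπ (PP_map τ ⟨s, hs1, hs2⟩) hc hτ
      rw [← e] at h1
      have h2 := List.IsSuffix.map π.symm h1
      rw [map_symm'] at h2
      simpa [List.map_map] using h2
    · rintro ⟨hv, τ, hτ⟩
      refine ⟨hv, τ.trans π, ?_⟩
      have h2 := List.IsSuffix.map π hτ
      rw [e] at h2
      have h3 := h2.trans hs
      simpa [List.map_map] using h3
  have A := lamOf_spec (u ++ c)
  have B := lamOf_spec (w ++ c.map π.symm)
  exact cd_unique A.1 ((key _).2 B.1)
    (le_antisymm (B.2 _ ((key _).1 A.1)) (A.2 _ ((key _).2 B.1)))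

/-- If `u` has no short square but `u ++ c` has one that must be a suffix. -/
lemma hasSq_ext {u w c0 : W} {b : Fin 6} {π : Equiv.Perm (Fin 6)} (hw : w = lamOf 1 8 u)
    (hπ : w.map π <:+ u) (hfree : ¬ HasSq 1 8 (u ++ c0)) (h : HasSq 1 8 (u ++ c0 ++ [b])) :
    HasSq 1 8 (w ++ c0.map π.symm ++ [π.symm b]) := by
  obtain ⟨s, hs, hsu⟩ := exists_minSq h
  have hS := hs.1
  obtain ⟨x, h1, h2, rfl⟩ := hS
  rcases infix_concat' hsu with h3 | h3
  · rw [List.append_assoc] at h3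
    have h4 := suf hw hπ ⟨_, hs, List.prefix_refl _⟩ (by simp) h3
    have h5 : HasSq 1 8 (w.map π ++ (c0 ++ [b])) := ⟨x, h1, h2, h4.isInfix⟩
    have h6 := hasSq_map π.symm h5
    rw [List.map_append, map_symm'] at h6
    simpa using h6
  · exact absurd ⟨x, h1, h2, h3⟩ hfree

lemma getLast_suffix {v u : W} (h : v <:+ u) (hv : v ≠ []) : v.getLast? = u.getLast? := by
  obtain ⟨t, rfl⟩ := h
  rw [List.getLast?_append_of_ne_nil _ hv]

lemma last_ne {u w : W} {π : Equiv.Perm (Fin 6)} (hπ : w.map π <:+ u) {o : Option (Fin 6)}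
    (ho : o ≠ u.getLast?) : w = [] ∨ o.map π.symm ≠ w.getLast? := by
  by_cases hw : w = []
  · exact Or.inl hw
  · right
    intro h
    apply ho
    rw [← getLast_suffix hπ (by simpa using hw), List.getLast?_map, ← h]
    cases o <;> simp

/-- extension -/
def ex (φ : W → Option (Fin 6)) (v : W) (b : Fin 6) : W := v ++ (φ v).toList ++ [b]

lemma tmp_of_sq {v x : W} {c : Fin 6} (hx : x ≠ []) (h : x ++ x <:+ v ++ [c])
    (hc : v.getLast? ≠ some c) : EndsWithTMP v := by
  rcases List.eq_nil_or_concat x with rfl | ⟨x', d, rfl⟩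
  · exact absurd rfl hx
  · have h' : (x' ++ [d] ++ x') ++ [d] <:+ v ++ [c] := by simpa using h
    obtain ⟨h1, rfl⟩ := concat_suffix h'
    refine ⟨_, h1, ?_, d, x' ++ [d], by simp, by simp⟩
    rcases x' with _ | ⟨e, x'⟩
    · exfalso
      apply hc
      rw [← getLast_suffix h1 (by simp)]; simp
    · simp; omega

lemma ben_free {φ : W → Option (Fin 6)} {C : W → ℝ} {v : W} (hv : GoodH C v)
    (hφ : φ v ≠ v.getLast?) (x : W) (hx : x ≠ []) : ¬ (x ++ x) <:+: v ++ (φ v).toList := by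
  intro h
  rcases hc : φ v with _ | c
  · rw [hc] at h
    exact hv.1 x hx (by simpa using h)
  · rw [hc] at h
    rcases infix_concat' (b := c) (by simpa using h) with h | h
    · exact hv.2.2 (tmp_of_sq hx h (by rw [← hc]; exact hφ.symm))
    · exact hv.1 x hx h

/-- rotating a suffix square gives a 2⁻-power -/
lemma tmp_of_long {u x : W} (hx : 2 ≤ x.length) (h : x ++ x <:+ u) : EndsWithTMP u := by
  rcases x with _ | ⟨c, x⟩
  · simp at hx
  · refine ⟨x ++ [c] ++ x, ?_, ?_, c, x ++ [c], by simp, by simp⟩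
    · refine List.IsSuffix.trans ⟨[c], ?_⟩ h
      simp
    · simp at hx ⊢; omega

/-- the last `r` letters of `u` agree with those `k` places before -/
def Per (k r : ℕ) (u : W) : Prop :=
  ∀ i, i < u.length → u.length ≤ i + r → k ≤ i ∧ u[i]? = u[i - k]?

lemma per_of_tmp {t u x : W} {a : Fin 6} (htu : t <:+ u) (h : t ++ [a] = x ++ x) :
    Per x.length (x.length - 1) u := by
  obtain ⟨p, rfl⟩ := htu
  have hl : t.length + 1 = x.length + x.length := by simpa using congrArg List.length h
  intro i hi hi'
  simp only [List.length_append] at hi hi'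
  refine ⟨by omega, ?_⟩
  obtain ⟨j, rfl⟩ : ∃ j, i = p.length + x.length + j := ⟨i - p.length - x.length, by omega⟩
  have g1 : (p ++ t)[p.length + x.length + j]? = (t ++ [a])[x.length + j]? := by
    rw [List.getElem?_append_right (by omega), List.getElem?_append_left (by omega)]
    congr 1; omega
  have g2 : (p ++ t)[p.length + x.length + j - x.length]? = (t ++ [a])[j]? := by
    rw [List.getElem?_append_right (by omega), List.getElem?_append_left (by omega)]
    congr 1; omega
  rw [g1, g2, h, List.getElem?_append_right (by omega), List.getElem?_append_left (by omega)]
  congr 1; omega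

/-- the forced step with period `k` -/
def D (φ : W → Option (Fin 6)) (k : ℕ) (v : W) : W :=
  ex φ v (((v ++ (φ v).toList)[(v ++ (φ v).toList).length - k]?).getD 0)

lemma toList_len (o : Option (Fin 6)) : o.toList.length ≤ 1 := by cases o <;> simp

lemma per_step {φ : W → Option (Fin 6)} {k r : ℕ} {v : W} {b : Fin 6} (hk : 1 ≤ k) (hr : 1 ≤ r)
    (h : Per k r (ex φ v b)) : ex φ v b = D φ k v ∧ Per k (r - 2) v := by
  have hb := toList_len (φ v)
  constructor
  · unfold D
    congr 1
    obtain ⟨h1, h2⟩ := h (v ++ (φ v).toList).length (by simp [ex]) (by simp [ex]; omega)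
    unfold ex at h2
    rw [List.getElem?_append_right (by omega), List.getElem?_append_left (by omega)] at h2
    rw [← h2]; simp
  · intro i hi hi'
    have hlen : (ex φ v b).length = v.length + (φ v).toList.length + 1 := by simp [ex]; omega
    obtain ⟨h1, h2⟩ := h i (by omega) (by omega)
    refine ⟨h1, ?_⟩
    unfold ex at h2
    rw [List.append_assoc, List.getElem?_append_left (by omega),
      List.getElem?_append_left (by omega)] at h2
    exact h2

lemma not_zero {φ : W → Option (Fin 6)} {C : W → ℝ} {v : W} : ¬ PlayableH φ C 0 v := by
  intro h; cases h

lemma playable_succ {φ : W → Option (Fin 6)} {C : W → ℝ} {v : W} {n : ℕ} (hn : 1 ≤ n) :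
    PlayableH φ C (n + 1) v ↔ ∃ v0 b, PlayableH φ C n v0 ∧ GoodH C (ex φ v0 b) ∧ v = ex φ v0 b := by
  constructor
  · intro h
    cases h with
    | base a => omega
    | step a h1 h2 => exact ⟨_, a, h1, h2, rfl⟩
  · rintro ⟨v0, b, h1, h2, rfl⟩
    exact PlayableH.step b h1 h2

lemma playable_good {φ : W → Option (Fin 6)} {C : W → ℝ} {v : W} {n : ℕ}
    (h : PlayableH φ C n v) : GoodH C v ∧ v ≠ [] ∧ v.length + 1 ≤ 2 * n := by
  induction h with
  | base a h => exact ⟨h, by simp, by simp⟩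
  | @step n v a h1 h2 ih =>
    refine ⟨h2, by simp, ?_⟩
    have := toList_len (φ v)
    simp only [List.length_append, List.length_singleton]
    omega

lemma chain {φ : W → Option (Fin 6)} {C : W → ℝ} {k : ℕ} (hk : 1 ≤ k) {m : ℕ} (hm : 1 ≤ m) :
    ∀ j v, PlayableH φ C (m + j) v → Per k (2 * j - 1) v →
      ∃ w, PlayableH φ C m w ∧ v = (D φ k)^[j] w := by
  intro j
  induction j with
  | zero => intro v hv _; exact ⟨v, hv, rfl⟩
  | succ j ih =>
    intro v hv hp
    obtain ⟨v0, b, h1, _, rfl⟩ := (playable_succ (n := m + j) (by omega)).1 hv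
    obtain ⟨h2, h3⟩ := per_step hk (by omega) hp
    obtain ⟨w, hw, e⟩ := ih v0 h1 (by convert h3 using 1; omega)
    exact ⟨w, hw, by rw [h2, e, Function.iterate_succ_apply']⟩

lemma det {φ : W → Option (Fin 6)} {C : W → ℝ} {u : W} : ∀ n v v', PlayableH φ C n v →
    PlayableH φ C n v' → v <+: u → v' <+: u → v = v' := by
  intro n
  induction n with
  | zero => intro v v' h; exact absurd h not_zero
  | succ n ih =>
    intro v v' h h' hu hu'
    suffices v.length = v'.length from
      (List.prefix_of_prefix_length_le hu hu' this.le).eq_of_length this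
    rcases Nat.eq_zero_or_pos n with rfl | hn
    · cases h with
      | step a h1 => exact absurd h1 not_zero
      | base a h1 =>
        cases h' with
        | step a h1 => exact absurd h1 not_zero
        | base a h1 => rfl
    · obtain ⟨v0, b, h1, _, rfl⟩ := (playable_succ hn).1 h
      obtain ⟨v1, b', h2, _, rfl⟩ := (playable_succ hn).1 h'
      have : v0 = v1 := by
        apply ih v0 v1 h1 h2
        · exact List.IsPrefix.trans (by unfold ex; rw [List.append_assoc]; exact List.prefix_append _ _) hu
        · exact List.IsPrefix.trans (by unfold ex; rw [List.append_assoc]; exact List.prefix_append _ _) hu'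
      subst this
      simp [ex]

lemma ex_inj {φ : W → Option (Fin 6)} {C : W → ℝ} {n : ℕ} {v v' : W} {b b' : Fin 6}
    (h : PlayableH φ C n v) (h' : PlayableH φ C n v') (e : ex φ v b = ex φ v' b') :
    v = v' ∧ b = b' := by
  have : v = v' := by
    apply det (u := ex φ v b) n v v' h h'
    · unfold ex; rw [List.append_assoc]; exact List.prefix_append _ _
    · rw [e]; unfold ex; rw [List.append_assoc]; exact List.prefix_append _ _
  subst this
  refine ⟨rfl, ?_⟩
  simpa [ex] using e

lemma fin_S (φ : W → Option (Fin 6)) (C : W → ℝ) (n : ℕ) : {v | PlayableH φ C n v}.Finite := by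
  refine (List.finite_length_le (Fin 6) (2 * n)).subset ?_
  intro v hv
  have := (playable_good hv).2.2
  show v.length ≤ 2 * n
  omega

noncomputable def S (φ : W → Option (Fin 6)) (C : W → ℝ) (n : ℕ) : Finset W := (fin_S φ C n).toFinset

lemma mem_S {φ : W → Option (Fin 6)} {C : W → ℝ} {n : ℕ} {v : W} :
    v ∈ S φ C n ↔ PlayableH φ C n v := by simp [S]

lemma shat_eq (φ : W → Option (Fin 6)) (C : W → ℝ) (n : ℕ) :
    ShatH φ C n = ∑ v ∈ S φ C n, C (lamOf 1 8 v) := by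
  unfold ShatH S
  rw [finsum_mem_eq_finite_toFinset_sum]

lemma shat_succ (φ : W → Option (Fin 6)) (C : W → ℝ) {n : ℕ} (hn : 1 ≤ n) :
    ShatH φ C (n + 1) = ∑ v ∈ S φ C n, ∑ b : Fin 6,
      if GoodH C (ex φ v b) then C (lamOf 1 8 (ex φ v b)) else 0 := by
  rw [shat_eq, ← Finset.sum_product', ← Finset.sum_filter]
  symm
  apply Finset.sum_bij (fun (p : W × Fin 6) _ => ex φ p.1 p.2)
  · rintro ⟨v, b⟩ h
    simp only [Finset.mem_filter, Finset.mem_product, mem_S] at h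
    exact mem_S.2 ((playable_succ hn).2 ⟨v, b, h.1.1, h.2, rfl⟩)
  · rintro ⟨v, b⟩ h ⟨v', b'⟩ h' e
    simp only [Finset.mem_filter, Finset.mem_product, mem_S] at h h'
    obtain ⟨rfl, rfl⟩ := ex_inj h.1.1 h'.1.1 e
    rfl
  · intro u hu
    obtain ⟨v, b, h1, h2, rfl⟩ := (playable_succ hn).1 (mem_S.1 hu)
    exact ⟨(v, b), by simp [mem_S, h1, h2], rfl⟩
  · intros; rfl

/-- words that are lost -/
def Bad (C : W → ℝ) (u : W) : Prop := ¬ HasSq 1 8 u ∧ 0 < C (lamOf 1 8 u) ∧ EndsWithTMP u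

section main
variable {C : W → ℝ} {φ : W → Option (Fin 6)}

/-- short 2⁻-powers have zero weight -/
lemma short_zero (hmin : ∀ v ∈ Lam 1 8, ∀ a : Option (Fin 6), (v = [] ∨ a ≠ v.getLast?) →
      (27195 / 9091 : ℝ) * C v ≤
        ∑ b : Fin 6,
          if ¬ HasSq 1 8 (v ++ a.toList ++ [b]) then
            C (lamOf 1 8 (v ++ a.toList ++ [b]))
          else 0) {u t x : W} {a : Fin 6} (hu : ¬ HasSq 1 8 u) (htu : t <:+ u)
    (ht : 3 ≤ t.length) (e : t ++ [a] = x ++ x) (hx : x.length ≤ 8) : C (lamOf 1 8 u) ≤ 0 := by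
  obtain ⟨hL, π, hπ⟩ := (lamOf_spec u).1
  have hl : t.length + 1 = x.length + x.length := by simpa using congrArg List.length e
  have hsq : HasSq 1 8 (u ++ [] ++ [a]) := by
    refine ⟨x, by omega, hx, ?_⟩
    rw [← e]
    obtain ⟨p, rfl⟩ := htu
    exact ⟨p, [], by simp⟩
  have h1 := hasSq_ext (c0 := []) rfl hπ (by simpa using hu) hsq
  have hlast : some a ≠ u.getLast? := by
    intro hla
    rcases List.eq_nil_or_concat x with rfl | ⟨x', d, rfl⟩
    · simp at hl
    · have e' : t ++ [a] = (x' ++ [d] ++ x') ++ [d] := by rw [e]; simp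
      obtain ⟨e1, e2⟩ := List.append_inj' e' rfl
      have e2 : a = d := by simpa using e2
      subst e2
      rw [← getLast_suffix htu (by rintro rfl; simp at ht), e1] at hla
      rcases List.eq_nil_or_concat x' with rfl | ⟨x2, d, rfl⟩
      · simp at hl; omega
      · rw [List.concat_eq_append, ← List.append_assoc, List.getLast?_concat] at hla
        have hla : a = d := by simpa using hla
        subst hla
        apply hu
        refine ⟨[a], by simp, by simp, List.IsInfix.trans ?_ htu.isInfix⟩
        rw [e1]
        exact ⟨x2, x2 ++ [a], by simp⟩
  have h2 := hmin _ hL ((some a).map π.symm) (last_ne hπ hlast)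
  have h3 : ∀ b : Fin 6, HasSq 1 8 (lamOf 1 8 u ++ ((some a).map π.symm).toList ++ [b]) := by
    intro b
    refine hasSq_mono h1 ⟨[], [b], by simp⟩
  simp only [h3] at h2
  simp at h2
  linarith

lemma local_growth (hnn : ∀ v ∈ Lam 1 8, 0 ≤ C v)
    (hub : ∀ v ∈ Lam 1 8, C v ≤ 11699)
    (hmin : ∀ v ∈ Lam 1 8, ∀ a : Option (Fin 6), (v = [] ∨ a ≠ v.getLast?) →
      (27195 / 9091 : ℝ) * C v ≤
        ∑ b : Fin 6,
          if ¬ HasSq 1 8 (v ++ a.toList ++ [b]) then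
            C (lamOf 1 8 (v ++ a.toList ++ [b]))
          else 0)
    {v : W} (hv : GoodH C v) (hφ : φ v ≠ v.getLast?) :
    (27195 / 9091 : ℝ) * C (lamOf 1 8 v) ≤
      ∑ b : Fin 6, ((if GoodH C (ex φ v b) then C (lamOf 1 8 (ex φ v b)) else 0) +
        (if Bad C (ex φ v b) then (11699 : ℝ) else 0)) := by
  obtain ⟨hL, π, hπ⟩ := (lamOf_spec v).1
  have h1 := hmin _ hL ((φ v).map π.symm) (last_ne hπ hφ)
  have hfree : ¬ HasSq 1 8 (v ++ (φ v).toList) := by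
    rintro ⟨x, h1, _, h3⟩
    exact ben_free hv hφ x (by rintro rfl; simp at h1) h3
  have ht : ((φ v).map π.symm).toList = (φ v).toList.map π.symm := by cases φ v <;> simp
  refine h1.trans ?_
  rw [← Equiv.sum_comp π.symm]
  apply Finset.sum_le_sum
  intro b _
  rw [ht]
  have e : lamOf 1 8 (ex φ v b) = lamOf 1 8 (lamOf 1 8 v ++ (φ v).toList.map π.symm ++ [π.symm b]) := by
    unfold ex
    rw [List.append_assoc, lamOf_ext rfl hπ (by simp)]
    simp
  rw [← e]
  have hLe := (lamOf_spec (ex φ v b)).1.1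
  have n1 := hnn _ hLe
  have n2 := hub _ hLe
  have r1 : 0 ≤ (if GoodH C (ex φ v b) then C (lamOf 1 8 (ex φ v b)) else 0) := by
    split_ifs <;> linarith
  have r2 : 0 ≤ (if Bad C (ex φ v b) then (11699 : ℝ) else 0) := by
    split_ifs <;> norm_num
  by_cases hS : HasSq 1 8 (lamOf 1 8 v ++ (φ v).toList.map π.symm ++ [π.symm b])
  · rw [if_neg (by simpa using hS)]; linarith
  rw [if_pos hS]
  rcases n1.eq_or_lt with h0 | hpos
  · linarith
  have hS' : ¬ HasSq 1 8 (ex φ v b) := fun h => hS (hasSq_ext rfl hπ hfree h)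
  by_cases hT : EndsWithTMP (ex φ v b)
  · rw [if_pos (show Bad C (ex φ v b) from ⟨hS', hpos, hT⟩)]; linarith
  · have hG : GoodH C (ex φ v b) := by
      refine ⟨fun x hx h => ?_, hpos, hT⟩
      rcases infix_concat' h with h' | h'
      · by_cases h2 : 2 ≤ x.length
        · exact hT (tmp_of_long h2 h')
        · have := List.length_pos_iff.2 hx
          exact hS' ⟨x, by omega, by omega, h⟩
      · exact ben_free hv hφ x hx h'
    rw [if_pos hG]; linarith

lemma bad_mem (hmin : ∀ v ∈ Lam 1 8, ∀ a : Option (Fin 6), (v = [] ∨ a ≠ v.getLast?) →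
      (27195 / 9091 : ℝ) * C v ≤
        ∑ b : Fin 6,
          if ¬ HasSq 1 8 (v ++ a.toList ++ [b]) then
            C (lamOf 1 8 (v ++ a.toList ++ [b]))
          else 0) {n : ℕ} {v : W} {b : Fin 6} (hv : PlayableH φ C n v)
    (hb : Bad C (ex φ v b)) : ∃ m ∈ Finset.Icc 1 (n - 3), ∃ w ∈ S φ C m,
      ex φ v b = (D φ (2 * (n + 1 - m)))^[n + 1 - m] w ∨
      ex φ v b = (D φ (2 * (n + 1 - m) + 1))^[n + 1 - m] w := by
  obtain ⟨h1, h2, t, htu, ht, a, x, hx, e⟩ := hb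
  have hx8 : 8 < x.length := by
    by_contra hcon
    have := short_zero hmin h1 htu ht e (by omega)
    linarith
  have hl : t.length + 1 = x.length + x.length := by simpa using congrArg List.length e
  have hlen := (playable_good hv).2.2
  have hlu : (ex φ v b).length ≤ v.length + 2 := by
    have := toList_len (φ v); simp only [ex, List.length_append, List.length_singleton]; omega
  have htl := htu.length_le
  have hper := per_of_tmp htu e
  obtain ⟨j, hj⟩ : ∃ j, x.length / 2 = j + 1 := ⟨x.length / 2 - 1, by omega⟩
  obtain ⟨h3, h4⟩ := per_step (by omega) (by omega) hper
  have h5 : Per x.length (2 * j - 1) v := fun i hi hi' => h4 i hi (by omega)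
  obtain ⟨m, rfl⟩ : ∃ m, n = m + j := ⟨n - j, by omega⟩
  obtain ⟨w, hw, ew⟩ := chain (by omega) (by omega) j v hv h5
  refine ⟨m, by simp; omega, w, mem_S.2 hw, ?_⟩
  have e1 : m + j + 1 - m = j + 1 := by omega
  have hE : ex φ v b = (D φ x.length)^[j + 1] w := by
    rw [h3, Function.iterate_succ_apply', ← ew]
  rw [e1]
  rcases Nat.mod_two_eq_zero_or_one x.length with h | h
  · left; rw [hE]; congr 2; omega
  · right; rw [hE]; congr 2; omega

lemma bad_sum (hmin : ∀ v ∈ Lam 1 8, ∀ a : Option (Fin 6), (v = [] ∨ a ≠ v.getLast?) →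
      (27195 / 9091 : ℝ) * C v ≤
        ∑ b : Fin 6,
          if ¬ HasSq 1 8 (v ++ a.toList ++ [b]) then
            C (lamOf 1 8 (v ++ a.toList ++ [b]))
          else 0) (n : ℕ) :
    ∑ v ∈ S φ C n, ∑ b : Fin 6, (if Bad C (ex φ v b) then (11699 : ℝ) else 0) ≤
      11699 * ∑ m ∈ Finset.Icc 1 (n - 3), 2 * ((S φ C m).card : ℝ) := by
  rw [← Finset.sum_product', ← Finset.sum_filter, Finset.sum_const, nsmul_eq_mul, mul_comm]
  refine mul_le_mul_of_nonneg_left ?_ (by norm_num)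
  set T := ((S φ C n ×ˢ (Finset.univ : Finset (Fin 6))).filter fun p => Bad C (ex φ p.1 p.2)) with hT
  have hinj : Set.InjOn (fun p : W × Fin 6 => ex φ p.1 p.2) T := by
    rintro ⟨v, b⟩ h ⟨v', b'⟩ h' e
    simp only [hT, Finset.coe_filter, Finset.mem_product, mem_S, Set.mem_ofPred_eq] at h h'
    obtain ⟨rfl, rfl⟩ := ex_inj h.1.1 h'.1.1 e
    rfl
  have hsub : T.image (fun p : W × Fin 6 => ex φ p.1 p.2) ⊆
      (Finset.Icc 1 (n - 3)).biUnion fun m =>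
        (S φ C m).image ((D φ (2 * (n + 1 - m)))^[n + 1 - m]) ∪
        (S φ C m).image ((D φ (2 * (n + 1 - m) + 1))^[n + 1 - m]) := by
    intro u hu
    obtain ⟨⟨v, b⟩, h, rfl⟩ := Finset.mem_image.1 hu
    simp only [hT, Finset.mem_filter, Finset.mem_product, mem_S] at h
    obtain ⟨m, hm, w, hw, e⟩ := bad_mem hmin h.1.1 h.2
    refine Finset.mem_biUnion.2 ⟨m, hm, ?_⟩
    rcases e with e | e
    · exact Finset.mem_union_left _ (Finset.mem_image.2 ⟨w, hw, e.symm⟩)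
    · exact Finset.mem_union_right _ (Finset.mem_image.2 ⟨w, hw, e.symm⟩)
  have hcard : T.card ≤ ∑ m ∈ Finset.Icc 1 (n - 3), 2 * (S φ C m).card := by
    rw [← Finset.card_image_of_injOn hinj]
    refine (Finset.card_le_card hsub).trans (le_trans Finset.card_biUnion_le ?_)
    apply Finset.sum_le_sum
    intro m _
    refine (Finset.card_union_le _ _).trans ?_
    rw [two_mul (S φ C m).card]
    apply add_le_add <;> apply Finset.card_image_le
  exact_mod_cast hcard

lemma card_le (hlb : ∀ v ∈ Lam 1 8, C v = 0 ∨ 6806 ≤ C v) (m : ℕ) :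
    6806 * ((S φ C m).card : ℝ) ≤ ShatH φ C m := by
  rw [shat_eq, mul_comm, ← nsmul_eq_mul]
  apply Finset.card_nsmul_le_sum
  intro v hv
  have h := (playable_good (mem_S.1 hv)).1.2.1
  rcases hlb _ (lamOf_spec v).1.1 with h0 | h0
  · linarith
  · exact h0

lemma geom (f : ℕ → ℝ) (hf : ∀ m, 0 ≤ f m) (M : ℕ) (h : ∀ m, 1 ≤ m → m < M → 5 / 2 * f m ≤ f (m + 1)) :
    ∑ m ∈ Finset.Icc 1 M, f m ≤ 5 / 3 * f M := by
  induction M with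
  | zero => simp; exact hf 0
  | succ M ih =>
    rw [Finset.sum_Icc_succ_top (by omega)]
    have h1 := ih (fun m a b => h m a (by omega))
    rcases Nat.eq_zero_or_pos M with rfl | hM
    · simp; linarith [hf 1]
    · have := h M hM (by omega)
      linarith

end main
end HG

/-- With coefficients as in the key lemma for the hard game over `Fin 6` (`p = 8`,
`α = 27195/9091`, `γ = 11699/6806`), for any Ben strategy `φ` (never repeating the last
letter), the weights satisfy `Ŝ_{n+1} ≥ (5/2)·Ŝ_n` for all `n ≥ 1`. -/
theorem stmt_10 (C : List (Fin 6) → ℝ)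
    (hnn : ∀ v ∈ Lam 1 8, 0 ≤ C v)
    (hub : ∀ v ∈ Lam 1 8, C v ≤ 11699)
    (hlb : ∀ v ∈ Lam 1 8, C v = 0 ∨ 6806 ≤ C v)
    (hmin : ∀ v ∈ Lam 1 8, ∀ a : Option (Fin 6), (v = [] ∨ a ≠ v.getLast?) →
      (27195 / 9091 : ℝ) * C v ≤
        ∑ b : Fin 6,
          if ¬ HasSq 1 8 (v ++ a.toList ++ [b]) then
            C (lamOf 1 8 (v ++ a.toList ++ [b]))
          else 0)
    (φ : List (Fin 6) → Option (Fin 6))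
    (hφ : ∀ v : List (Fin 6), v ≠ [] → φ v ≠ v.getLast?) :
    ∀ n : ℕ, 1 ≤ n → ShatH φ C (n + 1) ≥ (5 / 2 : ℝ) * ShatH φ C n := by
  intro n
  induction n using Nat.strong_induction_on with
  | _ n ih =>
  intro hn
  have hS0 : ∀ m, 0 ≤ ShatH φ C m := fun m =>
    le_trans (by positivity) (HG.card_le hlb m)
  have h1 : (27195 / 9091 : ℝ) * ShatH φ C n ≤ ShatH φ C (n + 1) +
      11699 * ∑ m ∈ Finset.Icc 1 (n - 3), 2 * ((HG.S φ C m).card : ℝ) := by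
    rw [HG.shat_succ φ C hn]
    refine le_trans ?_ (add_le_add_right (HG.bad_sum hmin n) _)
    rw [HG.shat_eq, Finset.mul_sum, ← Finset.sum_add_distrib]
    apply Finset.sum_le_sum
    intro v hv
    obtain ⟨g1, g2, _⟩ := HG.playable_good (HG.mem_S.1 hv)
    rw [← Finset.sum_add_distrib]
    exact HG.local_growth hnn hub hmin g1 (hφ v g2)
  have h2 : 6806 * ∑ m ∈ Finset.Icc 1 (n - 3), 2 * ((HG.S φ C m).card : ℝ) ≤
      2 * ∑ m ∈ Finset.Icc 1 (n - 3), ShatH φ C m := by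
    rw [Finset.mul_sum, Finset.mul_sum]
    apply Finset.sum_le_sum
    intro m _
    have := HG.card_le (φ := φ) hlb m
    linarith
  have h3 : ∑ m ∈ Finset.Icc 1 (n - 3), ShatH φ C m ≤ 5 / 3 * (8 / 125) * ShatH φ C n := by
    by_cases h4 : n ≤ 3
    · have : n - 3 = 0 := by omega
      rw [this]
      have := hS0 n
      simp
      linarith
    · have g := HG.geom (ShatH φ C) hS0 (n - 3) (fun m a b => ih m (by omega) a)
      obtain ⟨k, rfl⟩ : ∃ k, n = k + 3 := ⟨n - 3, by omega⟩
      have a1 := ih k (by omega) (by omega)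
      have a2 := ih (k + 1) (by omega) (by omega)
      have a3 := ih (k + 2) (by omega) (by omega)
      simp only [Nat.add_sub_cancel] at g ⊢
      linarith
  have := hS0 n
  linarith
end

section
/- There exist coefficients (C_w)_{w∈Λ} with each C_w ∈ {0,1} and C_{0} > 0 (where 0 denotes the one-letter word 0) such that for every v ∈ Λ, 4·C_v ≤ min_{a ∈ (A∪{ε})\{l(v)}} Σ_{b∈A, vab ∈ S^{≤p}_free} C_{Λ(vab)}, where the minimum is over all a that are either the empty word ε or a letter of A different from the last letter l(v) of v (over all of A ∪ {ε} when v = ε), and the sum is over all letters b ∈ A such that vab contains no square of period at most 4 as a factor. -/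
open scoped Classical

namespace Stmt13

/-- Boolean test for the presence of a square of period between 1 and 4. -/
def sqB (w : List (Fin 7)) : Bool :=
  (List.range (w.length + 1)).any fun i => [1, 2, 3, 4].any fun n =>
    decide (i + 2 * n ≤ w.length) && decide ((w.drop i).take n = (w.drop (i + n)).take n)

theorem sqB_of_infix {u w : List (Fin 7)} (h1 : 1 ≤ u.length) (h4 : u.length ≤ 4)
    (h : (u ++ u) <:+: w) : sqB w = true := by
  obtain ⟨s, t, rfl⟩ := h
  simp only [sqB, List.any_eq_true, List.mem_range, Bool.and_eq_true, decide_eq_true_eq]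
  refine ⟨s.length, by simp, u.length, ?_, by simp; omega, ?_⟩
  · simp; omega
  · have e1 : (s ++ (u ++ u) ++ t).drop s.length = u ++ (u ++ t) := by simp
    have e2 : (s ++ (u ++ u) ++ t).drop (s.length + u.length) = u ++ t := by
      rw [← List.drop_drop, e1]; simp
    rw [e1, e2]; simp

theorem sqB_of_hasSq {w : List (Fin 7)} (h : HasSq 1 4 w) : sqB w = true := by
  obtain ⟨u, h1, h4, h⟩ := h
  exact sqB_of_infix h1 h4 h

theorem minSq_of {u : List (Fin 7)} (h1 : 1 ≤ u.length) (h4 : u.length ≤ 4)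
    (ht : sqB (u ++ u).tail = false) (hd : sqB (u ++ u).dropLast = false) :
    MinSq 1 4 (u ++ u) := by
  refine ⟨⟨u, h1, h4, rfl⟩, ?_⟩
  generalize u ++ u = s at ht hd
  rintro f hf hne ⟨x, x1, x4, rfl⟩
  obtain ⟨a, b, rfl⟩ := hf
  rcases a with _ | ⟨c, a⟩
  · rcases List.eq_nil_or_concat b with rfl | ⟨b, d, rfl⟩
    · simp at hne
    · have : sqB ([] ++ (x ++ x) ++ b.concat d).dropLast = true := by
        apply sqB_of_infix x1 x4
        refine ⟨[], b, ?_⟩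
        simp [← List.append_assoc]
      simp_all
  · have : sqB (c :: a ++ (x ++ x) ++ b).tail = true :=
      sqB_of_infix x1 x4 ⟨a, b, by simp⟩
    simp_all

/-- Necessary condition for being a proper prefix of a square: small period. -/
def perB (x : List (Fin 7)) : Bool :=
  [1, 2, 3, 4].any fun n => decide (x.length < 2 * n) && (x.drop n).isPrefixOf x

theorem perB_of {v : List (Fin 7)} (h : v ∈ Lam 1 4) (π : Equiv.Perm (Fin 7)) :
    perB (v.map π) = true := by
  obtain ⟨-, s, ⟨⟨u, u1, u4, rfl⟩, -⟩, hp, hne⟩ := h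
  simp only [perB, List.any_eq_true, Bool.and_eq_true, decide_eq_true_eq,
    List.isPrefixOf_iff_prefix]
  refine ⟨u.length, by simp; omega, ?_, ?_⟩
  · have := hp.length_le
    have h2 : v.length ≠ (u ++ u).length := fun h => hne (hp.eq_of_length h)
    simp at *; omega
  · rw [← List.map_drop]
    apply List.IsPrefix.map
    have h3 : v.drop u.length <+: u := by
      have := hp.drop u.length
      simpa using this
    have h4 : v.drop u.length <+: u ++ u := h3.trans (List.prefix_append _ _)
    exact List.prefix_of_prefix_length_le h4 hp (by simp)

/-- The words with coefficient one, each with a root of a minimal square it prefixes. -/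
def good : List (List (Fin 7) × List (Fin 7)) :=
  [([], [0]), ([0], [0, 1]), ([0, 1], [0, 1]), ([0, 1, 2], [0, 1, 2]),
   ([0, 1, 0, 2], [0, 1, 0, 2]), ([0, 1, 2, 0], [0, 1, 2]), ([0, 1, 2, 3], [0, 1, 2, 3]),
   ([0, 1, 2, 1, 0], [0, 1, 2, 1]), ([0, 1, 2, 3, 0], [0, 1, 2, 3]),
   ([0, 1, 0, 2, 0, 1], [0, 1, 0, 2]), ([0, 1, 2, 3, 0, 1], [0, 1, 2, 3])]

theorem good_sq : ∀ g ∈ good, 1 ≤ g.2.length ∧ g.2.length ≤ 4 ∧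
    sqB (g.2 ++ g.2).tail = false ∧ sqB (g.2 ++ g.2).dropLast = false ∧
    g.1 <+: g.2 ++ g.2 ∧ g.1 ≠ g.2 ++ g.2 := by
  decide +kernel

theorem good_norm : ∀ g ∈ good, Normalized g.1 := by
  intro g hg π
  have h01 : π 0 ≠ π 1 := by simp
  have h02 : π 0 ≠ π 2 := by simp
  have h03 : π 0 ≠ π 3 := by simp
  have h12 : π 1 ≠ π 2 := by simp
  have h13 : π 1 ≠ π 3 := by simp
  have h23 : π 2 ≠ π 3 := by simp
  have hn : ∀ l : List (Fin 7), ¬ List.Lex (fun a b => a < b) l [] := by rintro _ ⟨⟩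
  simp only [good, List.mem_cons, List.not_mem_nil, or_false] at hg
  rcases hg with rfl | rfl | rfl | rfl | rfl | rfl | rfl | rfl | rfl | rfl | rfl <;>
    simp only [List.map_cons, List.map_nil, List.cons_lex_cons_iff, hn, and_false, or_false,
      not_false_eq_true] <;>
    omega

theorem good_lam {g} (hg : g ∈ good) : g.1 ∈ Lam 1 4 := by
  obtain ⟨h1, h4, ht, hd, hp, hne⟩ := good_sq g hg
  exact ⟨good_norm g hg, _, minSq_of h1 h4 ht hd, hp, hne⟩

theorem norm_unique {v g : List (Fin 7)} (hv : Normalized v) (hg : Normalized g)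
    (π σ : Equiv.Perm (Fin 7)) (h : v.map π = g.map σ) : v = g := by
  have e1 : g.map (π⁻¹ * σ) = v := by
    have := congrArg (List.map ⇑π⁻¹) h
    simp only [List.map_map] at this
    rw [Equiv.Perm.coe_mul, ← this]
    convert List.map_id v
    ext x; simp
  have e2 : v.map (σ⁻¹ * π) = g := by
    have := congrArg (List.map ⇑σ⁻¹) h
    simp only [List.map_map] at this
    rw [Equiv.Perm.coe_mul, this]
    convert List.map_id g
    ext x; simp
  have a1 := hg (π⁻¹ * σ)
  have a2 := hv (σ⁻¹ * π)
  rw [e1] at a1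
  rw [e2] at a2
  exact le_antisymm (not_lt.mp a2) (not_lt.mp a1)

/-- A permutation taking `g` to `x` letterwise, if there is one. -/
def mkPerm : List (Fin 7) → List (Fin 7) → Equiv.Perm (Fin 7) → Equiv.Perm (Fin 7)
  | a :: g, b :: x, π => mkPerm g x (π.trans (Equiv.swap (π a) b))
  | _, _, π => π

/-- Boolean certificate that `w` is squarefree and `Λ(w)` is good. -/
def okB (w : List (Fin 7)) : Bool :=
  !sqB w && good.any fun g =>
    decide (g.1.length ≤ w.length) &&
    decide (g.1.map (mkPerm g.1 (w.drop (w.length - g.1.length)) 1)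
      = w.drop (w.length - g.1.length)) &&
    (List.range (w.length - g.1.length)).all fun j => !perB (w.drop j)

theorem lamOf_good {w : List (Fin 7)} (h : okB w = true) :
    ∃ g ∈ good, lamOf 1 4 w = g.1 := by
  simp only [okB, Bool.and_eq_true, List.any_eq_true, decide_eq_true_eq, List.all_eq_true,
    List.mem_range, Bool.not_eq_true'] at h
  obtain ⟨-, g, hg, ⟨hl, hm⟩, hall⟩ := h
  refine ⟨g, hg, ?_⟩
  generalize mkPerm g.1 _ 1 = σ at hm
  have hsuf : g.1.map σ <:+ w := hm ▸ List.drop_suffix _ _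
  have hmax : ∀ v' : List (Fin 7), (v' ∈ Lam 1 4 ∧ ∃ π : Equiv.Perm (Fin 7), v'.map π <:+ w) →
      v'.length ≤ g.1.length := by
    rintro v' ⟨hv', π, hπ⟩
    by_contra hlt
    have hle := hπ.length_le
    rw [List.length_map] at hle
    have := hall (w.length - v'.length) (by omega)
    have e := List.suffix_iff_eq_drop.mp hπ
    rw [List.length_map] at e
    rw [← e, perB_of hv' π] at this
    exact absurd this (by simp)
  have hex : ∃ v : List (Fin 7), (v ∈ Lam 1 4 ∧ ∃ π : Equiv.Perm (Fin 7), v.map π <:+ w) ∧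
      ∀ v' : List (Fin 7), (v' ∈ Lam 1 4 ∧ ∃ π : Equiv.Perm (Fin 7), v'.map π <:+ w) →
        v'.length ≤ v.length := ⟨g.1, ⟨good_lam hg, σ, hsuf⟩, hmax⟩
  rw [lamOf, dif_pos hex]
  obtain ⟨⟨hv, π, hπ⟩, hv2⟩ := hex.choose_spec
  have l1 := hmax _ ⟨hv, π, hπ⟩
  have l2 := hv2 _ ⟨good_lam hg, σ, hsuf⟩
  apply norm_unique hv.1 (good_lam hg).1 π σ
  rw [List.suffix_iff_eq_drop.mp hπ, List.suffix_iff_eq_drop.mp hsuf]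
  simp only [List.length_map]
  rw [le_antisymm l1 l2]

theorem count_ok : ∀ g ∈ good, ∀ a : Option (Fin 7), (g.1 = [] ∨ a ≠ g.1.getLast?) →
    4 ≤ ∑ b : Fin 7, if okB (g.1 ++ a.toList ++ [b]) = true then 1 else 0 := by
  decide +kernel

end Stmt13

/-- Over the alphabet `Fin 7` with `p = 4`, there exist coefficients `(C_w)_{w ∈ Λ}`
with values in `{0, 1}` and `C_[0] > 0` such that for every `v ∈ Λ` and every `a` that
is either the empty word or a letter different from the last letter of `v` (any `a`
when `v = ε`), `4·C_v ≤ Σ_{b, vab square-free of period ≤ 4} C_{Λ(vab)}`. -/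
theorem stmt_13 :
    ∃ C : List (Fin 7) → ℝ,
      (∀ v ∈ Lam 1 4, C v = 0 ∨ C v = 1) ∧
      0 < C [0] ∧
      (∀ v ∈ Lam 1 4, ∀ a : Option (Fin 7), (v = [] ∨ a ≠ v.getLast?) →
        4 * C v ≤
          ∑ b : Fin 7,
            if ¬ HasSq 1 4 (v ++ a.toList ++ [b]) then
              C (lamOf 1 4 (v ++ a.toList ++ [b]))
            else 0) := by
  classical
  refine ⟨fun v => if ∃ g ∈ Stmt13.good, g.1 = v then 1 else 0, ?_, ?_, ?_⟩
  · intro v _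
    by_cases h : ∃ g ∈ Stmt13.good, g.1 = v <;> simp only [h, if_true, if_false, true_or, or_true]
  · have h : ∃ g ∈ Stmt13.good, g.1 = [0] := ⟨([0], [0, 1]), by simp [Stmt13.good], rfl⟩
    simp only [h, if_true, zero_lt_one]
  · intro v _ a ha
    beta_reduce
    by_cases h : ∃ g ∈ Stmt13.good, g.1 = v
    · rw [if_pos h]
      obtain ⟨g, hg, rfl⟩ := h
      have h4 := Stmt13.count_ok g hg a ha
      have h5 : (4 : ℝ) ≤ ((∑ b : Fin 7,
          if Stmt13.okB (g.1 ++ a.toList ++ [b]) = true then 1 else 0 : ℕ) : ℝ) := by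
        exact_mod_cast h4
      rw [mul_one]
      refine h5.trans ?_
      push_cast
      apply Finset.sum_le_sum
      intro b _
      by_cases hok : Stmt13.okB (g.1 ++ a.toList ++ [b]) = true
      · have hs : ¬ HasSq 1 4 (g.1 ++ a.toList ++ [b]) := by
          intro hs
          have := Stmt13.sqB_of_hasSq hs
          rw [Stmt13.okB, this] at hok
          simp at hok
        obtain ⟨g', hg', e⟩ := Stmt13.lamOf_good hok
        rw [if_pos hok, if_pos hs, if_pos ⟨g', hg', e.symm⟩]
      · rw [if_neg hok]
        split_ifs <;> norm_num
    · rw [if_neg h, mul_zero]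
      apply Finset.sum_nonneg
      intro b _
      split_ifs <;> norm_num
end
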